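/- arXiv:1608.03670 — 3 statements merged into one kernel-verified Lean document; each statement's English description precedes it below -/
import Mathlib

section
/- Let m be a positive integer and let α, β > 0 be real with αβ = 4π³. Then ∑_{n=1}^∞ ψ_{2m+1}(n) n^{−1/2} e^{−√(nβ)} sin(π/4 − √(nβ)) = (√β/√2)·ζ(−1−2m) − (2m)!·sin(πm/2)·ζ(1+m)·(2β)^{−(m+1/2)} + (1/√2)·ζ(1/2)·ζ(−2m) + 2^m (2π/β)^{m+1/2} Γ(m+1/2) ∑_{n=1}^∞ ψ_{−2m}(n)·n^m·₁F₁(m+1/2; 1/2; −nα). -/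
open Complex Finset
open scoped Real BigOperators Classical

/-- `ψ_r(n) = ∑_{j² ∣ n, j ≥ 1} j^r` with real exponent. -/
noncomputable def rpsi (r : ℝ) (n : ℕ) : ℝ :=
  ∑ j ∈ (Finset.Icc 1 n).filter (fun j => j ^ 2 ∣ n), (j : ℝ) ^ r

/-- Rising factorial `(a)_k`. -/
noncomputable def poch (a : ℂ) (k : ℕ) : ℂ := ∏ i ∈ Finset.range k, (a + i)

/-- Kummer's confluent hypergeometric function `₁F₁(a;b;z)`. -/
noncomputable def F11 (a b z : ℂ) : ℂ :=
  ∑' k : ℕ, poch a k / (poch b k * (k.factorial : ℂ)) * z ^ k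

/-!
Write `n = j² k` on the left. By the Lipschitz summation formula, the sum over `j` of
`j^(2m) e^(-ja)` becomes `∑_{l ∈ ℤ} (a + 2πil)^(-(2m+1))`, with `a²` proportional to `±ik`. The
poles at `l` and `-l` combine into `2a` times a rational function of `a²` and `l²`, whose numerator
is a Morgan-Voyce polynomial. Hence, after exchanging the sums over `k` and `l`, one may expand it
into powers of `l² α ± 2πik` and apply the Lipschitz formula again, now to the sum over `k`. This
produces polynomials in `n l² α` times `e^(-n l² α)`, which Kummer's transformation identifies with
the `₁F₁` on the right. The terms `l = 0` and `k = 0`, missing from the symmetric double sum, give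
`ζ(1 + m)` and `ζ(-1 - 2m)`.
-/

section SquareDivisors

lemma injective_fst_of_sq_mul_eq (n : ℕ+) : Function.Injective
    fun p : (fun p : ℕ+ × ℕ+ => p.1 ^ 2 * p.2) ⁻¹' {n} => (p.1.1 : ℕ) := by
  rintro ⟨⟨j, k⟩, hk⟩ ⟨⟨j', k'⟩, hk'⟩ hj
  obtain rfl : j = j' := PNat.eq hj
  obtain rfl : k = k' := mul_left_cancel (Eq.trans hk (Eq.symm hk'))
  rfl

lemma range_fst_of_sq_mul_eq (n : ℕ+) :
    Set.range (fun p : (fun p : ℕ+ × ℕ+ => p.1 ^ 2 * p.2) ⁻¹' {n} => (p.1.1 : ℕ)) =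
      ((Icc 1 (n : ℕ)).filter fun j => j ^ 2 ∣ (n : ℕ) : Finset ℕ) := by
  ext j
  simp only [Set.mem_range, coe_filter, mem_Icc, Set.mem_ofPred_eq]
  constructor
  · rintro ⟨⟨⟨j, k⟩, rfl⟩, rfl⟩
    have hdvd : (j : ℕ) ^ 2 ∣ ((j ^ 2 * k : ℕ+) : ℕ) := ⟨k, by push_cast; rfl⟩
    exact ⟨⟨j.pos, (Nat.le_self_pow two_ne_zero _).trans (Nat.le_of_dvd (PNat.pos _) hdvd)⟩, hdvd⟩
  · rintro ⟨⟨hj, -⟩, k, hk⟩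
    have hk_pos : 0 < k := Nat.pos_of_mul_pos_left (hk ▸ n.pos)
    exact ⟨⟨(⟨j, hj⟩, ⟨k, hk_pos⟩), PNat.eq hk.symm⟩, rfl⟩

lemma tsum_rpsi_mul (r : ℝ) (g : ℕ → ℂ)
    (hs : Summable fun p : ℕ+ × ℕ+ => (((p.1 : ℝ) ^ r : ℝ) : ℂ) * g (p.1 ^ 2 * p.2)) :
    ∑' n : ℕ, (rpsi r (n + 1) : ℂ) * g (n + 1) =
      ∑' p : ℕ+ × ℕ+, (((p.1 : ℝ) ^ r : ℝ) : ℂ) * g (p.1 ^ 2 * p.2) := by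
  rw [← (hs.hasSum.tsum_fiberwise fun p : ℕ+ × ℕ+ => p.1 ^ 2 * p.2).tsum_eq,
    ← tsum_pnat_eq_tsum_succ (f := fun n => (rpsi r n : ℂ) * g n)]
  refine tsum_congr fun n => ?_
  have hg (p : (fun p : ℕ+ × ℕ+ => p.1 ^ 2 * p.2) ⁻¹' {n}) :
      (((p.1.1 : ℝ) ^ r : ℝ) : ℂ) * g (p.1.1 ^ 2 * p.1.2) =
        (((p.1.1 : ℝ) ^ r : ℝ) : ℂ) * g n := by
    obtain ⟨⟨j, k⟩, rfl⟩ := p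
    push_cast
    rfl
  let f (j : ℕ) : ℂ := ((j : ℝ) ^ r : ℝ)
  have hfst := tsum_range f (injective_fst_of_sq_mul_eq n)
  rw [range_fst_of_sq_mul_eq, Finset.tsum_subtype' _ f] at hfst
  rw [tsum_congr hg, tsum_mul_right, ← hfst, rpsi, ofReal_sum]

end SquareDivisors

section Kummer

lemma poch_succ (a : ℂ) (k : ℕ) : poch a (k + 1) = poch a k * (a + k) :=
  prod_range_succ _ _

lemma poch_succ_left (a : ℂ) (k : ℕ) : poch a (k + 1) = a * poch (a + 1) k := by
  rw [poch, prod_range_succ', Nat.cast_zero, add_zero, mul_comm, poch]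
  simp only [Nat.cast_add, Nat.cast_one, add_assoc, add_comm (1 : ℂ)]

/-- The `k`-th term of the series defining `₁F₁(a;b;z)`. -/
noncomputable def kummerTerm (a b z : ℂ) (k : ℕ) : ℂ :=
  poch a k / (poch b k * (k.factorial : ℂ)) * z ^ k

lemma kummerTerm_succ_contiguous (a : ℂ) {b : ℂ} (z : ℂ) {k : ℕ} (hb : poch b (k + 1) ≠ 0) :
    kummerTerm (a + 1) b z (k + 1) =
      kummerTerm a b z (k + 1) + z / b * kummerTerm (a + 1) (b + 1) z k := by
  have hk : ((k : ℂ) + 1) ≠ 0 := Nat.cast_add_one_ne_zero k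
  have hfac : (k.factorial : ℂ) ≠ 0 := Nat.cast_ne_zero.mpr k.factorial_ne_zero
  rw [poch_succ_left] at hb
  have hb_ne := left_ne_zero_of_mul hb
  have hpoch_ne := right_ne_zero_of_mul hb
  simp only [kummerTerm, poch_succ_left b, poch_succ_left a, poch_succ (a + 1), Nat.factorial_succ,
    Nat.cast_mul, Nat.cast_add_one]
  field_simp
  ring

lemma hasSum_kummerTerm_contiguous {a b z A B : ℂ} (hb : ∀ k, poch b k ≠ 0)
    (hA : HasSum (kummerTerm a b z) A) (hB : HasSum (kummerTerm (a + 1) (b + 1) z) B) :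
    HasSum (kummerTerm (a + 1) b z) (A + z / b * B) := by
  rw [← hasSum_nat_add_iff' 1] at hA ⊢
  convert hA.add (hB.mul_left (z / b)) using 1
  · exact funext fun k => kummerTerm_succ_contiguous a z (hb (k + 1))
  · simp [kummerTerm, poch]
    ring

theorem hasSum_kummerTerm_add_nat (m : ℕ) {b : ℂ} (z : ℂ) (hb : ∀ k, poch b k ≠ 0) :
    HasSum (kummerTerm (b + m) b z)
      ((∑ p ∈ antidiagonal m, (m.choose p.1 : ℂ) * (z ^ p.1 / poch b p.1)) * cexp z) := by
  induction m generalizing b with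
  | zero =>
    have hterm : kummerTerm b b z = fun k => z ^ k / k.factorial := by
      ext k
      have := hb k
      rw [kummerTerm]
      field_simp
    simpa [hterm, poch, Complex.exp_eq_exp_ℂ] using NormedSpace.expSeries_div_hasSum_exp z
  | succ m ih =>
    have hb_succ (k : ℕ) : poch (b + 1) k ≠ 0 :=
      right_ne_zero_of_mul (poch_succ_left b k ▸ hb (k + 1))
    have hshift : b + 1 + m = b + m + 1 := by ring
    have hsum := hasSum_kummerTerm_contiguous hb (ih hb) (hshift ▸ ih hb_succ)
    rw [Nat.cast_succ, ← add_assoc, sum_antidiagonal_choose_succ_mul fun i _ => z ^ i / poch b i]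
    convert hsum using 1
    rw [← mul_assoc, ← add_mul, Finset.mul_sum]
    congr 2
    refine sum_congr rfl fun p hp => ?_
    have hb_zero : b ≠ 0 := left_ne_zero_of_mul (poch_succ_left b 0 ▸ hb 1)
    have := hb_succ p.1
    rw [Nat.choose_symm_of_eq_add (mem_antidiagonal.mp hp).symm, poch_succ_left, pow_succ]
    field_simp

lemma poch_half_ne_zero (k : ℕ) : poch (1 / 2) k ≠ 0 := by
  refine prod_ne_zero_iff.mpr fun i _ h => ?_
  have hre := congrArg Complex.re h
  norm_num at hre
  linarith [Nat.cast_nonneg (α := ℝ) i]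

lemma poch_half_mul_factorial (k : ℕ) :
    poch (1 / 2) k * (4 ^ k * k.factorial) = (2 * k).factorial := by
  induction k with
  | zero => simp [poch]
  | succ k ih =>
    rw [poch_succ, mul_add_one, Nat.factorial_succ, Nat.factorial_succ, Nat.factorial_succ]
    push_cast
    rw [← ih]
    ring

theorem F11_half_add_nat_eq_sum_choose (m : ℕ) (z : ℂ) :
    F11 ((m : ℂ) + 1 / 2) (1 / 2) z =
      (∑ p ∈ antidiagonal m, (m.choose p.1 : ℂ) * (z ^ p.1 / poch (1 / 2) p.1)) * cexp z := by
  rw [add_comm]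
  exact (hasSum_kummerTerm_add_nat m z poch_half_ne_zero).tsum_eq

lemma F11_half_add_nat_eq_sum_choose_two_mul (m : ℕ) (z : ℂ) :
    F11 ((m : ℂ) + 1 / 2) (1 / 2) z = m.factorial *
      (∑ p ∈ antidiagonal m,
        ((2 * p.1 + p.2).choose (2 * p.1) : ℂ) / (m + p.1).factorial * (4 * z) ^ p.1) * cexp z := by
  rw [F11_half_add_nat_eq_sum_choose, Finset.mul_sum]
  congr 1
  refine sum_congr rfl fun p hp => ?_
  obtain ⟨i, j⟩ := p
  obtain rfl : i + j = m := mem_antidiagonal.mp hp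
  have hfac (n : ℕ) : (n.factorial : ℂ) ≠ 0 := Nat.cast_ne_zero.mpr n.factorial_ne_zero
  have := poch_half_ne_zero i
  have := hfac i
  have := hfac j
  have := hfac (i + j)
  have := hfac (2 * i + j)
  rw [Nat.cast_add_choose, Nat.cast_add_choose, ← poch_half_mul_factorial, mul_pow,
    show i + j + i = 2 * i + j by ring]
  field_simp

end Kummer

section MorganVoyce

variable {R : Type*} [CommSemiring R]

/-- The homogeneous Morgan-Voyce polynomial `∑_{i+j=m} C(2i+j, 2i) x^i d^j`; the classical one has
`d = 1`. -/
def morganVoyce (m : ℕ) (x d : R) : R :=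
  ∑ p ∈ antidiagonal m, ((2 * p.1 + p.2).choose (2 * p.1) : R) * x ^ p.1 * d ^ p.2

/-- The companion Morgan-Voyce polynomial `∑_{i+j=m} C(2i+j+1, 2i+1) x^i d^j`, in homogeneous
form. -/
def morganVoyce' (m : ℕ) (x d : R) : R :=
  ∑ p ∈ antidiagonal m, ((2 * p.1 + p.2 + 1).choose (2 * p.1 + 1) : R) * x ^ p.1 * d ^ p.2

lemma morganVoyce_zero (x d : R) : morganVoyce 0 x d = 1 := by simp [morganVoyce]

lemma morganVoyce'_zero (x d : R) : morganVoyce' 0 x d = 1 := by simp [morganVoyce']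

lemma morganVoyce_succ (m : ℕ) (x d : R) :
    morganVoyce (m + 1) x d = d * morganVoyce m x d + x * morganVoyce' m x d := by
  have hd : d * morganVoyce m x d = d ^ (m + 1) + ∑ p ∈ antidiagonal m,
      ((2 * p.1 + p.2 + 1).choose (2 * p.1 + 2) : R) * x ^ (p.1 + 1) * d ^ p.2 := by
    have h := Finset.Nat.sum_antidiagonal_succ' (n := m) (f := fun p =>
      ((2 * p.1 + p.2 - 1).choose (2 * p.1) : R) * x ^ p.1 * d ^ p.2)
    rw [Finset.Nat.sum_antidiagonal_succ] at h
    rw [morganVoyce, mul_sum]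
    convert h.symm using 1
    · rw [Nat.choose_eq_zero_of_lt (by omega), Nat.cast_zero, zero_mul, zero_mul, zero_add]
      exact sum_congr rfl fun p _ => by rw [← add_assoc, Nat.add_sub_cancel]; ring
    · simp [mul_add_one, add_right_comm]
  rw [hd, morganVoyce, Finset.Nat.sum_antidiagonal_succ, morganVoyce', mul_sum, add_assoc,
    ← sum_add_distrib]
  congr 1
  · simp
  · refine sum_congr rfl fun p _ => ?_
    rw [show 2 * (p.1 + 1) + p.2 = 2 * p.1 + p.2 + 1 + 1 by ring, mul_add_one,
      Nat.choose_succ_succ]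
    push_cast
    ring

lemma morganVoyce'_succ (m : ℕ) (x d : R) :
    morganVoyce' (m + 1) x d = d * morganVoyce' m x d + morganVoyce (m + 1) x d := by
  have hd : d * morganVoyce' m x d = ∑ p ∈ antidiagonal (m + 1),
      ((2 * p.1 + p.2).choose (2 * p.1 + 1) : R) * x ^ p.1 * d ^ p.2 := by
    rw [Finset.Nat.sum_antidiagonal_succ', morganVoyce', mul_sum]
    simp only [add_zero, Nat.choose_succ_self, Nat.cast_zero, zero_mul, zero_add]
    exact sum_congr rfl fun p _ => by rw [← add_assoc]; ring
  rw [hd, morganVoyce, ← sum_add_distrib]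
  refine sum_congr rfl fun p _ => ?_
  rw [Nat.choose_succ_succ]
  push_cast
  ring

/- The case `a = 0`, `x = c²` of `add_pow_add_sub_pow_eq_morganVoyce`, which says nothing there
because of its factor `a`. -/
lemma morganVoyce_four_mul_neg {S : Type*} [CommRing S] (m : ℕ) (x : S) :
    morganVoyce m (4 * x) (-x) = (2 * m + 1) * x ^ m ∧
      morganVoyce' m (4 * x) (-x) = (m + 1) * x ^ m := by
  induction m with
  | zero => simp [morganVoyce_zero, morganVoyce'_zero]
  | succ m ih =>
    obtain ⟨ih, ih'⟩ := ih
    rw [morganVoyce'_succ, morganVoyce_succ, ih, ih']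
    push_cast
    constructor <;> ring

lemma add_pow_add_sub_pow_eq_morganVoyce {S : Type*} [CommRing S] (m : ℕ) (a c : S) :
    (a + c) ^ (2 * m + 1) + (a - c) ^ (2 * m + 1) =
        2 * a * morganVoyce m (4 * c ^ 2) (a ^ 2 - c ^ 2) ∧
      (a + c) ^ (2 * m + 2) - (a - c) ^ (2 * m + 2) =
        4 * a * c * morganVoyce' m (4 * c ^ 2) (a ^ 2 - c ^ 2) := by
  induction m with
  | zero =>
    rw [morganVoyce_zero, morganVoyce'_zero]
    constructor <;> ring
  | succ m ih =>
    obtain ⟨ih, ih'⟩ := ih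
    rw [morganVoyce'_succ, morganVoyce_succ]
    constructor
    · linear_combination (a ^ 2 - c ^ 2) * ih + 2 * c * ih'
    · linear_combination (a ^ 2 - c ^ 2) * ih' + 2 * c * (a ^ 2 - c ^ 2) * ih + 4 * c ^ 2 * ih'

lemma morganVoyce_smul (m : ℕ) (c x d : R) :
    morganVoyce m (c * x) (c * d) = c ^ m * morganVoyce m x d := by
  rw [morganVoyce, morganVoyce, mul_sum]
  refine sum_congr rfl fun p hp => ?_
  rw [← mem_antidiagonal.mp hp]
  ring

lemma map_morganVoyce {S : Type*} [CommSemiring S] (φ : R →+* S) (m : ℕ) (x d : R) :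
    φ (morganVoyce m x d) = morganVoyce m (φ x) (φ d) := by
  simp [morganVoyce]

end MorganVoyce

section OddPoleKernel

/-- The rational function of `u = a²` and `v = c²` that equals `(2a)⁻¹` times the sum
`(a + c)^(-(2m+1)) + (a - c)^(-(2m+1))` over a pair of opposite poles; it is homogeneous of degree
`-(m+1)`. -/
noncomputable def oddPoleKernel (m : ℕ) (u v : ℂ) : ℂ :=
  morganVoyce m (4 * v) (u - v) / (u - v) ^ (2 * m + 1)

lemma inv_add_pow_add_inv_sub_pow (m : ℕ) {a c : ℂ} (hadd : a + c ≠ 0) (hsub : a - c ≠ 0) :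
    ((a + c) ^ (2 * m + 1))⁻¹ + ((a - c) ^ (2 * m + 1))⁻¹ =
      2 * a * oddPoleKernel m (a ^ 2) (c ^ 2) := by
  have hfactor : a ^ 2 - c ^ 2 = (a + c) * (a - c) := sq_sub_sq a c
  have h := (add_pow_add_sub_pow_eq_morganVoyce m a c).1
  rw [oddPoleKernel, mul_div_assoc', ← h, hfactor, mul_pow]
  field_simp
  ring

lemma oddPoleKernel_eq_sum (m : ℕ) (u v : ℂ) :
    oddPoleKernel m u v = ∑ p ∈ antidiagonal m,
      ((2 * p.1 + p.2).choose (2 * p.1) : ℂ) * (4 * v) ^ p.1 * ((u - v) ^ (m + p.1 + 1))⁻¹ := by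
  rw [oddPoleKernel, morganVoyce, sum_div]
  refine sum_congr rfl fun p hp => ?_
  obtain ⟨i, j⟩ := p
  obtain rfl : i + j = m := mem_antidiagonal.mp hp
  rcases eq_or_ne (u - v) 0 with h | h
  · simp [h]
  · rw [show 2 * (i + j) + 1 = j + (i + j + i + 1) by ring, pow_add _ j]
    field_simp

lemma oddPoleKernel_mul_mul (m : ℕ) {c : ℂ} (hc : c ≠ 0) (u v : ℂ) :
    oddPoleKernel m (c * u) (c * v) = (c ^ (m + 1))⁻¹ * oddPoleKernel m u v := by
  rw [oddPoleKernel, oddPoleKernel, ← mul_sub, mul_left_comm, morganVoyce_smul, mul_pow,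
    show 2 * m + 1 = m + (m + 1) by ring, pow_add c]
  field_simp

lemma oddPoleKernel_zero_left (m : ℕ) (v : ℂ) :
    oddPoleKernel m 0 v = -((2 * m + 1) * (v ^ (m + 1))⁻¹) := by
  rcases eq_or_ne v 0 with rfl | hv
  · simp [oddPoleKernel]
  · rw [oddPoleKernel, zero_sub, (morganVoyce_four_mul_neg m v).1, Odd.neg_pow ⟨m, rfl⟩,
      show 2 * m + 1 = m + (m + 1) by ring, pow_add v]
    field_simp

lemma conj_oddPoleKernel (m : ℕ) (u v : ℂ) :
    starRingEnd ℂ (oddPoleKernel m u v) =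
      oddPoleKernel m (starRingEnd ℂ u) (starRingEnd ℂ v) := by
  simp [oddPoleKernel, map_morganVoyce, Complex.conj_ofNat]

/-- The sum of `oddPoleKernel` over the pair `±u`. For imaginary `u` and real `v` its two summands
are complex conjugates, so that it is twice a real part. -/
noncomputable def symmPoleKernel (m : ℕ) (u v : ℂ) : ℂ :=
  oddPoleKernel m u v + oddPoleKernel m (-u) v

lemma symmPoleKernel_mul_mul (m : ℕ) {c : ℂ} (hc : c ≠ 0) (u v : ℂ) :
    symmPoleKernel m (c * u) (c * v) = (c ^ (m + 1))⁻¹ * symmPoleKernel m u v := by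
  rw [symmPoleKernel, symmPoleKernel, ← mul_neg, oddPoleKernel_mul_mul m hc,
    oddPoleKernel_mul_mul m hc, mul_add]

end OddPoleKernel

section Lipschitz

lemma summable_pow_mul_exp_neg_mul (q : ℕ) {z : ℂ} (hz : 0 < z.re) :
    Summable fun n : ℕ+ => (n : ℂ) ^ q * cexp (-(n * z)) := by
  have hs := summable_pnat_iff_summable_nat.mpr (Real.summable_pow_mul_exp_neg_nat_mul q hz)
  refine Summable.of_norm (hs.congr fun n => ?_)
  simp [norm_exp, mul_comm]

lemma summable_inv_add_two_pi_I_mul_pow {q : ℕ} (hq : 1 ≤ q) (z : ℂ) :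
    Summable fun l : ℤ => ((z + 2 * π * I * l) ^ (q + 1))⁻¹ := by
  have hs := EisensteinSeries.linear_right_summable (z / (2 * π * I)) 1 (k := (q + 1 : ℕ))
    (by norm_cast; omega)
  refine (hs.mul_left ((2 * π * I) ^ (q + 1))⁻¹).congr fun l => ?_
  rw [zpow_natCast, ← mul_inv, ← mul_pow]
  have := two_pi_I_ne_zero
  congr 2
  field_simp
  push_cast
  ring

theorem tsum_inv_add_two_pi_I_mul_pow {q : ℕ} (hq : 1 ≤ q) {z : ℂ} (hz : 0 < z.re) :
    ∑' l : ℤ, ((z + 2 * π * I * l) ^ (q + 1))⁻¹ =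
      (q.factorial : ℂ)⁻¹ * ∑' n : ℕ+, (n : ℂ) ^ q * cexp (-(n * z)) := by
  have hpi : (π : ℂ) ≠ 0 := ofReal_ne_zero.mpr Real.pi_ne_zero
  have hne : -2 * π * I ≠ 0 := by simp [hpi]
  have him : 0 < (z / (-2 * π * I)).im := by
    rw [show z / (-2 * π * I) = ((2 * π : ℝ) : ℂ)⁻¹ * (I * z) by
      push_cast; field_simp; linear_combination -z * I_sq]
    rw [← ofReal_inv, im_ofReal_mul, I_mul_im]
    positivity
  have h := EisensteinSeries.qExpansion_identity_pnat hq ⟨z / (-2 * π * I), him⟩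
  have hexp (n : ℕ+) : cexp (2 * π * I * (z / (-2 * π * I))) ^ (n : ℕ) = cexp (-(n * z)) := by
    rw [← Complex.exp_nat_mul]
    congr 1
    field_simp
  have hpole (l : ℤ) : 1 / (z / (-2 * π * I) + ((-l : ℤ) : ℂ)) ^ (q + 1) =
      (-2 * π * I) ^ (q + 1) * ((z + 2 * π * I * l) ^ (q + 1))⁻¹ := by
    have hbase : z + 2 * π * I * l = -2 * π * I * (z / (-2 * π * I) + ((-l : ℤ) : ℂ)) := by
      push_cast
      field_simp
      ring
    rw [hbase, mul_pow (-2 * π * I), mul_inv, mul_inv_cancel_left₀ (pow_ne_zero _ hne), one_div]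
  simp only [hexp] at h
  rw [← (Equiv.neg ℤ).tsum_eq] at h
  simp only [Equiv.neg_apply, hpole, tsum_mul_left] at h
  rw [div_eq_mul_inv, mul_assoc (_ ^ (q + 1))] at h
  exact mul_left_cancel₀ (pow_ne_zero _ hne) h

lemma summable_add_neg_of_summable_int {f : ℤ → ℂ} (hf : Summable f) :
    Summable fun n : ℕ+ => f n + f (-n) :=
  (hf.comp_injective fun x y h => by simpa using h).add
    (hf.comp_injective (i := fun n : ℕ+ => -(n : ℤ)) fun x y h => by simpa using h)

lemma tsum_int_eq_add_tsum_add_neg {f : ℤ → ℂ} (hf : Summable f) :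
    ∑' n, f n = f 0 + ∑' n : ℕ+, (f n + f (-n)) := by
  rw [tsum_int_eq_zero_add_tsum_pnat hf, add_assoc, Summable.tsum_add]
  · exact hf.comp_injective fun x y h => by simpa using h
  · exact hf.comp_injective (i := fun n : ℕ+ => -(n : ℤ)) fun x y h => by simpa using h

lemma inv_add_pow_add_inv_add_neg_pow (m : ℕ) {a : ℂ} (ha : 0 < a.re) (l : ℕ+) :
    ((a + 2 * π * I * ((l : ℤ) : ℂ)) ^ (2 * m + 1))⁻¹ +
        ((a + 2 * π * I * ((-l : ℤ) : ℂ)) ^ (2 * m + 1))⁻¹ =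
      2 * a * oddPoleKernel m (a ^ 2) (-(2 * π * l) ^ 2) := by
  have hadd : a + 2 * π * I * l ≠ 0 := fun h => by simpa [ha.ne'] using congrArg re h
  have hsub : a - 2 * π * I * l ≠ 0 := fun h => by simpa [ha.ne'] using congrArg re h
  rw [show -(2 * π * (l : ℂ)) ^ 2 = (2 * π * I * l) ^ 2 by
    linear_combination -(2 * π * (l : ℂ)) ^ 2 * I_sq, ← inv_add_pow_add_inv_sub_pow m hadd hsub]
  push_cast
  rw [mul_neg, ← sub_eq_add_neg]

lemma summable_oddPoleKernel_sq {m : ℕ} (hm : 0 < m) {a : ℂ} (ha : 0 < a.re) :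
    Summable fun l : ℕ+ => oddPoleKernel m (a ^ 2) (-(2 * π * l) ^ 2) := by
  have hs := summable_add_neg_of_summable_int
    (summable_inv_add_two_pi_I_mul_pow (q := 2 * m) (by omega) a)
  simp only [inv_add_pow_add_inv_add_neg_pow m ha] at hs
  have ha_ne : a ≠ 0 := fun h => by simp [h] at ha
  exact (summable_mul_left_iff (mul_ne_zero two_ne_zero ha_ne)).mp hs

theorem tsum_pow_mul_exp_neg_mul {m : ℕ} (hm : 0 < m) {a : ℂ} (ha : 0 < a.re) :
    ∑' j : ℕ+, (j : ℂ) ^ (2 * m) * cexp (-(j * a)) =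
      (2 * m).factorial * ((a ^ (2 * m + 1))⁻¹ +
        2 * a * ∑' l : ℕ+, oddPoleKernel m (a ^ 2) (-(2 * π * l) ^ 2)) := by
  have hfac : ((2 * m).factorial : ℂ) ≠ 0 := Nat.cast_ne_zero.mpr (Nat.factorial_ne_zero _)
  have h := tsum_int_eq_add_tsum_add_neg
    (summable_inv_add_two_pi_I_mul_pow (q := 2 * m) (by omega) a)
  simp only [inv_add_pow_add_inv_add_neg_pow m ha] at h
  rw [tsum_inv_add_two_pi_I_mul_pow (by omega) ha, inv_mul_eq_iff_eq_mul₀ hfac] at h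
  simpa [tsum_mul_left] using h

lemma oddPoleKernel_two_pi_I_mul_eq_sum (m : ℕ) (z : ℂ) (k : ℤ) :
    oddPoleKernel m (2 * π * I * k) (-z) = ∑ p ∈ antidiagonal m,
      ((2 * p.1 + p.2).choose (2 * p.1) : ℂ) * (-4 * z) ^ p.1 *
        ((z + 2 * π * I * k) ^ (m + p.1 + 1))⁻¹ := by
  simp [oddPoleKernel_eq_sum, add_comm]

lemma summable_oddPoleKernel_two_pi_I_mul {m : ℕ} (hm : 0 < m) (z : ℂ) :
    Summable fun k : ℤ => oddPoleKernel m (2 * π * I * k) (-z) := by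
  simp only [oddPoleKernel_two_pi_I_mul_eq_sum]
  exact summable_sum fun p _ => (summable_inv_add_two_pi_I_mul_pow (by omega) z).mul_left _

theorem tsum_oddPoleKernel_two_pi_I_mul {m : ℕ} (hm : 0 < m) {z : ℂ} (hz : 0 < z.re) :
    ∑' k : ℤ, oddPoleKernel m (2 * π * I * k) (-z) =
      (m.factorial : ℂ)⁻¹ *
        ∑' n : ℕ+, (n : ℂ) ^ m * F11 ((m : ℂ) + 1 / 2) (1 / 2) (-(n * z)) := by
  have hF11 (n : ℕ+) : (m.factorial : ℂ)⁻¹ *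
      ((n : ℂ) ^ m * F11 ((m : ℂ) + 1 / 2) (1 / 2) (-(n * z))) =
        ∑ p ∈ antidiagonal m, ((2 * p.1 + p.2).choose (2 * p.1) : ℂ) * (-4 * z) ^ p.1 *
          (((m + p.1).factorial : ℂ)⁻¹ * ((n : ℂ) ^ (m + p.1) * cexp (-(n * z)))) := by
    have hfac : (m.factorial : ℂ) ≠ 0 := Nat.cast_ne_zero.mpr m.factorial_ne_zero
    rw [F11_half_add_nat_eq_sum_choose_two_mul, mul_assoc (m.factorial : ℂ), mul_left_comm,
      inv_mul_cancel_left₀ hfac, sum_mul, mul_sum]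
    exact sum_congr rfl fun p _ => by ring
  simp only [oddPoleKernel_two_pi_I_mul_eq_sum]
  rw [← tsum_mul_left, tsum_congr hF11, Summable.tsum_finsetSum, Summable.tsum_finsetSum]
  · refine sum_congr rfl fun p _ => ?_
    rw [tsum_mul_left, tsum_mul_left, tsum_mul_left, tsum_inv_add_two_pi_I_mul_pow (by omega) hz]
  · exact fun p _ => ((summable_pow_mul_exp_neg_mul _ hz).mul_left _).mul_left _
  · exact fun p _ => (summable_inv_add_two_pi_I_mul_pow (by omega) z).mul_left _

theorem tsum_symmPoleKernel_two_pi_I_mul {m : ℕ} (hm : 0 < m) {z : ℂ} (hz : 0 < z.re) :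
    ∑' k : ℕ+, symmPoleKernel m (2 * π * I * k) (-z) =
      (m.factorial : ℂ)⁻¹ *
        ∑' n : ℕ+, (n : ℂ) ^ m * F11 ((m : ℂ) + 1 / 2) (1 / 2) (-(n * z)) -
      oddPoleKernel m 0 (-z) := by
  have h := tsum_int_eq_add_tsum_add_neg (summable_oddPoleKernel_two_pi_I_mul hm z)
  rw [tsum_oddPoleKernel_two_pi_I_mul hm hz] at h
  simpa [symmPoleKernel, eq_sub_iff_add_eq'] using h.symm

end Lipschitz

section DampedSine

/-- The oscillating factor `e^(-x) sin(π/4 - x)` of the sum over square divisors, evaluated at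
`x = √(nβ)`. -/
noncomputable def dampedSine (x : ℝ) : ℝ := Real.exp (-x) * Real.sin (π / 4 - x)

lemma abs_dampedSine_le (x : ℝ) : |dampedSine x| ≤ Real.exp (-x) := by
  rw [dampedSine, abs_mul, Real.abs_exp]
  exact mul_le_of_le_one_right (Real.exp_pos _).le (Real.abs_sin_le_one _)

lemma dampedSine_eq_im (x : ℝ) :
    dampedSine x = (cexp (π / 4 * I) * cexp (-(x * (1 + I)))).im := by
  rw [← Complex.exp_add, exp_im, dampedSine,
    show π / 4 * I + -(x * (1 + I)) = ((-x : ℝ) : ℂ) + ((π / 4 - x : ℝ) : ℂ) * I by push_cast; ring]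
  simp only [add_re, add_im, re_ofReal_mul, im_ofReal_mul, I_re, I_im, ofReal_re, ofReal_im,
    mul_zero, mul_one, add_zero, zero_add]

lemma exp_pi_div_four_mul_I_sq : cexp (π / 4 * I) ^ 2 = I := by
  conv_rhs => rw [← exp_pi_div_two_mul_I]
  rw [← Complex.exp_nat_mul]
  congr 1
  push_cast
  ring

lemma one_add_I_eq_sqrt_two_mul_exp : 1 + I = √2 * cexp (π / 4 * I) := by
  rw [Complex.exp_mul_I, ← ofReal_ofNat 4, ← ofReal_div, ← ofReal_cos, ← ofReal_sin,
    Real.cos_pi_div_four, Real.sin_pi_div_four, ← mul_one_add, ← mul_assoc, ← ofReal_mul,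
    mul_div_assoc', Real.mul_self_sqrt zero_le_two, div_self two_ne_zero, ofReal_one, one_mul]

lemma im_exp_pi_div_four_mul_inv_pow (m : ℕ) (b : ℝ) :
    (cexp (π / 4 * I) * ((b * (1 + I)) ^ (2 * m + 1))⁻¹).im =
      -(Real.sin (π * m / 2) * ((√2 * b) ^ (2 * m + 1))⁻¹) := by
  have : cexp (π / 4 * I) ≠ 0 := Complex.exp_ne_zero _
  have hexp : (cexp (π / 4 * I) ^ (2 * m))⁻¹ = cexp (((-(π * m / 2) : ℝ) : ℂ) * I) := by
    rw [← Complex.exp_nat_mul, ← Complex.exp_neg]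
    congr 1
    push_cast
    ring
  have hpow : cexp (π / 4 * I) * ((b * (1 + I)) ^ (2 * m + 1))⁻¹ =
      ((((√2 * b) ^ (2 * m + 1))⁻¹ : ℝ) : ℂ) * (cexp (π / 4 * I) ^ (2 * m))⁻¹ := by
    rw [one_add_I_eq_sqrt_two_mul_exp, ← mul_assoc, mul_comm (b : ℂ), mul_pow, pow_succ (cexp _)]
    push_cast
    field_simp
  rw [hpow, hexp, im_ofReal_mul, exp_ofReal_mul_I_im, Real.sin_neg]
  ring

lemma tsum_symmPoleKernel_of_conj_eq_neg {ι : Type*} (m : ℕ) {u : ℂ}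
    (hu : starRingEnd ℂ u = -u) (v : ι → ℝ) (hs : Summable fun i => oddPoleKernel m u (v i)) :
    ∑' i, symmPoleKernel m u (v i) =
      ((2 * (∑' i, oddPoleKernel m u (v i)).re : ℝ) : ℂ) := by
  have hconj (i : ι) : symmPoleKernel m u (v i) =
      oddPoleKernel m u (v i) + starRingEnd ℂ (oddPoleKernel m u (v i)) := by
    rw [symmPoleKernel, conj_oddPoleKernel, hu, conj_ofReal]
  simp only [hconj]
  rw [hs.tsum_add (summable_conj.mpr hs), ← conj_tsum, add_conj]

theorem tsum_pow_mul_dampedSine {m : ℕ} (hm : 0 < m) {b : ℝ} (hb : 0 < b) :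
    ∑' j : ℕ+, (((j : ℝ) ^ (2 * m) * dampedSine (j * b) : ℝ) : ℂ) =
      (2 * m).factorial * (-(Real.sin (π * m / 2) * ((√2 * b) ^ (2 * m + 1))⁻¹ : ℝ) +
        √2 * b * ∑' l : ℕ+, symmPoleKernel m (2 * I * b ^ 2) (-(2 * π * l) ^ 2)) := by
  set a : ℂ := b * (1 + I) with ha_def
  set w : ℂ := cexp (π / 4 * I)
  have ha : 0 < a.re := by simpa [a] using hb
  have ha_sq : a ^ 2 = 2 * I * b ^ 2 := by linear_combination b ^ 2 * I_sq
  have hwa : w * (2 * a) = ((2 * (√2 * b) : ℝ) : ℂ) * I := by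
    rw [ha_def, one_add_I_eq_sqrt_two_mul_exp]
    push_cast
    linear_combination 2 * √2 * b * exp_pi_div_four_mul_I_sq
  have him (j : ℕ+) : (j : ℝ) ^ (2 * m) * dampedSine (j * b) =
      (w * ((j : ℂ) ^ (2 * m) * cexp (-(j * a)))).im := by
    rw [dampedSine_eq_im, mul_left_comm, ← im_ofReal_mul]
    push_cast
    rw [mul_assoc]
  have hconj : starRingEnd ℂ (2 * I * b ^ 2) = -(2 * I * b ^ 2) := by simp [conj_ofNat]
  have hre := tsum_symmPoleKernel_of_conj_eq_neg m hconj (fun l : ℕ+ => -(2 * π * l) ^ 2)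
    (by simpa [← ha_sq] using summable_oddPoleKernel_sq hm ha)
  push_cast at hre
  rw [← ofReal_tsum, tsum_congr him, ← im_tsum ((summable_pow_mul_exp_neg_mul _ ha).mul_left w),
    tsum_mul_left, tsum_pow_mul_exp_neg_mul hm ha]
  set S := ∑' l : ℕ+, oddPoleKernel m (a ^ 2) (-(2 * π * l) ^ 2) with hS
  have hsplit : w * ((2 * m).factorial * ((a ^ (2 * m + 1))⁻¹ + 2 * a * S)) =
      (((2 * m).factorial : ℝ) : ℂ) *
        (w * (a ^ (2 * m + 1))⁻¹ + ((2 * (√2 * b) : ℝ) : ℂ) * (I * S)) := by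
    rw [ofReal_natCast]
    linear_combination (2 * m).factorial * S * hwa
  rw [hsplit, im_ofReal_mul, add_im, im_exp_pi_div_four_mul_inv_pow, im_ofReal_mul, I_mul_im,
    hre, hS, ha_sq]
  push_cast
  ring

end DampedSine

lemma sqrt_odd_pow_inv_eq_rpow (m : ℕ) {x : ℝ} (hx : 0 < x) :
    (√x ^ (2 * m + 1))⁻¹ = x ^ (-((m : ℝ) + 1 / 2)) := by
  rw [Real.rpow_neg hx.le, Real.sqrt_eq_rpow, ← Real.rpow_mul_natCast hx.le]
  congr 2
  push_cast
  ring

theorem tsum_pow_mul_dampedSine_sqrt {m : ℕ} (hm : 0 < m) {α β : ℝ} (hβ : 0 < β)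
    (hαβ : α * β = 4 * π ^ 3) (k : ℕ+) :
    ∑' j : ℕ+, (((j : ℝ) ^ (2 * m) * (dampedSine (j * √(k * β)) / √k) : ℝ) : ℂ) =
      -(((2 * m).factorial * Real.sin (π * m / 2) * (2 * β) ^ (-((m : ℝ) + 1 / 2)) : ℝ) : ℂ) *
          ((k : ℂ) ^ (m + 1))⁻¹ +
        (((2 * m).factorial * √(2 * β) * (π / β) ^ (m + 1) : ℝ) : ℂ) *
          ∑' l : ℕ+, symmPoleKernel m (2 * π * I * k) (-(l ^ 2 * α)) := by
  have hk : (0 : ℝ) < k := Nat.cast_pos.mpr k.pos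
  have hπ : (π : ℂ) ≠ 0 := ofReal_ne_zero.mpr Real.pi_ne_zero
  have hβ_ne : (β : ℂ) ≠ 0 := ofReal_ne_zero.mpr hβ.ne'
  have hb : √2 * √(k * β) = √(2 * β) * √k := by
    rw [← Real.sqrt_mul zero_le_two, ← Real.sqrt_mul (by positivity)]
    ring_nf
  have hb_sq : ((√(k * β) : ℝ) : ℂ) ^ 2 = k * β := by
    rw [← ofReal_pow, Real.sq_sqrt (by positivity)]
    push_cast
    rfl
  have hcancel : (√(k : ℝ) : ℂ)⁻¹ * √(k : ℝ) = 1 :=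
    inv_mul_cancel₀ (ofReal_ne_zero.mpr (Real.sqrt_pos.mpr hk).ne')
  have hsqrt : (√(k : ℝ) : ℂ)⁻¹ * ((√(k : ℝ) : ℂ) ^ (2 * m + 1))⁻¹ = ((k : ℂ) ^ (m + 1))⁻¹ := by
    rw [← mul_inv, ← pow_succ', show 2 * m + 1 + 1 = 2 * (m + 1) by ring, pow_mul, ← ofReal_pow,
      Real.sq_sqrt hk.le, ofReal_natCast]
  have hscale (l : ℕ+) : symmPoleKernel m (2 * I * √(k * β) ^ 2) (-(2 * π * l) ^ 2) =
      (π / β) ^ (m + 1) * symmPoleKernel m (2 * π * I * k) (-(l ^ 2 * α)) := by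
    have hαβ' : (α * β : ℂ) = 4 * π ^ 3 := by exact_mod_cast hαβ
    rw [← inv_div, inv_pow, ← symmPoleKernel_mul_mul m (div_ne_zero hβ_ne hπ), hb_sq]
    congr 1
    · field_simp
    · field_simp
      linear_combination hαβ'
  have hdiv (j : ℕ+) : (((j : ℝ) ^ (2 * m) * (dampedSine (j * √(k * β)) / √k) : ℝ) : ℂ) =
      ((√(k : ℝ))⁻¹ : ℝ) * (((j : ℝ) ^ (2 * m) * dampedSine (j * √(k * β)) : ℝ) : ℂ) := by
    rw [← ofReal_mul]
    ring_nf
  simp only [hdiv]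
  rw [tsum_mul_left, tsum_pow_mul_dampedSine hm (by positivity), ← ofReal_mul, hb]
  simp only [hscale]
  rw [tsum_mul_left, mul_pow, mul_inv, ← sqrt_odd_pow_inv_eq_rpow m (by positivity)]
  set S := ∑' l : ℕ+, symmPoleKernel m (2 * π * I * k) (-(l ^ 2 * α))
  push_cast
  linear_combination
    -((2 * m).factorial * sin (π * m / 2) * ((√(2 * β) : ℂ) ^ (2 * m + 1))⁻¹) * hsqrt +
      (2 * m).factorial * √(2 * β) * (π / β) ^ (m + 1) * S * hcancel

section Summability

lemma summable_inv_rpow_mul_inv_rpow {s t : ℝ} (hs : 1 < s) (ht : 1 < t) :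
    Summable fun p : ℕ+ × ℕ+ => ((p.1 : ℝ) ^ s)⁻¹ * ((p.2 : ℝ) ^ t)⁻¹ :=
  (summable_pnat_iff_summable_nat.mpr (Real.summable_nat_rpow_inv.mpr hs)).mul_of_nonneg
    (summable_pnat_iff_summable_nat.mpr (Real.summable_nat_rpow_inv.mpr ht))
    (fun _ => by positivity) fun _ => by positivity

lemma pow_mul_exp_neg_le (i p : ℕ) {x : ℝ} (hx : 0 < x) :
    x ^ i * Real.exp (-x) ≤ (i + p).factorial / x ^ p := by
  have h := Real.pow_div_factorial_le_exp x hx.le (i + p)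
  rw [div_le_iff₀ (by positivity), pow_add] at h
  rw [Real.exp_neg, ← div_eq_mul_inv, div_le_div_iff₀ (Real.exp_pos x) (by positivity)]
  linarith

lemma summable_pow_mul_dampedSine (m : ℕ) {β : ℝ} (hβ : 0 < β) :
    Summable fun p : ℕ+ × ℕ+ =>
      (((p.1 : ℝ) ^ (2 * m) * (dampedSine (p.1 * √(p.2 * β)) / √p.2) : ℝ) : ℂ) := by
  refine Summable.of_norm_bounded ((summable_inv_rpow_mul_inv_rpow (s := 4) (t := m + 2)
    (by norm_num) (by linarith [Nat.cast_nonneg (α := ℝ) m])).mul_left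
      ((2 * m + 4).factorial / β ^ (m + 2))) ?_
  rintro ⟨j, k⟩
  have : (0 : ℝ) < j := Nat.cast_pos.mpr j.pos
  have hk : (1 : ℝ) ≤ k := Nat.one_le_cast.mpr k.pos
  have hpow : (j * √(k * β)) ^ (2 * m + 4) = (j : ℝ) ^ (2 * m + 4) * (k * β) ^ (m + 2) := by
    rw [mul_pow, show 2 * m + 4 = 2 * (m + 2) by ring, pow_mul √_, Real.sq_sqrt (by positivity)]
  have hexp := pow_mul_exp_neg_le 0 (2 * m + 4) (x := j * √(k * β)) (by positivity)
  rw [pow_zero, one_mul, zero_add, hpow] at hexp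
  rw [norm_real, norm_mul, norm_div, Real.norm_of_nonneg (by positivity : (0 : ℝ) ≤ j ^ (2 * m)),
    Real.norm_of_nonneg (Real.sqrt_nonneg _), Real.norm_eq_abs]
  calc (j : ℝ) ^ (2 * m) * (|dampedSine (j * √(k * β))| / √k)
      ≤ (j : ℝ) ^ (2 * m) * ((2 * m + 4).factorial / ((j : ℝ) ^ (2 * m + 4) * (k * β) ^ (m + 2))) :=
        mul_le_mul_of_nonneg_left ((div_le_self (abs_nonneg _) (Real.one_le_sqrt.mpr hk)).trans
          ((abs_dampedSine_le _).trans hexp)) (by positivity)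
    _ = (2 * m + 4).factorial / β ^ (m + 2) *
          (((j : ℝ) ^ (4 : ℝ))⁻¹ * ((k : ℝ) ^ (m + 2 : ℝ))⁻¹) := by
        rw [show (4 : ℝ) = (4 : ℕ) by norm_num, show (m + 2 : ℝ) = (m + 2 : ℕ) by norm_num,
          Real.rpow_natCast, Real.rpow_natCast, pow_add (j : ℝ), mul_pow]
        field_simp

lemma exists_norm_F11_neg_le (m p : ℕ) :
    ∃ C : ℝ, ∀ x : ℝ, 0 < x → ‖F11 ((m : ℂ) + 1 / 2) (1 / 2) (-x)‖ ≤ C / x ^ p := by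
  refine ⟨∑ q ∈ antidiagonal m, m.choose q.1 / ‖poch (1 / 2) q.1‖ * (q.1 + p).factorial,
    fun x hx => ?_⟩
  rw [F11_half_add_nat_eq_sum_choose, sum_mul, sum_div]
  refine norm_sum_le_of_le _ fun q _ => ?_
  rw [norm_mul, norm_mul, norm_div, norm_pow, norm_neg, norm_natCast, norm_real, norm_exp, neg_re,
    ofReal_re, Real.norm_of_nonneg hx.le]
  calc m.choose q.1 * (x ^ q.1 / ‖poch (1 / 2) q.1‖) * Real.exp (-x)
      = m.choose q.1 / ‖poch (1 / 2) q.1‖ * (x ^ q.1 * Real.exp (-x)) := by ring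
    _ ≤ m.choose q.1 / ‖poch (1 / 2) q.1‖ * ((q.1 + p).factorial / x ^ p) := by
        gcongr
        exact pow_mul_exp_neg_le _ _ hx
    _ = _ := by ring

lemma summable_pow_mul_F11 (m : ℕ) {α : ℝ} (hα : 0 < α) :
    Summable fun p : ℕ+ × ℕ+ =>
      (p.2 : ℂ) ^ m * F11 ((m : ℂ) + 1 / 2) (1 / 2) (-(p.2 * (p.1 ^ 2 * α))) := by
  obtain ⟨C, hC⟩ := exists_norm_F11_neg_le m (m + 2)
  refine Summable.of_norm_bounded ((summable_inv_rpow_mul_inv_rpow (s := (2 * (m + 2) : ℕ))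
    (t := (2 : ℕ)) (by norm_cast; omega) (by norm_num)).mul_left (C / α ^ (m + 2))) ?_
  rintro ⟨l, n⟩
  have : (0 : ℝ) < l := Nat.cast_pos.mpr l.pos
  have : (0 : ℝ) < n := Nat.cast_pos.mpr n.pos
  have hF := hC (n * (l ^ 2 * α)) (by positivity)
  push_cast at hF
  rw [norm_mul, norm_pow, norm_natCast, Real.rpow_natCast, Real.rpow_natCast]
  calc (n : ℝ) ^ m * ‖F11 ((m : ℂ) + 1 / 2) (1 / 2) (-(n * (l ^ 2 * α)))‖
      ≤ (n : ℝ) ^ m * (C / (n * (l ^ 2 * α)) ^ (m + 2)) := by gcongr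
    _ = C / α ^ (m + 2) * (((l : ℝ) ^ (2 * (m + 2)))⁻¹ * ((n : ℝ) ^ 2)⁻¹) := by
        rw [mul_pow, mul_pow, ← pow_mul, pow_add (n : ℝ)]
        field_simp

end Summability

lemma norm_oddPoleKernel_le (m : ℕ) {u v : ℂ} (h : ‖v‖ ≤ ‖u - v‖) :
    ‖oddPoleKernel m u v‖ ≤ morganVoyce m (4 : ℝ) 1 * (‖u - v‖ ^ (m + 1))⁻¹ := by
  rw [oddPoleKernel_eq_sum, morganVoyce, sum_mul]
  refine norm_sum_le_of_le _ fun p _ => ?_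
  have hpow : ‖v‖ ^ p.1 * (‖u - v‖ ^ (m + p.1 + 1))⁻¹ ≤ (‖u - v‖ ^ (m + 1))⁻¹ := by
    rcases (norm_nonneg (u - v)).eq_or_lt with hD | hD
    · simp [← hD]
    · rw [add_right_comm, pow_add, mul_inv, mul_left_comm]
      refine mul_le_of_le_one_right (by positivity) ?_
      rw [← div_eq_mul_inv]
      exact div_le_one_of_le₀ (pow_le_pow_left₀ (norm_nonneg v) h _) (by positivity)
  rw [norm_mul, norm_mul, norm_natCast, norm_pow, norm_mul, norm_inv, norm_pow, norm_ofNat,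
    mul_pow, one_pow, mul_one, ← mul_assoc, mul_assoc (_ * _)]
  exact mul_le_mul_of_nonneg_left hpow (by positivity)

lemma inv_pow_le_inv_rpow_mul_inv_rpow {D a b s t : ℝ} {q : ℕ} (ha : 0 < a) (hb : 0 < b)
    (haD : a ≤ D) (hbD : b ≤ D) (hs : 0 ≤ s) (ht : 0 ≤ t) (hst : s + t = q) :
    (D ^ q)⁻¹ ≤ (a ^ s)⁻¹ * (b ^ t)⁻¹ := by
  have hD : 0 < D := ha.trans_le haD
  rw [← Real.rpow_natCast, ← hst, Real.rpow_add hD, mul_inv]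
  gcongr

lemma summable_oddPoleKernel_mul_I {m : ℕ} (hm : 0 < m) {c α : ℝ} (hc : c ≠ 0) (hα : 0 < α) :
    Summable fun p : ℕ+ × ℕ+ => oddPoleKernel m (c * I * p.1) (-(p.2 ^ 2 * α)) := by
  have hm' : (1 : ℝ) ≤ m := Nat.one_le_cast.mpr hm
  -- Any splitting `s + t = m + 1` with `1 < s` and `1 < 2 * t` for all `m ≥ 1` would do.
  set s : ℝ := 5 / 8 * (m + 1) with hs
  set t : ℝ := 3 / 8 * (m + 1) with ht
  refine Summable.of_norm_bounded
    ((summable_inv_rpow_mul_inv_rpow (s := s) (t := 2 * t) (by linarith) (by linarith)).mul_left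
      (morganVoyce m 4 1 * ((|c| ^ s)⁻¹ * (α ^ t)⁻¹))) ?_
  rintro ⟨k, l⟩
  have hk : (0 : ℝ) < k := Nat.cast_pos.mpr k.pos
  have hl : (0 : ℝ) < l := Nat.cast_pos.mpr l.pos
  set D : ℂ := c * I * k - -(l ^ 2 * α) with hD
  have hre : D.re = l ^ 2 * α := by simp [hD, ← ofReal_natCast, ← ofReal_pow]
  have him : D.im = c * k := by simp [hD, ← ofReal_natCast, ← ofReal_pow]
  have hkD : |c| * k ≤ ‖D‖ := by
    simpa [him, abs_mul] using abs_im_le_norm D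
  have hlD : l ^ 2 * α ≤ ‖D‖ := hre ▸ re_le_norm D
  have hv : ‖-((l : ℂ) ^ 2 * α)‖ ≤ ‖D‖ := by
    rwa [norm_neg, norm_mul, norm_pow, norm_natCast, norm_real, Real.norm_of_nonneg hα.le]
  have hl_rpow : ((l : ℝ) ^ 2 * α) ^ t = (l : ℝ) ^ (2 * t) * α ^ t := by
    rw [Real.mul_rpow (by positivity) hα.le, Real.rpow_mul hl.le, Real.rpow_two]
  calc ‖oddPoleKernel m (c * I * k) (-(l ^ 2 * α))‖
      ≤ morganVoyce m 4 1 * (‖D‖ ^ (m + 1))⁻¹ := norm_oddPoleKernel_le m hv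
    _ ≤ morganVoyce m 4 1 * (((|c| * k) ^ s)⁻¹ * ((l ^ 2 * α) ^ t)⁻¹) := by
        refine mul_le_mul_of_nonneg_left (inv_pow_le_inv_rpow_mul_inv_rpow (by positivity)
          (by positivity) hkD hlD (by positivity) (by positivity) ?_) ?_
        · rw [hs, ht]
          push_cast
          ring
        · exact sum_nonneg fun p _ => by positivity
    _ = morganVoyce m 4 1 * ((|c| ^ s)⁻¹ * (α ^ t)⁻¹) *
          (((k : ℝ) ^ s)⁻¹ * ((l : ℝ) ^ (2 * t))⁻¹) := by
        rw [hl_rpow, Real.mul_rpow (abs_nonneg c) hk.le]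
        ring

lemma summable_symmPoleKernel_two_pi_I_mul {m : ℕ} (hm : 0 < m) {α : ℝ} (hα : 0 < α) :
    Summable fun p : ℕ+ × ℕ+ => symmPoleKernel m (2 * π * I * p.1) (-(p.2 ^ 2 * α)) := by
  have hpos := summable_oddPoleKernel_mul_I hm Real.two_pi_pos.ne' hα
  have hneg := summable_oddPoleKernel_mul_I hm (neg_ne_zero.mpr Real.two_pi_pos.ne') hα
  simpa [symmPoleKernel] using hpos.add hneg

section Constants

lemma summable_pnat_inv_natCast_pow {q : ℕ} (hq : 1 < q) :
    Summable fun n : ℕ+ => ((n : ℂ) ^ q)⁻¹ :=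
  Summable.of_norm_bounded (summable_pnat_iff_summable_nat.mpr (Real.summable_nat_pow_inv.mpr hq))
    fun n => by simp

lemma tsum_pnat_inv_natCast_pow {q : ℕ} (hq : 1 < q) :
    ∑' n : ℕ+, ((n : ℂ) ^ q)⁻¹ = riemannZeta q := by
  rw [zeta_nat_eq_tsum_of_gt_one hq,
    tsum_pnat_eq_tsum_of_eq_zero (f := fun n : ℕ => ((n : ℂ) ^ q)⁻¹) (by simp; omega)]
  simp only [one_div]

lemma riemannZeta_neg_one_sub_two_mul (m : ℕ) : riemannZeta (-1 - 2 * m) =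
    2 * (2 * m + 1).factorial * (-1) ^ (m + 1) * ((4 * π ^ 2 : ℂ) ^ (m + 1))⁻¹ *
      riemannZeta (2 * (m + 1) : ℕ) := by
  have hne_neg (n : ℕ) : ((2 * (m + 1) : ℕ) : ℂ) ≠ -n := by
    rw [Ne, ← add_eq_zero_iff_eq_neg]
    norm_cast
    omega
  have hne_one : ((2 * (m + 1) : ℕ) : ℂ) ≠ 1 := by
    rw [Nat.cast_ne_one]
    omega
  have hcos : cos (π * (2 * (m + 1) : ℕ) / 2) = (-1) ^ (m + 1) := by
    rw [show (π : ℂ) * (2 * (m + 1) : ℕ) / 2 = ((m + 1 : ℕ) * π : ℝ) by push_cast; ring,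
      ← ofReal_cos, Real.cos_nat_mul_pi]
    norm_cast
  have hGamma : Gamma (2 * (m + 1) : ℕ) = (2 * m + 1).factorial := by
    rw [show 2 * (m + 1) = 2 * m + 1 + 1 by ring, Nat.cast_succ, Gamma_nat_eq_factorial]
  have h := riemannZeta_one_sub hne_neg hne_one
  rw [hGamma, hcos, cpow_neg, cpow_natCast, pow_mul] at h
  convert h using 1
  · push_cast
    ring_nf
  · ring

lemma riemannZeta_neg_two_mul_natCast {m : ℕ} (hm : 0 < m) : riemannZeta (-2 * m) = 0 := by
  obtain ⟨n, rfl⟩ := Nat.exists_eq_add_of_lt hm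
  simpa using riemannZeta_neg_two_mul_nat_add_one n

lemma Gamma_natCast_add_half_mul (m : ℕ) :
    Real.Gamma ((m : ℝ) + 1 / 2) * (4 ^ m * m.factorial) = (2 * m).factorial * √π := by
  induction m with
  | zero => simp [Real.Gamma_one_half_eq, -one_div]
  | succ m ih =>
    rw [Nat.cast_succ, add_right_comm, Real.Gamma_add_one (by positivity), mul_add_one 2 m]
    simp only [Nat.factorial_succ]
    push_cast
    linear_combination (4 * (m + 1 / 2) * (m + 1) : ℝ) * ih

lemma two_pow_mul_rpow_mul_Gamma (m : ℕ) {β : ℝ} (hβ : 0 < β) :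
    (2 : ℝ) ^ m * (2 * π / β) ^ ((m : ℝ) + 1 / 2) * Real.Gamma ((m : ℝ) + 1 / 2) =
      (2 * m).factorial * √(2 * β) * (π / β) ^ (m + 1) * (m.factorial : ℝ)⁻¹ := by
  have hGamma : 4 ^ m * Real.Gamma ((m : ℝ) + 1 / 2) =
      (2 * m).factorial * √π * (m.factorial : ℝ)⁻¹ := by
    rw [← div_eq_mul_inv, eq_div_iff (by positivity)]
    linear_combination Gamma_natCast_add_half_mul m
  have hsqrt : √(2 * π / β) * √π = √(2 * β) * (π / β) := by
    rw [← Real.sqrt_mul (by positivity), Real.sqrt_eq_iff_mul_self_eq (by positivity)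
      (by positivity), mul_mul_mul_comm, Real.mul_self_sqrt (by positivity)]
    field_simp
  have hpow : (2 : ℝ) ^ m * (2 * π / β) ^ m = 4 ^ m * (π / β) ^ m := by
    rw [← mul_pow, ← mul_pow]
    ring_nf
  rw [Real.rpow_add (by positivity), Real.rpow_natCast, ← Real.sqrt_eq_rpow, ← mul_assoc, hpow]
  linear_combination (π / β) ^ m * √(2 * π / β) * hGamma +
    (π / β) ^ m * (2 * m).factorial * (m.factorial : ℝ)⁻¹ * hsqrt

end Constants

theorem tsum_rpsi_mul_dampedSine (m : ℕ) {β : ℝ} (hβ : 0 < β) :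
    ∑' n : ℕ, ((rpsi (2 * m + 1) (n + 1) / √((n : ℝ) + 1) * Real.exp (-√(((n : ℝ) + 1) * β)) *
        Real.sin (π / 4 - √(((n : ℝ) + 1) * β)) : ℝ) : ℂ) =
      ∑' k : ℕ+, ∑' j : ℕ+, (((j : ℝ) ^ (2 * m) * (dampedSine (j * √(k * β)) / √k) : ℝ) : ℂ) := by
  let g (n : ℕ) : ℂ := (dampedSine √(n * β) / √n : ℝ)
  have hg (p : ℕ+ × ℕ+) : (((p.1 : ℝ) ^ (2 * m + 1 : ℝ) : ℝ) : ℂ) * g (p.1 ^ 2 * p.2) =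
      (((p.1 : ℝ) ^ (2 * m) * (dampedSine (p.1 * √(p.2 * β)) / √p.2) : ℝ) : ℂ) := by
    have hj : (0 : ℝ) < p.1 := Nat.cast_pos.mpr p.1.pos
    rw [← ofReal_mul, Nat.cast_mul, Nat.cast_pow, mul_assoc,
      Real.sqrt_mul (by positivity) (p.2 * β), Real.sqrt_mul (by positivity) (p.2 : ℝ),
      Real.sqrt_sq hj.le,
      show (2 * m + 1 : ℝ) = (2 * m + 1 : ℕ) by push_cast; rfl, Real.rpow_natCast, pow_succ]
    congr 1
    field_simp
  have hs := summable_pow_mul_dampedSine m hβ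
  have h := tsum_rpsi_mul (2 * m + 1) g (hs.congr fun p => (hg p).symm)
  rw [tsum_congr hg, hs.tsum_prod] at h
  rw [Summable.tsum_comm (f := fun j k : ℕ+ =>
    (((j : ℝ) ^ (2 * m) * (dampedSine (j * √(k * β)) / √k) : ℝ) : ℂ)) hs, ← h]
  refine tsum_congr fun n => ?_
  rw [← ofReal_mul, Nat.cast_succ, dampedSine]
  ring_nf

theorem tsum_rpsi_mul_F11 (m : ℕ) {α : ℝ} (hα : 0 < α) :
    ∑' n : ℕ, ((rpsi (-(2 * (m : ℝ))) (n + 1) * ((n : ℝ) + 1) ^ m : ℝ) : ℂ) *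
        F11 ((m : ℂ) + 1 / 2) (1 / 2) (-(((n : ℝ) + 1) * α : ℝ)) =
      ∑' l : ℕ+, ∑' n : ℕ+,
        (n : ℂ) ^ m * F11 ((m : ℂ) + 1 / 2) (1 / 2) (-(n * (l ^ 2 * α))) := by
  let g (n : ℕ) : ℂ := (n : ℂ) ^ m * F11 ((m : ℂ) + 1 / 2) (1 / 2) (-(n * α))
  have hg (p : ℕ+ × ℕ+) : (((p.1 : ℝ) ^ (-(2 * m : ℝ)) : ℝ) : ℂ) * g (p.1 ^ 2 * p.2) =
      (p.2 : ℂ) ^ m * F11 ((m : ℂ) + 1 / 2) (1 / 2) (-(p.2 * (p.1 ^ 2 * α))) := by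
    have hl : (p.1 : ℂ) ≠ 0 := Nat.cast_ne_zero.mpr p.1.ne_zero
    rw [Real.rpow_neg (Nat.cast_nonneg _), show (2 * m : ℝ) = (2 * m : ℕ) by push_cast; rfl,
      Real.rpow_natCast]
    simp only [g]
    push_cast
    rw [mul_pow, ← pow_mul, mul_assoc, inv_mul_cancel_left₀ (pow_ne_zero _ hl),
      mul_left_comm, mul_assoc]
  have hs := summable_pow_mul_F11 m hα
  have h := tsum_rpsi_mul (-(2 * m)) g (hs.congr fun p => (hg p).symm)
  rw [tsum_congr hg, hs.tsum_prod] at h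
  rw [← h]
  refine tsum_congr fun n => ?_
  simp only [g]
  push_cast
  ring

theorem tsum_tsum_symmPoleKernel_two_pi_I_mul {m : ℕ} (hm : 0 < m) {α : ℝ} (hα : 0 < α) :
    ∑' k : ℕ+, ∑' l : ℕ+, symmPoleKernel m (2 * π * I * k) (-(l ^ 2 * α)) =
      (m.factorial : ℂ)⁻¹ * ∑' l : ℕ+, ∑' n : ℕ+,
          (n : ℂ) ^ m * F11 ((m : ℂ) + 1 / 2) (1 / 2) (-(n * (l ^ 2 * α))) +
        (2 * m + 1) * (-1) ^ (m + 1) * ((α : ℂ) ^ (m + 1))⁻¹ *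
          riemannZeta (2 * (m + 1) : ℕ) := by
  have hzero (l : ℕ+) : oddPoleKernel m 0 (-(l ^ 2 * α)) =
      -((2 * m + 1) * (-1) ^ (m + 1) * ((α : ℂ) ^ (m + 1))⁻¹) *
        ((l : ℂ) ^ (2 * (m + 1)))⁻¹ := by
    rw [oddPoleKernel_zero_left, neg_pow, mul_inv, ← inv_pow, inv_neg_one, mul_pow, mul_inv,
      ← pow_mul]
    ring
  have hk (l : ℕ+) := tsum_symmPoleKernel_two_pi_I_mul hm (z := l ^ 2 * α)
    (by rw [← ofReal_natCast, ← ofReal_pow, ← ofReal_mul, ofReal_re]; positivity)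
  rw [← Summable.tsum_comm (f := fun k l : ℕ+ =>
    symmPoleKernel m (2 * π * I * k) (-(l ^ 2 * α))) (summable_symmPoleKernel_two_pi_I_mul hm hα)]
  simp only [hk, hzero]
  rw [Summable.tsum_sub ((summable_pow_mul_F11 m hα).prod.mul_left _)
      ((summable_pnat_inv_natCast_pow (by omega)).mul_left _), tsum_mul_left, tsum_mul_left,
    tsum_pnat_inv_natCast_pow (by omega)]
  ring

theorem tsum_tsum_pow_mul_dampedSine_sqrt {m : ℕ} (hm : 0 < m) {α β : ℝ} (hα : 0 < α)
    (hβ : 0 < β) (hαβ : α * β = 4 * π ^ 3) :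
    ∑' k : ℕ+, ∑' j : ℕ+, (((j : ℝ) ^ (2 * m) * (dampedSine (j * √(k * β)) / √k) : ℝ) : ℂ) =
      -(((2 * m).factorial * Real.sin (π * m / 2) * (2 * β) ^ (-((m : ℝ) + 1 / 2)) : ℝ) : ℂ) *
          riemannZeta (m + 1 : ℕ) +
        (((2 * m).factorial * √(2 * β) * (π / β) ^ (m + 1) : ℝ) : ℂ) *
          ∑' k : ℕ+, ∑' l : ℕ+, symmPoleKernel m (2 * π * I * k) (-(l ^ 2 * α)) := by
  simp only [tsum_pow_mul_dampedSine_sqrt hm hβ hαβ]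
  rw [Summable.tsum_add ((summable_pnat_inv_natCast_pow (by omega)).mul_left _)
      ((summable_symmPoleKernel_two_pi_I_mul hm hα).prod.mul_left _), tsum_mul_left, tsum_mul_left,
    tsum_pnat_inv_natCast_pow (by omega)]

lemma sqrt_div_sqrt_two_mul_riemannZeta (m : ℕ) {α β : ℝ} (hα : 0 < α) (hβ : 0 < β)
    (hαβ : α * β = 4 * π ^ 3) :
    ((√β / √2 : ℝ) : ℂ) * riemannZeta (-1 - 2 * m) =
      (((2 * m).factorial * √(2 * β) * (π / β) ^ (m + 1) : ℝ) : ℂ) *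
        ((2 * m + 1) * (-1) ^ (m + 1) * ((α : ℂ) ^ (m + 1))⁻¹ *
          riemannZeta (2 * (m + 1) : ℕ)) := by
  have hsqrt : √β / √2 * 2 = √(2 * β) := by
    rw [Real.sqrt_mul zero_le_two, div_mul_eq_mul_div, mul_div_assoc, Real.div_sqrt, mul_comm]
  have hpow : (π / β) ^ (m + 1) * (α ^ (m + 1))⁻¹ = ((4 * π ^ 2) ^ (m + 1))⁻¹ := by
    rw [← inv_pow, ← mul_pow, ← inv_pow]
    congr 1
    field_simp
    linear_combination -hαβ
  rw [riemannZeta_neg_one_sub_two_mul, ← hsqrt, Nat.factorial_succ]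
  replace hpow := congrArg ((↑) : ℝ → ℂ) hpow
  push_cast at hpow ⊢
  rw [← hpow]
  ring

theorem ramanujan_wigert_odd (m : ℕ) (hm : 0 < m)
    (α β : ℝ) (hα : 0 < α) (hβ : 0 < β) (hαβ : α * β = 4 * π ^ 3) :
    (∑' n : ℕ, ((rpsi (2 * m + 1) (n + 1) / Real.sqrt ((n : ℝ) + 1) *
        Real.exp (-Real.sqrt (((n : ℝ) + 1) * β)) *
        Real.sin (π / 4 - Real.sqrt (((n : ℝ) + 1) * β)) : ℝ) : ℂ))
    = ((Real.sqrt β / Real.sqrt 2 : ℝ) : ℂ) * riemannZeta (-1 - 2 * m)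
      - (((Nat.factorial (2 * m) : ℝ) * Real.sin (π * m / 2) *
            (2 * β) ^ (-((m : ℝ) + 1 / 2)) : ℝ) : ℂ) * riemannZeta (1 + m)
      + (1 / (Real.sqrt 2 : ℂ)) * riemannZeta (1 / 2) * riemannZeta (-2 * m)
      + (((2 : ℝ) ^ (m : ℕ) * (2 * π / β) ^ ((m : ℝ) + 1 / 2) *
            Real.Gamma ((m : ℝ) + 1 / 2) : ℝ) : ℂ) *
        ∑' n : ℕ, ((rpsi (-(2 * (m : ℝ))) (n + 1) * ((n : ℝ) + 1) ^ (m : ℕ) : ℝ) : ℂ) *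
          F11 ((m : ℂ) + 1 / 2) (1 / 2) (-(((n : ℝ) + 1) * α : ℝ)) := by
  have hzeta : riemannZeta (m + 1 : ℕ) = riemannZeta (1 + m) := by
    rw [Nat.cast_succ, add_comm]
  rw [tsum_rpsi_mul_dampedSine m hβ, tsum_rpsi_mul_F11 m hα,
    tsum_tsum_pow_mul_dampedSine_sqrt hm hα hβ hαβ, tsum_tsum_symmPoleKernel_two_pi_I_mul hm hα,
    two_pow_mul_rpow_mul_Gamma m hβ, sqrt_div_sqrt_two_mul_riemannZeta m hα hβ hαβ, hzeta,
    riemannZeta_neg_two_mul_natCast hm]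
  push_cast
  ring
end

section
/- Let q be a prime, let a be an integer with 0 < a < q, let s ∈ ℂ, and let x > 0 be real. Then ∑_{n=1}^∞ F(x/n)·sin(2πna/q)·n^s = −i·q^s ∑_{d ∣ q, d > 1} (1/(d^s·φ(d))) ∑_{χ mod d, χ odd} χ(a)·τ(conj(χ)) · ∑′_{1 ≤ n ≤ dx/q} σ_s(χ, n), where the outer sum runs over the divisors d > 1 of q, the middle sum runs over the odd Dirichlet characters χ modulo d, and conj(χ) denotes the complex conjugate character. (The left-hand side is a finite sum since F(x/n) = 0 for n > x.) -/
open Complex Finset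
open scoped Real BigOperators Classical

/-- `F(x) = ⌊x⌋` for non-integral `x`, and `F(x) = x - 1/2` for integral `x`. -/
noncomputable def Ffn (x : ℝ) : ℝ := if ∃ m : ℤ, x = (m : ℝ) then x - 1 / 2 else (⌊x⌋ : ℝ)

/-- Twisted divisor sum `σ_s(χ, n) = ∑_{ℓ ∣ n} χ(ℓ) ℓ^s`. -/
noncomputable def sigmaChi {d : ℕ} (χ : DirichletCharacter ℂ d) (s : ℂ) (n : ℕ) : ℂ :=
  ∑ ℓ ∈ n.divisors, χ (ℓ : ZMod d) * (ℓ : ℂ) ^ s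

/-- The Gauss sum `τ(conj χ) = ∑_{r mod d} conj(χ(r)) e^{2πir/d}` (zero for modulus `0`). -/
noncomputable def tauConj : (d : ℕ) → DirichletCharacter ℂ d → ℂ
  | 0, _ => 0
  | (m + 1), χ => ∑ r : ZMod (m + 1),
      (starRingEnd ℂ) (χ r) * Complex.exp (2 * (π : ℂ) * Complex.I * (r.val : ℂ) / ((m : ℂ) + 1))

/-- The primed sum `∑′_{1 ≤ n ≤ y} f(n)`: the term at an integral endpoint is halved. -/
noncomputable def psum (y : ℝ) (f : ℕ → ℂ) : ℂ :=
  (∑ n ∈ Finset.Icc 1 ⌊y⌋₊, f n) -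
    (if y = (⌊y⌋₊ : ℝ) ∧ 1 ≤ ⌊y⌋₊ then f ⌊y⌋₊ / 2 else 0)

/-!
Counting the multiples of `l` up to `y` with the endpoint halved gives `F(y/l)`, so
`∑′_{n ≤ y} ∑_{l ∣ n} g(l) = ∑_{l ≤ y} F(y/l) g(l)` for every `g`. Sort the `n` on the left of the
identity by `gcd(n, q) = q/d`: writing `n = (q/d) m` with `m` prime to `d`, the sine becomes
`sin(2πma/d)`, and orthogonality of characters modulo `d` expands it, `ma` being a unit, as
`(iφ(d))⁻¹ ∑_{χ odd} χ(ma) τ(conj χ)`. Reading the first formula backwards with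
`g(m) = χ(m) m^s` turns the sum over `m` into a primed sum of `σ_s(χ, n)`. For `d = 1` the sine
vanishes.
-/

section CoprimeParts

variable {M : Type*} [AddCommMonoid M]

lemma sum_Icc_filter_gcd_eq {e : ℕ} (he : 0 < e) (d N : ℕ) (f : ℕ → M) :
    ∑ n ∈ Icc 1 N with n.gcd (e * d) = e, f n =
      ∑ m ∈ Icc 1 (N / e) with m.Coprime d, f (e * m) := by
  symm
  refine sum_nbij (e * ·) (fun m hm => ?_) (fun m _ n _ h => Nat.eq_of_mul_eq_mul_left he h)
    (fun n hn => ?_) (fun _ _ => rfl)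
  · obtain ⟨⟨hm1, hmN⟩, hmd⟩ : (1 ≤ m ∧ m ≤ N / e) ∧ m.Coprime d := by simpa using hm
    simp only [mem_filter, mem_Icc, Nat.gcd_mul_left, hmd.gcd_eq_one, mul_one, and_true]
    exact ⟨Nat.mul_pos he hm1, by rwa [mul_comm, ← Nat.le_div_iff_mul_le he]⟩
  · obtain ⟨⟨hn1, hnN⟩, hgcd⟩ : (1 ≤ n ∧ n ≤ N) ∧ n.gcd (e * d) = e := by simpa using hn
    obtain ⟨m, rfl⟩ : e ∣ n := hgcd ▸ Nat.gcd_dvd_left n (e * d)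
    have hmd : m.Coprime d := by
      simpa [Nat.gcd_mul_left, he.ne', Nat.coprime_iff_gcd_eq_one] using hgcd
    refine ⟨m, ?_, rfl⟩
    simp only [coe_filter, mem_Icc, Set.mem_ofPred_eq, Nat.le_div_iff_mul_le he]
    exact ⟨⟨Nat.pos_of_mul_pos_left hn1, by rwa [mul_comm]⟩, hmd⟩

lemma sum_Icc_eq_sum_divisors_sum_coprime {q : ℕ} (hq : q ≠ 0) (N : ℕ) (f : ℕ → M) :
    ∑ n ∈ Icc 1 N, f n =
      ∑ d ∈ q.divisors, ∑ m ∈ Icc 1 (N / (q / d)) with m.Coprime d, f (q / d * m) := by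
  have hgcd : ∀ n ∈ Icc 1 N, n.gcd q ∈ q.divisors := fun n _ =>
    Nat.mem_divisors.2 ⟨n.gcd_dvd_right q, hq⟩
  rw [← sum_fiberwise_of_maps_to hgcd, ← Nat.sum_div_divisors]
  refine sum_congr rfl fun d hd => ?_
  have hdq : d ∣ q := Nat.dvd_of_mem_divisors hd
  have hpos : 0 < q / d := Nat.div_pos_iff.2
    ⟨Nat.pos_of_mem_divisors hd, Nat.le_of_dvd (Nat.pos_of_ne_zero hq) hdq⟩
  simpa only [Nat.div_mul_cancel hdq] using sum_Icc_filter_gcd_eq hpos d N f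

end CoprimeParts

section DivisorSums

lemma sum_Icc_sum_divisors {R : Type*} [Semiring R] (N : ℕ) (g : ℕ → R) :
    ∑ n ∈ Icc 1 N, ∑ l ∈ n.divisors, g l = ∑ l ∈ Icc 1 N, g l * ((N / l : ℕ) : R) := by
  let f : ArithmeticFunction R := ⟨fun n => if n = 0 then 0 else g n, if_pos rfl⟩
  have hf {l : ℕ} (hl : l ≠ 0) : f l = g l := if_neg hl
  calc
    _ = ∑ n ∈ Ioc 0 N, (f * ArithmeticFunction.zeta) n := by
      refine sum_congr rfl fun n _ => ?_
      rw [ArithmeticFunction.coe_mul_zeta_apply]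
      exact sum_congr rfl fun l hl => (hf (Nat.pos_of_mem_divisors hl).ne').symm
    _ = ∑ l ∈ Ioc 0 N, f l * ((N / l : ℕ) : R) := ArithmeticFunction.sum_Ioc_mul_zeta_eq_sum f N
    _ = _ := sum_congr rfl fun l hl => by rw [hf (mem_Ioc.1 hl).1.ne']

lemma Ffn_eq_floor_sub (y : ℝ) : Ffn y = ⌊y⌋ - if ∃ m : ℤ, y = m then 1 / 2 else 0 := by
  unfold Ffn
  split_ifs with h
  · obtain ⟨m, rfl⟩ := h
    simp
  · simp

lemma Ffn_eq_zero {y : ℝ} (hy0 : 0 < y) (hy1 : y < 1) : Ffn y = 0 := by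
  have hy : ¬ ∃ m : ℤ, y = m := by
    rintro ⟨m, rfl⟩
    norm_cast at hy0 hy1
    omega
  rw [Ffn_eq_floor_sub, if_neg hy, Int.floor_eq_zero_iff.2 ⟨hy0.le, hy1⟩]
  simp

lemma exists_int_eq_div_natCast_iff {y : ℝ} (hy : 0 ≤ y) {n : ℕ} (hn : n ≠ 0) :
    (∃ m : ℤ, y / n = m) ↔ y = ⌊y⌋₊ ∧ n ∣ ⌊y⌋₊ := by
  have hn' : (n : ℝ) ≠ 0 := Nat.cast_ne_zero.2 hn
  constructor
  · rintro ⟨m, hm⟩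
    have hm0 : 0 ≤ m := by
      have : (0 : ℝ) ≤ m := hm ▸ by positivity
      exact_mod_cast this
    lift m to ℕ using hm0
    obtain rfl : y = ((m * n : ℕ) : ℝ) := by simpa [div_eq_iff hn'] using hm
    rw [Nat.floor_natCast]
    exact ⟨rfl, n.dvd_mul_left m⟩
  · rintro ⟨hyN, k, hk⟩
    exact ⟨k, by rw [hyN, hk]; push_cast; field_simp⟩

lemma Ffn_div_natCast {y : ℝ} (hy : 0 ≤ y) {n : ℕ} (hn : n ≠ 0) :
    Ffn (y / n) = (⌊y⌋₊ / n : ℕ) - if y = ⌊y⌋₊ ∧ n ∣ ⌊y⌋₊ then 1 / 2 else 0 := by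
  have hfloor : (⌊y / n⌋ : ℝ) = (⌊y⌋₊ / n : ℕ) := by
    rw [← Nat.floor_div_natCast, natCast_floor_eq_intCast_floor (by positivity)]
  simp only [Ffn_eq_floor_sub, hfloor, exists_int_eq_div_natCast_iff hy hn]

lemma sum_Icc_Ffn_div_mul (y : ℝ) (g : ℕ → ℂ) :
    ∑ n ∈ Icc 1 ⌊y⌋₊, (Ffn (y / n) : ℂ) * g n = psum y fun n => ∑ l ∈ n.divisors, g l := by
  have hterm : ∀ n ∈ Icc 1 ⌊y⌋₊, (Ffn (y / n) : ℂ) * g n =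
      g n * ((⌊y⌋₊ / n : ℕ) : ℂ) - if y = ⌊y⌋₊ ∧ n ∣ ⌊y⌋₊ then g n / 2 else 0 := by
    intro n hn
    obtain ⟨hn1, hny⟩ := mem_Icc.1 hn
    have hy : 0 < y := Nat.pos_of_floor_pos (hn1.trans hny)
    rw [Ffn_div_natCast hy.le (Nat.one_le_iff_ne_zero.1 hn1)]
    split_ifs <;> push_cast <;> ring
  have hend : ∑ n ∈ Icc 1 ⌊y⌋₊, (if y = ⌊y⌋₊ ∧ n ∣ ⌊y⌋₊ then g n / 2 else 0) =
      if y = ⌊y⌋₊ ∧ 1 ≤ ⌊y⌋₊ then (∑ l ∈ ⌊y⌋₊.divisors, g l) / 2 else 0 := by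
    rcases Nat.eq_zero_or_pos ⌊y⌋₊ with hN | hN
    · simp [hN]
    have hdivisors : {n ∈ Icc 1 ⌊y⌋₊ | n ∣ ⌊y⌋₊} = ⌊y⌋₊.divisors := by
      rw [Nat.divisors, Ico_add_one_right_eq_Icc]
    by_cases hy : y = ⌊y⌋₊
    · simp only [ite_and, if_pos hy, if_pos (Nat.succ_le_of_lt hN)]
      rw [← sum_filter, hdivisors, sum_div]
    · simp [hy]
  rw [sum_congr rfl hterm, sum_sub_distrib, hend, ← sum_Icc_sum_divisors, psum]

lemma tsum_Ffn_div_mul {x : ℝ} (hx : 0 < x) (g : ℕ → ℂ) :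
    ∑' n : ℕ, (Ffn (x / ((n : ℝ) + 1)) : ℂ) * g (n + 1) =
      ∑ n ∈ Icc 1 ⌊x⌋₊, (Ffn (x / n) : ℂ) * g n := by
  have hvanish : ∀ n ∉ range ⌊x⌋₊, (Ffn (x / ((n : ℝ) + 1)) : ℂ) * g (n + 1) = 0 := by
    intro n hn
    have hxn : x < (n : ℝ) + 1 := by
      exact_mod_cast (Nat.floor_lt hx.le).1 (Nat.lt_succ_of_le (not_lt.1 (mt mem_range.2 hn)))
    rw [Ffn_eq_zero (by positivity) ((div_lt_one (by positivity)).2 hxn)]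
    simp
  rw [tsum_eq_sum hvanish, range_eq_Ico, ← Ico_add_one_right_eq_Icc]
  simpa using sum_Ico_add' (fun n : ℕ => (Ffn (x / n) : ℂ) * g n) 0 ⌊x⌋₊ 1

end DivisorSums

section Orthogonality

open DirichletCharacter

variable {d : ℕ} [NeZero d]

section Domain

variable {R : Type*} [CommRing R] [IsDomain R]
  [HasEnoughRootsOfUnity R (Monoid.exponent (ZMod d)ˣ)]

lemma sum_mul_gaussSum_inv (ψ : AddChar (ZMod d) R) (u : (ZMod d)ˣ) :
    ∑ χ : DirichletCharacter R d, χ u * gaussSum χ⁻¹ ψ = d.totient * ψ u :=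
  calc
    _ = ∑ χ : DirichletCharacter R d, gaussSum χ⁻¹ (ψ.mulShift u) := by
      simp only [gaussSum_mulShift_eq, inv_inv]
    _ = ∑ χ : DirichletCharacter R d, gaussSum χ (ψ.mulShift u) :=
      Equiv.sum_comp (Equiv.inv _) fun χ => gaussSum χ (ψ.mulShift u)
    _ = ∑ r : ZMod d, (∑ χ : DirichletCharacter R d, χ r) * ψ (u * r) := by
      simp only [gaussSum, AddChar.mulShift_apply, sum_mul]
      exact sum_comm
    _ = d.totient * ψ u := by simp [sum_characters_eq]

lemma two_mul_sum_odd_mul_gaussSum_inv (ψ : AddChar (ZMod d) R) (u : (ZMod d)ˣ) :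
    2 * ∑ χ : DirichletCharacter R d with χ.Odd, χ u * gaussSum χ⁻¹ ψ =
      d.totient * (ψ u - ψ (-u)) := by
  have hodd (χ : DirichletCharacter R d) :
      χ u * gaussSum χ⁻¹ ψ - χ (-u : (ZMod d)ˣ) * gaussSum χ⁻¹ ψ =
        if χ.Odd then 2 * (χ u * gaussSum χ⁻¹ ψ) else 0 := by
    rw [Units.val_neg]
    split_ifs with h
    · rw [h.eval_neg]
      ring
    · rw [(χ.even_or_odd.resolve_right h).eval_neg, sub_self]
  rw [mul_sum, sum_filter, ← sum_congr rfl fun χ _ => hodd χ, sum_sub_distrib,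
    sum_mul_gaussSum_inv, sum_mul_gaussSum_inv, Units.val_neg, mul_sub]

end Domain

lemma tauConj_eq_gaussSum (χ : DirichletCharacter ℂ d) :
    tauConj d χ = gaussSum χ⁻¹ ZMod.stdAddChar := by
  cases d with
  | zero => exact absurd rfl (NeZero.ne 0)
  | succ k =>
    refine sum_congr rfl fun r _ => ?_
    rw [← MulChar.star_apply', ZMod.stdAddChar_apply, ZMod.toCircle_apply]
    push_cast
    rfl

lemma stdAddChar_sub_stdAddChar_neg (m : ℤ) :
    (ZMod.stdAddChar (m : ZMod d) : ℂ) - ZMod.stdAddChar (-(m : ZMod d)) =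
      2 * I * (Real.sin (2 * π * m / d) : ℝ) := by
  set z : ℂ := 2 * π * m / d with hz
  have hpos : ZMod.stdAddChar (m : ZMod d) = cexp (z * I) := by
    rw [ZMod.stdAddChar_coe, hz]
    ring_nf
  have hneg : ZMod.stdAddChar (-(m : ZMod d)) = cexp (-z * I) := by
    rw [← Int.cast_neg, ZMod.stdAddChar_coe, hz]
    push_cast
    ring_nf
  have hsin : ((Real.sin (2 * π * m / d) : ℝ) : ℂ) = Complex.sin z := by simp [hz]
  rw [hpos, hneg, hsin, Complex.sin]
  linear_combination (cexp (z * I) - cexp (-z * I)) * I_sq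

lemma sum_odd_mul_tauConj {m : ℤ} (hm : IsCoprime m d) :
    ∑ χ : DirichletCharacter ℂ d with χ.Odd, χ (m : ZMod d) * tauConj d χ =
      d.totient * I * (Real.sin (2 * π * m / d) : ℝ) := by
  obtain ⟨u, hu⟩ := (ZMod.coe_int_isUnit_iff_isCoprime m d).2 hm.symm
  have h := two_mul_sum_odd_mul_gaussSum_inv (R := ℂ) ZMod.stdAddChar u
  simp only [hu, stdAddChar_sub_stdAddChar_neg, ← tauConj_eq_gaussSum] at h
  linear_combination h / 2

end Orthogonality

section SineSums

/-- The part `∑_{n ≤ y, (n, d) = 1} F(y/n) sin(2πna/d) n^s` of the weighted sine sum carried by the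
integers prime to `d`, which is what the characters modulo `d` detect. -/
noncomputable def coprimeSineSum (s : ℂ) (a : ℤ) (d : ℕ) (y : ℝ) : ℂ :=
  ∑ n ∈ Icc 1 ⌊y⌋₊ with n.Coprime d,
    (Ffn (y / n) : ℂ) * ((Real.sin (2 * π * n * a / d) : ℝ) * (n : ℂ) ^ s)

lemma coprimeSineSum_one (s : ℂ) (a : ℤ) (y : ℝ) : coprimeSineSum s a 1 y = 0 := by
  refine sum_eq_zero fun n _ => ?_
  have hsin : Real.sin (2 * π * n * a / (1 : ℕ)) = 0 :=
    Real.sin_eq_zero_iff.2 ⟨2 * n * a, by push_cast; ring⟩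
  rw [hsin]
  simp

lemma sum_odd_mul_tauConj_mul {d : ℕ} [NeZero d] {a : ℤ} (ha : IsCoprime a d) (n : ℕ) :
    ∑ χ : DirichletCharacter ℂ d with χ.Odd, χ (a : ZMod d) * tauConj d χ * χ (n : ZMod d) =
      if n.Coprime d then d.totient * I * (Real.sin (2 * π * n * a / d) : ℝ) else 0 := by
  split_ifs with hn
  · have hna : IsCoprime (n * a : ℤ) d := (Nat.isCoprime_iff_coprime.2 hn).mul_left ha
    have hχ (χ : DirichletCharacter ℂ d) : χ (a : ZMod d) * tauConj d χ * χ (n : ZMod d) =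
        χ ((n * a : ℤ) : ZMod d) * tauConj d χ := by
      push_cast
      rw [map_mul]
      ring
    rw [sum_congr rfl fun χ _ => hχ χ, sum_odd_mul_tauConj hna]
    push_cast
    ring_nf
  · have hχ (χ : DirichletCharacter ℂ d) : χ (n : ZMod d) = 0 :=
      χ.map_nonunit (mt (ZMod.isUnit_iff_coprime n d).1 hn)
    simp [hχ]

lemma sum_odd_mul_psum_sigmaChi {d : ℕ} [NeZero d] {a : ℤ} (ha : IsCoprime a d) (s : ℂ) (y : ℝ) :
    ∑ χ : DirichletCharacter ℂ d with χ.Odd,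
        χ (a : ZMod d) * tauConj d χ * psum y (fun n => sigmaChi χ s n) =
      d.totient * I * coprimeSineSum s a d y := by
  simp only [sigmaChi, ← sum_Icc_Ffn_div_mul, coprimeSineSum, mul_sum]
  rw [sum_comm, sum_filter]
  refine sum_congr rfl fun n _ => ?_
  calc
    _ = (Ffn (y / n) : ℂ) * (n : ℂ) ^ s * ∑ χ : DirichletCharacter ℂ d with χ.Odd,
          χ (a : ZMod d) * tauConj d χ * χ (n : ZMod d) := by
      rw [mul_sum]
      exact sum_congr rfl fun χ _ => by ring
    _ = _ := by
      rw [sum_odd_mul_tauConj_mul ha]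
      split_ifs <;> ring

lemma natCast_div_cpow_mul_coprimeSineSum {q d : ℕ} [NeZero d] (hdq : d ∣ q) {a : ℤ}
    (ha : IsCoprime a d) (s : ℂ) (y : ℝ) :
    ((q / d : ℕ) : ℂ) ^ s * coprimeSineSum s a d y =
      -I * (q : ℂ) ^ s * (((d : ℂ) ^ s * d.totient)⁻¹ *
        ∑ χ : DirichletCharacter ℂ d with χ.Odd,
          χ (a : ZMod d) * tauConj d χ * psum y (fun n => sigmaChi χ s n)) := by
  obtain ⟨e, rfl⟩ := hdq
  have hφ : (d.totient : ℂ) ≠ 0 := Nat.cast_ne_zero.2 (Nat.totient_pos.2 (NeZero.pos d)).ne'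
  have hds : (d : ℂ) ^ s ≠ 0 := by simp [cpow_eq_zero_iff, NeZero.ne d]
  rw [sum_odd_mul_psum_sigmaChi ha, Nat.mul_div_cancel_left e (NeZero.pos d), Nat.cast_mul,
    natCast_mul_natCast_cpow]
  field_simp
  rw [I_sq]
  ring

lemma sum_Icc_Ffn_mul_sin_mul_cpow {q : ℕ} (hq : q ≠ 0) (s : ℂ) (a : ℤ) (x : ℝ) :
    ∑ n ∈ Icc 1 ⌊x⌋₊, (Ffn (x / n) : ℂ) * ((Real.sin (2 * π * n * a / q) : ℝ) * (n : ℂ) ^ s) =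
      ∑ d ∈ q.divisors, ((q / d : ℕ) : ℂ) ^ s * coprimeSineSum s a d (d * x / q) := by
  rw [sum_Icc_eq_sum_divisors_sum_coprime hq]
  refine sum_congr rfl fun d hd => ?_
  obtain ⟨e, rfl⟩ : d ∣ q := Nat.dvd_of_mem_divisors hd
  obtain ⟨hd0, he0⟩ : d ≠ 0 ∧ e ≠ 0 := mul_ne_zero_iff.1 hq
  have hd0' : (d : ℝ) ≠ 0 := Nat.cast_ne_zero.2 hd0
  have he0' : (e : ℝ) ≠ 0 := Nat.cast_ne_zero.2 he0
  have hx : d * x / (d * e : ℕ) = x / e := by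
    push_cast
    field_simp
  rw [Nat.mul_div_cancel_left e (Nat.pos_of_ne_zero hd0), hx, coprimeSineSum, mul_sum,
    Nat.floor_div_natCast]
  refine sum_congr rfl fun m _ => ?_
  have hsin : 2 * π * (e * m : ℕ) * a / (d * e : ℕ) = 2 * π * m * a / d := by
    push_cast
    field_simp
  have hdiv : x / (e * m : ℕ) = x / e / m := by rw [Nat.cast_mul, div_div]
  rw [hsin, hdiv, Nat.cast_mul, natCast_mul_natCast_cpow]
  ring

end SineSums

theorem odd_character_divisor_identity_general
    (q : ℕ) (hq : q ≠ 0) (a : ℤ) (ha : IsCoprime a q) (s : ℂ) (x : ℝ) (hx : 0 < x) :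
    (∑' n : ℕ, ((Ffn (x / ((n : ℝ) + 1)) : ℝ) : ℂ) *
        ((Real.sin (2 * π * ((n : ℝ) + 1) * a / q) : ℝ) : ℂ) * ((n : ℂ) + 1) ^ s)
    = -Complex.I * (q : ℂ) ^ s *
        ∑ d ∈ q.divisors.filter (fun d => 1 < d),
          ((d : ℂ) ^ s * (Nat.totient d : ℂ))⁻¹ *
            ∑' χ : DirichletCharacter ℂ d,
              if χ.Odd then
                χ (a : ZMod d) * tauConj d χ *
                  psum (d * x / q) (fun n => sigmaChi χ s n)
              else 0 := by
  calc
    _ = ∑ n ∈ Icc 1 ⌊x⌋₊, (Ffn (x / n) : ℂ) *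
          ((Real.sin (2 * π * n * a / q) : ℝ) * (n : ℂ) ^ s) := by
      simpa only [Nat.cast_add, Nat.cast_one, mul_assoc] using
        tsum_Ffn_div_mul hx fun n => (Real.sin (2 * π * n * a / q) : ℝ) * (n : ℂ) ^ s
    _ = ∑ d ∈ q.divisors, ((q / d : ℕ) : ℂ) ^ s * coprimeSineSum s a d (d * x / q) :=
      sum_Icc_Ffn_mul_sin_mul_cpow hq s a x
    _ = ∑ d ∈ q.divisors with 1 < d, ((q / d : ℕ) : ℂ) ^ s * coprimeSineSum s a d (d * x / q) := by
      refine (sum_filter_of_ne fun d hd hne => ?_).symm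
      refine (Nat.succ_le_of_lt (Nat.pos_of_mem_divisors hd)).lt_of_ne' ?_
      rintro rfl
      exact hne (by rw [coprimeSineSum_one, mul_zero])
    _ = _ := by
      rw [mul_sum]
      refine sum_congr rfl fun d hd => ?_
      have hdq : d ∣ q := Nat.dvd_of_mem_divisors (mem_filter.1 hd).1
      have : NeZero d := ⟨ne_zero_of_dvd_ne_zero hq hdq⟩
      have had : IsCoprime a d := ha.of_isCoprime_of_dvd_right (Int.natCast_dvd_natCast.2 hdq)
      rw [tsum_fintype, ← sum_filter, natCast_div_cpow_mul_coprimeSineSum hdq had]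

theorem odd_character_divisor_identity
    (q : ℕ) (hq : q.Prime) (a : ℕ) (ha0 : 0 < a) (haq : a < q)
    (s : ℂ) (x : ℝ) (hx : 0 < x) :
    (∑' n : ℕ, ((Ffn (x / ((n : ℝ) + 1)) : ℝ) : ℂ) *
        ((Real.sin (2 * π * ((n : ℝ) + 1) * a / q) : ℝ) : ℂ) * ((n : ℂ) + 1) ^ s)
    = -Complex.I * (q : ℂ) ^ s *
        ∑ d ∈ q.divisors.filter (fun d => 1 < d),
          ((d : ℂ) ^ s * (Nat.totient d : ℂ))⁻¹ *
            ∑' χ : DirichletCharacter ℂ d,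
              if χ.Odd then
                χ (a : ZMod d) * tauConj d χ *
                  psum (d * x / q) (fun n => sigmaChi χ s n)
              else 0 := by
  have ha : IsCoprime (a : ℤ) q := Nat.isCoprime_iff_coprime.2
    (Nat.coprime_of_lt_prime ha0.ne' haq hq).symm
  simpa only [Int.cast_natCast] using
    odd_character_divisor_identity_general q hq.ne_zero a ha s x hx
end

section
/- Let s ∈ ℂ with −1 < Re s < 1 and s ≠ 0. Then for all real α, β > 0 with αβ = 1, √α · ∫_0^∞ K_{s/2}(2παx)·f(x,s) dx = √β · ∫_0^∞ K_{s/2}(2πβx)·f(x,s) dx = (1/(4π³)) ∫_0^∞ Γ((s−1+it)/4)·Γ((s−1−it)/4)·Γ((−s+1+it)/4)·Γ((−s+1−it)/4)·Ξ((t−is)/2)·Ξ((t+is)/2)·cos((t/2)·log α)/(t² + (s+1)²) dt. -/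
open Complex Finset MeasureTheory
open scoped Real BigOperators Classical

/-- Generalized divisor sum `σ_s(n) = ∑_{d ∣ n} d^s` with complex exponent. -/
noncomputable def csigma (s : ℂ) (n : ℕ) : ℂ := ∑ d ∈ n.divisors, (d : ℂ) ^ s

/-- The modified Bessel function of the second kind,
`K_ν(z) = ∫_0^∞ e^{-z cosh t} cosh(ν t) dt` (for `Re z > 0`). -/
noncomputable def Kbes (ν z : ℂ) : ℂ :=
  ∫ t in Set.Ioi (0 : ℝ), Complex.exp (-z * (Real.cosh t : ℂ)) * Complex.cosh (ν * (t : ℂ))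

/-- The Riemann ξ-function. -/
noncomputable def xiR (s : ℂ) : ℂ :=
  (1 / 2) * s * (s - 1) * (π : ℂ) ^ (-s / 2) * Complex.Gamma (s / 2) * riemannZeta s

/-- The Riemann Ξ-function, `Ξ(t) = ξ(1/2 + it)`. -/
noncomputable def XiR (t : ℂ) : ℂ := xiR (1 / 2 + t * Complex.I)

/-- The function `f(x,s)` of Theorem `newthm`; the term at `n = x` (when `x` is a
positive integer) is interpreted as its limiting value `(s-1) x^{s-3} / 2`. -/
noncomputable def fRam (x : ℝ) (s : ℂ) : ℂ :=
  (x : ℂ) ^ (s / 2) * riemannZeta (1 + s) / (2 * Complex.sin ((π : ℂ) * s / 2))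
  + (x : ℂ) ^ (2 - s / 2) / ((π : ℂ) * Complex.cos ((π : ℂ) * s / 2)) *
      ∑' n : ℕ, csigma (-s) (n + 1) *
        (if x = ((n : ℝ) + 1) then (s - 1) * ((n : ℂ) + 1) ^ (s - 3) / 2
          else (((n : ℂ) + 1) ^ (s - 1) - (x : ℂ) ^ (s - 1)) /
            (((n : ℂ) + 1) ^ 2 - (x : ℂ) ^ 2))
  - (2 : ℂ) ^ (-s) * (π : ℂ) ^ (-1 - s) * (x : ℂ) ^ (-s / 2) *
      (Complex.Gamma s * riemannZeta s *
          ((π : ℂ) * Complex.tan ((π : ℂ) * s / 2) -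
            2 * ((Real.eulerMascheroniConstant : ℂ) + (Real.log x : ℂ)))
        - ((2 * π : ℝ) : ℂ) ^ s * deriv riemannZeta (1 - s) /
            Complex.cos ((π : ℂ) * s / 2))

/-!
For `x > 0` outside the positive integers, `f(x, s)` is the inverse Mellin transform along
`Re w = 1/2` of `ζ(1 - w + s/2) ζ(1 - w - s/2) / (sin πw - sin (πs/2))`. Moving the line to
`Re w = -1/2` crosses the poles `w = -s/2` (simple) and `w = s/2` (double), whose residues are the
elementary terms of `f`; on the new line the zeta product is the Dirichlet series of `σ_{-s}`, which
can be integrated term by term and gives the sum over `n`.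

By Parseval, `∫ K_{s/2}(2παx) f(x, s) dx` is then a line integral along `Re w = 1/2` of this
transform times the Mellin transform of `K_{s/2}` at `1 - w`. The gamma factors from `K_{s/2}`
complete both zeta factors, so apart from a power of `α` the integrand is invariant under
`w ↦ 1 - w`: it is even in `Im w`, hence unchanged under `α ↦ 1 / α`. Folding it onto a half-line
gives the cosine integral.
-/

section

open Filter Topology Asymptotics
open scoped Interval

/-! ### Vertical strips -/

section

/-- The filter of points going vertically to infinity, in either direction, inside the closed
vertical strip `a ≤ Re w ≤ b`. -/
def stripEnds (a b : ℝ) : Filter ℂ :=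
  comap (fun w => |w.im|) atTop ⊓ 𝓟 {w | w.re ∈ Set.Icc a b}

lemma eventually_stripEnds {a b : ℝ} {p : ℂ → Prop} :
    (∀ᶠ w in stripEnds a b, p w) ↔ ∃ T, ∀ w : ℂ, T ≤ |w.im| → w.re ∈ Set.Icc a b → p w := by
  simp only [stripEnds, eventually_inf_principal, eventually_comap, eventually_atTop,
    Set.mem_ofPred_eq]
  exact ⟨fun ⟨T, h⟩ => ⟨T, fun w hw => h _ hw w rfl⟩,
    fun ⟨T, h⟩ => ⟨T, fun _ hx w hw => h w (hw ▸ hx)⟩⟩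

lemma tendsto_abs_im_stripEnds (a b : ℝ) : Tendsto (fun w => |w.im|) (stripEnds a b) atTop :=
  tendsto_comap.mono_left inf_le_left

lemma eventually_re_mem_stripEnds (a b : ℝ) : ∀ᶠ w in stripEnds a b, w.re ∈ Set.Icc a b :=
  eventually_inf_principal.mpr (Eventually.of_forall fun _ h => h)

lemma tendsto_verticalLine_stripEnds {a b c : ℝ} (hc : c ∈ Set.Icc a b) :
    Tendsto (fun y : ℝ => (c : ℂ) + y * I) (cocompact ℝ) (stripEnds a b) := by
  refine tendsto_inf.mpr ⟨tendsto_comap_iff.mpr ?_, tendsto_principal.mpr (.of_forall fun y => ?_)⟩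
  · exact tendsto_norm_cocompact_atTop.congr fun y => by simp
  · simpa using hc

lemma tendsto_sub_stripEnds (c : ℂ) (a b : ℝ) :
    Tendsto (fun w => c - w) (stripEnds a b) (stripEnds (c.re - b) (c.re - a)) := by
  refine tendsto_inf.mpr ⟨tendsto_comap_iff.mpr ?_, tendsto_principal.mpr ?_⟩
  · refine tendsto_atTop_mono (fun w => ?_)
      (tendsto_atTop_add_const_right _ (-|c.im|) (tendsto_abs_im_stripEnds a b))
    have := abs_sub_abs_le_abs_sub w.im c.im
    rw [abs_sub_comm] at this
    simpa [sub_eq_add_neg] using this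
  · filter_upwards [eventually_re_mem_stripEnds a b] with w hw
    exact ⟨sub_le_sub_left hw.2 _, sub_le_sub_left hw.1 _⟩

lemma stripEnds_le_cobounded (a b : ℝ) : stripEnds a b ≤ Bornology.cobounded ℂ := by
  rw [← tendsto_id', ← tendsto_norm_atTop_iff_cobounded]
  exact tendsto_atTop_mono abs_im_le_norm (tendsto_abs_im_stripEnds a b)

lemma tendsto_div_sub_pow_cobounded (c p : ℂ) {n : ℕ} (hn : n ≠ 0) :
    Tendsto (fun w => c / (w - p) ^ n) (Bornology.cobounded ℂ) (𝓝 0) := by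
  have h : Tendsto (fun w : ℂ => (w - p)⁻¹) (Bornology.cobounded ℂ) (𝓝 0) :=
    tendsto_inv₀_cobounded.comp (tendsto_sub_const_cobounded p)
  simpa [hn, div_eq_mul_inv] using (h.pow n).const_mul c

/-! ### Line integrals of principal parts -/

lemma integrable_of_continuous_of_isBigO_inv_sq {f : ℝ → ℂ} (hf : Continuous f)
    (h : f =O[cocompact ℝ] fun y => (1 + y ^ 2)⁻¹) : Integrable f :=
  hf.locallyIntegrable.integrable_of_isBigO_cocompact h
    (integrable_inv_one_add_sq.integrableAtFilter _)

lemma verticalLine_sub_ne_zero {c : ℝ} {p : ℂ} (h : c ≠ p.re) (y : ℝ) : (c : ℂ) + y * I - p ≠ 0 :=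
  fun h0 => h <| by simpa [sub_eq_zero] using congrArg re h0

lemma isBigO_inv_verticalLine_mul (c d : ℝ) (p q : ℂ) :
    (fun y : ℝ => (((c : ℂ) + y * I - p) * (d + y * I - q))⁻¹) =O[cocompact ℝ]
      fun y : ℝ => (1 + y ^ 2)⁻¹ := by
  have hconst (z : ℂ) : (fun _ : ℝ => z) =o[cocompact ℝ] fun y : ℝ => (y : ℂ) * I :=
    isLittleO_const_left.mpr <| .inr <|
      tendsto_norm_cocompact_atTop.congr fun y => by simp
  have hlin (z : ℂ) (e : ℝ) :
      (fun y : ℝ => y) =O[cocompact ℝ] fun y : ℝ => (e : ℂ) + y * I - z := by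
    have h := (hconst (e - z)).right_isBigO_add
    exact (isBigO_of_le _ fun y => by simp).trans (h.congr_right fun y => by ring)
  have hsq : (fun y : ℝ => 1 + y ^ 2) =O[cocompact ℝ] fun y : ℝ => y * y := by
    have h1 : (fun _ : ℝ => (1 : ℝ)) =o[cocompact ℝ] fun y : ℝ => y ^ 2 :=
      isLittleO_const_left.mpr <| .inr <|
        ((tendsto_pow_atTop two_ne_zero).comp tendsto_norm_cocompact_atTop).congr fun y => by simp
    simpa only [← sq] using h1.isBigO.add (isBigO_refl _ _)
  refine (hsq.trans ((hlin p c).mul (hlin q d))).inv_rev (.of_forall fun y h => ?_)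
  exact absurd h (by positivity)

variable {a b : ℝ} {p : ℂ}

lemma continuous_div_verticalLine_sub_pow {c : ℝ} (h : c ≠ p.re) (r : ℂ) (n : ℕ) :
    Continuous fun y : ℝ => r / ((c : ℂ) + y * I - p) ^ n :=
  continuous_const.div (by fun_prop) fun y => pow_ne_zero _ (verticalLine_sub_ne_zero h y)

lemma integrable_inv_verticalLine_sub_inv_verticalLine (ha : a ≠ p.re) (hb : b ≠ p.re) :
    Integrable fun y : ℝ => ((b : ℂ) + y * I - p)⁻¹ - ((a : ℂ) + y * I - p)⁻¹ := by
  refine integrable_of_continuous_of_isBigO_inv_sq ?_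
    (((isBigO_inv_verticalLine_mul b a p p).const_mul_left (a - b)).congr_left fun y => ?_)
  · exact ((continuous_div_verticalLine_sub_pow hb 1 1).sub
      (continuous_div_verticalLine_sub_pow ha 1 1)).congr fun y => by simp
  · have h1 := verticalLine_sub_ne_zero ha y
    have h2 := verticalLine_sub_ne_zero hb y
    field_simp
    ring

lemma tendsto_log_add_ofReal_mul_sub_log (z : ℂ) {e : ℂ} (he : e ∈ slitPlane) :
    Tendsto (fun y : ℝ => log (z + y * e) - Real.log y) atTop (𝓝 (log e)) := by
  have hlim : Tendsto (fun y : ℝ => z * (y : ℂ)⁻¹ + e) atTop (𝓝 e) := by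
    simpa using ((tendsto_inv₀_cobounded.comp
      (RCLike.tendsto_ofReal_atTop_cobounded ℂ)).const_mul z).add_const e
  refine ((continuousAt_clog he).tendsto.comp hlim).congr' ?_
  filter_upwards [hlim.eventually_ne (slitPlane_ne_zero he), eventually_gt_atTop 0] with y hy hy0
  rw [Function.comp_apply, eq_sub_iff_add_eq', ← log_ofReal_mul hy0 hy, mul_add, mul_left_comm,
    mul_inv_cancel₀ (ofReal_ne_zero.mpr hy0.ne'), mul_one]

lemma tendsto_log_add_mul_I_sub_log (u v : ℂ) :
    Tendsto (fun y : ℝ => log (u + y * I) - log (v - y * I)) atTop (𝓝 (π * I)) := by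
  have hI : log I - log (-I) = π * I := by rw [log_I, log_neg_I]; ring
  rw [← hI]
  refine ((tendsto_log_add_ofReal_mul_sub_log u (by simp [mem_slitPlane_iff])).sub
    (tendsto_log_add_ofReal_mul_sub_log v (by simp [mem_slitPlane_iff]))).congr fun y => ?_
  rw [sub_sub_sub_cancel_right, mul_neg, sub_eq_add_neg v]

lemma tendsto_verticalLine_cobounded (c : ℝ) :
    Tendsto (fun y : ℝ => (c : ℂ) + y * I) (cocompact ℝ) (Bornology.cobounded ℂ) :=
  (tendsto_verticalLine_stripEnds (Set.left_mem_Icc.mpr le_rfl)).mono_right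
    (stripEnds_le_cobounded c c)

lemma hasDerivAt_inv_verticalLine_sub_pow {c : ℝ} (hc : c ≠ p.re) (r : ℂ) (n : ℕ) (y : ℝ) :
    HasDerivAt (fun y : ℝ => r * I / (n + 1) / ((c : ℂ) + y * I - p) ^ (n + 1))
      (r / ((c : ℂ) + y * I - p) ^ (n + 2)) y := by
  have h : HasDerivAt (fun y : ℝ => (c : ℂ) + y * I - p) I y := by
    simpa using (((hasDerivAt_id y).ofReal_comp.mul_const I).const_add (c : ℂ)).sub_const p
  have hz := verticalLine_sub_ne_zero hc y
  have hn : (n : ℂ) + 1 ≠ 0 := by exact_mod_cast n.succ_ne_zero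
  refine ((hasDerivAt_const y (r * I / (n + 1))).div (h.fun_pow (n + 1))
    (pow_ne_zero _ hz)).congr_deriv ?_
  generalize (c : ℂ) + y * I - p = z at hz
  rw [Nat.add_sub_cancel]
  push_cast
  field_simp
  linear_combination (-r * z ^ n * z ^ (n + 2)) * I_sq

lemma integrable_div_verticalLine_sub_pow {c : ℝ} (hc : c ≠ p.re) (r : ℂ) (n : ℕ) :
    Integrable fun y : ℝ => r / ((c : ℂ) + y * I - p) ^ (n + 2) := by
  have hbdd : (fun y : ℝ => 1 / ((c : ℂ) + y * I - p) ^ 1) =O[cocompact ℝ] fun _ => (1 : ℝ) :=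
    ((tendsto_div_sub_pow_cobounded 1 p one_ne_zero).comp
      (tendsto_verticalLine_cobounded c)).isBigO_one ℝ
  refine integrable_of_continuous_of_isBigO_inv_sq (continuous_div_verticalLine_sub_pow hc r _)
    ((((hbdd.pow n).mul (isBigO_inv_verticalLine_mul c c p p)).const_mul_left r).congr
      (fun y => ?_) fun y => ?_)
  · simp only [pow_one, one_div, inv_pow, mul_inv, div_eq_mul_inv r, pow_add, sq]
  · simp

lemma integral_div_verticalLine_sub_pow {c : ℝ} (hc : c ≠ p.re) (r : ℂ) (n : ℕ) :
    ∫ y : ℝ, r / ((c : ℂ) + y * I - p) ^ (n + 2) = 0 := by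
  have hlim : Tendsto (fun y : ℝ => r * I / (n + 1) / ((c : ℂ) + y * I - p) ^ (n + 1))
      (cocompact ℝ) (𝓝 0) :=
    (tendsto_div_sub_pow_cobounded _ p n.succ_ne_zero).comp (tendsto_verticalLine_cobounded c)
  simpa using integral_of_hasDerivAt_of_tendsto (hasDerivAt_inv_verticalLine_sub_pow hc r n)
    (integrable_div_verticalLine_sub_pow hc r n) (hlim.mono_left atBot_le_cocompact)
      (hlim.mono_left atTop_le_cocompact)

lemma integral_inv_verticalLine_sub_inv_verticalLine (hp : p.re ∈ Set.Ioo a b) :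
    ∫ y : ℝ, (((b : ℂ) + y * I - p)⁻¹ - ((a : ℂ) + y * I - p)⁻¹) = 2 * π := by
  have hb (y : ℝ) : (b - p) + y * I ∈ slitPlane := .inl (by simpa using hp.2)
  have ha (y : ℝ) : (p - a) - y * I ∈ slitPlane := .inl (by simpa using hp.1)
  have hderiv (y : ℝ) : HasDerivAt
      (fun y : ℝ => -I * (log ((b - p) + y * I) - log ((p - a) - y * I)))
      (((b : ℂ) + y * I - p)⁻¹ - ((a : ℂ) + y * I - p)⁻¹) y := by
    have hI : HasDerivAt (fun y : ℝ => (y : ℂ) * I) I y := by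
      simpa using (hasDerivAt_id y).ofReal_comp.mul_const I
    refine ((((hI.const_add (b - p)).clog_real (hb y)).sub
      ((hI.const_sub (p - a)).clog_real (ha y))).const_mul (-I)).congr_deriv ?_
    rw [show (b - p) + y * I = (b : ℂ) + y * I - p by ring,
      show (p - a) - y * I = -((a : ℂ) + y * I - p) by ring, neg_div_neg_eq]
    linear_combination (((a : ℂ) + y * I - p)⁻¹ - ((b : ℂ) + y * I - p)⁻¹) * I_sq
  have htop := (tendsto_log_add_mul_I_sub_log (b - p) (p - a)).const_mul (-I)
  have hbot : Tendsto (fun y : ℝ => -I * (log ((b - p) + y * I) - log ((p - a) - y * I)))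
      atBot (𝓝 (I * (π * I))) := by
    refine (((tendsto_log_add_mul_I_sub_log (p - a) (b - p)).const_mul I).comp
      tendsto_neg_atBot_atTop).congr fun y => ?_
    simp only [Function.comp_apply, ofReal_neg, neg_mul, sub_neg_eq_add, ← sub_eq_add_neg]
    ring
  rw [integral_of_hasDerivAt_of_tendsto hderiv
    (integrable_inv_verticalLine_sub_inv_verticalLine hp.1.ne hp.2.ne') hbot htop]
  linear_combination (-2 * π : ℂ) * I_sq

/-! ### The residue theorem on a vertical strip -/

lemma tendsto_intervalIntegral_horizontal {H : ℂ → ℂ} (hab : a ≤ b)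
    (hH : Tendsto H (stripEnds a b) (𝓝 0)) :
    Tendsto (fun T : ℝ => ∫ x in a..b, H (x + T * I)) (cocompact ℝ) (𝓝 0) := by
  rw [Metric.tendsto_nhds]
  intro ε hε
  have hε' : 0 < ε / (|b - a| + 1) := by positivity
  obtain ⟨T, hT⟩ := eventually_stripEnds.mp (Metric.tendsto_nhds.mp hH _ hε')
  filter_upwards [tendsto_norm_cocompact_atTop.eventually_ge_atTop T] with y hy
  have hbound : ∀ x ∈ Set.uIoc a b, ‖H (x + y * I)‖ ≤ ε / (|b - a| + 1) := fun x hx => by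
    rw [Set.uIoc_of_le hab] at hx
    simpa using (hT (x + y * I) (by simpa using hy) (by simpa using ⟨hx.1.le, hx.2⟩)).le
  rw [dist_zero_right]
  refine (intervalIntegral.norm_integral_le_of_norm_le_const hbound).trans_lt ?_
  rw [div_mul_eq_mul_div, div_lt_iff₀ (by positivity)]
  nlinarith [abs_nonneg (b - a)]

lemma integral_verticalLine_sub_eq_zero {H : ℂ → ℂ} (hab : a ≤ b)
    (hdiff : ∀ w : ℂ, w.re ∈ Set.Icc a b → DifferentiableAt ℂ H w)
    (hH : Tendsto H (stripEnds a b) (𝓝 0))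
    (hint : Integrable fun y : ℝ => H (b + y * I) - H (a + y * I)) :
    ∫ y : ℝ, (H (b + y * I) - H (a + y * I)) = 0 := by
  have hcont {c : ℝ} (hc : c ∈ Set.Icc a b) : Continuous fun y : ℝ => H (c + y * I) :=
    continuous_iff_continuousAt.mpr fun y =>
      (hdiff _ (by simpa using hc)).continuousAt.comp (by fun_prop)
  have hrect (T : ℝ) : ∫ y in (-T)..T, (H (b + y * I) - H (a + y * I)) =
      I * ((∫ x in a..b, H (x + (-T : ℝ) * I)) - ∫ x in a..b, H (x + T * I)) := by
    have h := integral_boundary_rect_eq_zero_of_differentiableOn H (a - T * I) (b + T * I)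
      fun w hw => (hdiff w ?_).differentiableWithinAt
    · rw [intervalIntegral.integral_sub ((hcont ⟨hab, le_rfl⟩).intervalIntegrable _ _)
        ((hcont ⟨le_rfl, hab⟩).intervalIntegrable _ _)]
      simp only [sub_re, add_re, ofReal_re, mul_re, I_re, mul_zero, ofReal_im, I_im, mul_one,
        sub_self, sub_zero, add_zero, sub_im, add_im, mul_im, zero_sub, zero_add, smul_eq_mul] at h
      linear_combination (-I) * h +
        ((∫ y in (-T)..T, H (b + y * I)) - ∫ y in (-T)..T, H (a + y * I)) * I_sq
    · have := hw.1
      simpa [Set.uIcc_of_le hab] using this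
  have hlim := tendsto_intervalIntegral_horizontal hab hH
  refine tendsto_nhds_unique
    (intervalIntegral_tendsto_integral hint tendsto_neg_atTop_atBot tendsto_id) ?_
  have := ((hlim.comp (tendsto_neg_atTop_atBot.mono_right atBot_le_cocompact)).sub
    (hlim.mono_left atTop_le_cocompact)).const_mul I
  simpa only [hrect, id, sub_zero, mul_zero, Function.comp_apply] using this

/-- The principal part `c / (w - p) + ∑ k < n, d k / (w - p) ^ (k + 2)` of a Laurent expansion at
`p`, as a function of `w`. -/
noncomputable def principalPart (p c : ℂ) (n : ℕ) (d : ℕ → ℂ) (w : ℂ) : ℂ :=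
  c * (w - p)⁻¹ + ∑ k ∈ range n, d k / (w - p) ^ (k + 2)

/-- `H` has at worst a pole at `p`, with residue `c`: near `p` it is the sum of an analytic function
and of a principal part in which the coefficient of `(w - p)⁻¹` is `c`. -/
def HasResidue (H : ℂ → ℂ) (p c : ℂ) : Prop :=
  ∃ (g : ℂ → ℂ) (n : ℕ) (d : ℕ → ℂ), AnalyticAt ℂ g p ∧ H =ᶠ[𝓝[≠] p] g + principalPart p c n d

section principalPart

variable {c : ℂ} {n : ℕ} {d : ℕ → ℂ}

lemma analyticAt_principalPart {w : ℂ} (hw : w ≠ p) : AnalyticAt ℂ (principalPart p c n d) w := by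
  have h := sub_ne_zero.mpr hw
  have hsub : AnalyticAt ℂ (fun w => w - p) w := by fun_prop
  exact (analyticAt_const.mul (hsub.inv h)).fun_add <| Finset.analyticAt_fun_sum _ fun k _ =>
    analyticAt_const.div (hsub.fun_pow _) (pow_ne_zero _ h)

lemma tendsto_principalPart_cobounded :
    Tendsto (principalPart p c n d) (Bornology.cobounded ℂ) (𝓝 0) := by
  have hsimple := tendsto_div_sub_pow_cobounded c p one_ne_zero
  have hsum := tendsto_finsetSum (range n) fun k _ =>
    tendsto_div_sub_pow_cobounded (d k) p (Nat.succ_ne_zero (k + 1))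
  simpa [principalPart, div_eq_mul_inv, Function.comp_def] using! hsimple.add hsum

lemma principalPart_verticalLine_sub (y : ℝ) :
    principalPart p c n d (b + y * I) - principalPart p c n d (a + y * I) =
      c * (((b : ℂ) + y * I - p)⁻¹ - ((a : ℂ) + y * I - p)⁻¹) +
        ((∑ k ∈ range n, d k / ((b : ℂ) + y * I - p) ^ (k + 2)) -
          ∑ k ∈ range n, d k / ((a : ℂ) + y * I - p) ^ (k + 2)) := by
  simp only [principalPart]
  ring

lemma integrable_principalPart_sub (hp : p.re ∈ Set.Ioo a b) :
    Integrable fun y : ℝ =>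
      principalPart p c n d (b + y * I) - principalPart p c n d (a + y * I) := by
  simp only [principalPart_verticalLine_sub]
  refine ((integrable_inv_verticalLine_sub_inv_verticalLine hp.1.ne hp.2.ne').const_mul c).add
    (.sub ?_ ?_)
  · exact integrable_finsetSum _ fun k _ => integrable_div_verticalLine_sub_pow hp.2.ne' (d k) k
  · exact integrable_finsetSum _ fun k _ => integrable_div_verticalLine_sub_pow hp.1.ne (d k) k

lemma integral_principalPart_sub (hp : p.re ∈ Set.Ioo a b) :
    ∫ y : ℝ, (principalPart p c n d (b + y * I) - principalPart p c n d (a + y * I)) =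
      2 * π * c := by
  have hpow {e : ℝ} (he : e ≠ p.re) (k : ℕ) := integrable_div_verticalLine_sub_pow he (d k) k
  have hsum {e : ℝ} (he : e ≠ p.re) :
      Integrable fun y : ℝ => ∑ k ∈ range n, d k / ((e : ℂ) + y * I - p) ^ (k + 2) :=
    integrable_finsetSum _ fun k _ => hpow he k
  have hdiff : Integrable fun y : ℝ => (∑ k ∈ range n, d k / ((b : ℂ) + y * I - p) ^ (k + 2)) -
      ∑ k ∈ range n, d k / ((a : ℂ) + y * I - p) ^ (k + 2) := (hsum hp.2.ne').sub (hsum hp.1.ne)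
  simp only [principalPart_verticalLine_sub]
  rw [integral_add ((integrable_inv_verticalLine_sub_inv_verticalLine hp.1.ne hp.2.ne').const_mul c)
      hdiff, integral_const_mul, integral_inv_verticalLine_sub_inv_verticalLine hp,
    integral_sub (hsum hp.2.ne') (hsum hp.1.ne), integral_finsetSum _ fun k _ => hpow hp.2.ne' k,
    integral_finsetSum _ fun k _ => hpow hp.1.ne k]
  simp only [integral_div_verticalLine_sub_pow hp.2.ne', integral_div_verticalLine_sub_pow hp.1.ne]
  simp [mul_comm]

end principalPart

namespace HasResidue

variable {H H₁ : ℂ → ℂ} {c : ℂ}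

lemma congr (h : HasResidue H p c) (hH : H =ᶠ[𝓝[≠] p] H₁) : HasResidue H₁ p c :=
  let ⟨g, n, d, hg, hHg⟩ := h
  ⟨g, n, d, hg, hH.symm.trans hHg⟩

lemma sub_analyticAt {g₁ : ℂ → ℂ} (h : HasResidue H p c) (hg₁ : AnalyticAt ℂ g₁ p) :
    HasResidue (H - g₁) p c := by
  obtain ⟨g, n, d, hg, hHg⟩ := h
  refine ⟨g - g₁, n, d, hg.sub hg₁, ?_⟩
  filter_upwards [hHg] with w hw
  simp only [Pi.sub_apply, Pi.add_apply] at hw ⊢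
  rw [hw]
  ring

lemma exists_sub_principalPart (h : HasResidue H p c) : ∃ (n : ℕ) (d : ℕ → ℂ) (H' : ℂ → ℂ),
    AnalyticAt ℂ H' p ∧ ∀ w, w ≠ p → H - principalPart p c n d =ᶠ[𝓝 w] H' := by
  obtain ⟨g, n, d, hg, hHg⟩ := h
  let H' := Function.update (H - principalPart p c n d) p (g p)
  have hH' {w : ℂ} (hw : w ≠ p) : (H - principalPart p c n d) w = H' w :=
    (Function.update_of_ne hw _ _).symm
  refine ⟨n, d, H', hg.congr (eventuallyEq_nhds_of_eventuallyEq_nhdsNE ?_ ?_), fun w hw => ?_⟩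
  · filter_upwards [hHg, self_mem_nhdsWithin] with w hw hwp
    rw [← hH' hwp, Pi.sub_apply, hw, Pi.add_apply, add_sub_cancel_right]
  · simp [H']
  · filter_upwards [isOpen_ne.mem_nhds hw] with z hz using hH' hz

lemma exists_remove_pole (h : HasResidue H p c) (hp : p.re ∈ Set.Ioo a b)
    (hH : Tendsto H (stripEnds a b) (𝓝 0))
    (hint : Integrable fun y : ℝ => H (b + y * I) - H (a + y * I)) :
    ∃ H' : ℂ → ℂ, AnalyticAt ℂ H' p ∧
      (∀ w, w ≠ p → ∃ g : ℂ → ℂ, AnalyticAt ℂ g w ∧ H - g =ᶠ[𝓝 w] H') ∧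
      Tendsto H' (stripEnds a b) (𝓝 0) ∧
      (Integrable fun y : ℝ => H' (b + y * I) - H' (a + y * I)) ∧
      ∫ y : ℝ, (H (b + y * I) - H (a + y * I)) =
        (∫ y : ℝ, (H' (b + y * I) - H' (a + y * I))) + 2 * π * c := by
  obtain ⟨n, d, H', hH'p, hnear⟩ := h.exists_sub_principalPart
  have hpp := integrable_principalPart_sub (c := c) (n := n) (d := d) hp
  have hH' {w : ℂ} (hw : w ≠ p) : H w - principalPart p c n d w = H' w :=
    (hnear w hw).eq_of_nhds
  have hline (y : ℝ) : H' (b + y * I) - H' (a + y * I) = (H (b + y * I) - H (a + y * I)) -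
      (principalPart p c n d (b + y * I) - principalPart p c n d (a + y * I)) := by
    rw [← hH' (sub_ne_zero.mp (verticalLine_sub_ne_zero hp.2.ne' y)),
      ← hH' (sub_ne_zero.mp (verticalLine_sub_ne_zero hp.1.ne y)), sub_sub_sub_comm]
  refine ⟨H', hH'p, fun w hw => ⟨_, analyticAt_principalPart hw, hnear w hw⟩, ?_, ?_, ?_⟩
  · have hle := stripEnds_le_cobounded a b
    have hpp0 : Tendsto (principalPart p c n d) (stripEnds a b) (𝓝 0) :=
      tendsto_principalPart_cobounded.mono_left hle
    refine (sub_zero (0 : ℂ) ▸ hH.sub hpp0).congr' ?_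
    filter_upwards [hle (Bornology.eventually_ne_cobounded p)] with w hw using hH' hw
  · simp only [hline]
    exact hint.sub hpp
  · simp only [hline]
    rw [integral_sub hint hpp, integral_principalPart_sub hp, sub_add_cancel]

end HasResidue

theorem integral_verticalLine_sub_eq_sum_residue (hab : a ≤ b) {P : Finset ℂ} {res : ℂ → ℂ}
    (hP : ∀ p ∈ P, p.re ∈ Set.Ioo a b) :
    ∀ {H : ℂ → ℂ}, (∀ w : ℂ, w.re ∈ Set.Icc a b → w ∉ P → DifferentiableAt ℂ H w) →
    (∀ p ∈ P, HasResidue H p (res p)) → Tendsto H (stripEnds a b) (𝓝 0) →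
    (Integrable fun y : ℝ => H (b + y * I) - H (a + y * I)) →
    ∫ y : ℝ, (H (b + y * I) - H (a + y * I)) = 2 * π * ∑ p ∈ P, res p := by
  induction P using Finset.induction_on with
  | empty =>
    intro H hdiff _ hH hint
    simpa using integral_verticalLine_sub_eq_zero hab (by simpa using hdiff) hH hint
  | insert p P hpP ih =>
    intro H hdiff hres hH hint
    obtain ⟨H', hH'p, hnear, hH'0, hint', hintegral⟩ := (hres p (mem_insert_self p P)
      ).exists_remove_pole (hP p (mem_insert_self p P)) hH hint
    have hdiff' (w : ℂ) (hw : w.re ∈ Set.Icc a b) (hwP : w ∉ P) : DifferentiableAt ℂ H' w := by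
      rcases eq_or_ne w p with rfl | hwp
      · exact hH'p.differentiableAt
      · obtain ⟨g, hg, hH'⟩ := hnear w hwp
        exact ((hdiff w hw (by simp [hwp, hwP])).sub
          hg.differentiableAt).congr_of_eventuallyEq hH'.symm
    have hres' (q : ℂ) (hq : q ∈ P) : HasResidue H' q (res q) := by
      obtain ⟨g, hg, hH'⟩ := hnear q fun h => hpP (h ▸ hq)
      exact ((hres q (mem_insert_of_mem hq)).sub_analyticAt hg).congr
        (hH'.filter_mono nhdsWithin_le_nhds)
    rw [hintegral, ih (fun q hq => hP q (mem_insert_of_mem hq)) hdiff' hres' hH'0 hint',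
      sum_insert hpP]
    ring

end

section

lemma HasResidue.of_div_sub_sq {A H : ℂ → ℂ} {p : ℂ} (hA : AnalyticAt ℂ A p)
    (hH : ∀ᶠ w in 𝓝[≠] p, H w = A w / (w - p) ^ 2) : HasResidue H p (deriv A p) := by
  obtain ⟨φ, hφ⟩ := hA
  refine ⟨_, 1, fun _ => A p, (hφ.has_fpower_series_dslope_fslope.has_fpower_series_dslope_fslope
    ).analyticAt, ?_⟩
  filter_upwards [hH, self_mem_nhdsWithin] with w hw hwp
  have h : w - p ≠ 0 := sub_ne_zero.mpr hwp
  rw [hw, Pi.add_apply, principalPart, dslope_of_ne _ hwp, slope_def_field, dslope_same,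
    dslope_of_ne _ hwp, slope_def_field]
  simp only [sum_range_one]
  field_simp
  ring

lemma HasResidue.of_div_sub {A H : ℂ → ℂ} {p : ℂ} (hA : AnalyticAt ℂ A p)
    (hH : ∀ᶠ w in 𝓝[≠] p, H w = A w / (w - p)) : HasResidue H p (A p) := by
  have hderiv : deriv (fun w => (w - p) * A w) p = A p := by
    simpa using (((hasDerivAt_id p).sub_const p).fun_mul
      hA.differentiableAt.hasDerivAt).deriv
  rw [← hderiv]
  refine .of_div_sub_sq ((by fun_prop : AnalyticAt ℂ (fun w => w - p) p).mul hA) ?_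
  filter_upwards [hH, self_mem_nhdsWithin] with w hw hwp
  rw [hw, sq, mul_div_mul_left _ _ (sub_ne_zero.mpr hwp)]

lemma HasResidue.div_of_simple_zero {N D : ℂ → ℂ} {p D' : ℂ} (hN : AnalyticAt ℂ N p)
    (hD : AnalyticAt ℂ D p) (hD' : HasDerivAt D D' p) (hp : D p = 0) (hD'0 : D' ≠ 0) :
    HasResidue (fun w => N w / D w) p (N p / D') := by
  obtain ⟨φ, hφ⟩ := hD
  have hslope : dslope D p p = D' := by rw [dslope_same, hD'.deriv]
  rw [← hslope]
  refine .of_div_sub (hN.div hφ.has_fpower_series_dslope_fslope.analyticAt (by rwa [hslope])) ?_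
  filter_upwards [self_mem_nhdsWithin] with w hw
  rw [Pi.div_apply, dslope_of_ne _ hw, slope_def_field, hp, sub_zero]
  have := sub_ne_zero.mpr hw
  field_simp

lemma analyticAt_dslope {D : ℂ → ℂ} {p : ℂ} (hD : AnalyticAt ℂ D p) :
    AnalyticAt ℂ (dslope D p) p :=
  let ⟨_, hφ⟩ := hD
  hφ.has_fpower_series_dslope_fslope.analyticAt

lemma hasDerivAt_dslope_self {D : ℂ → ℂ} {p : ℂ} (hD : AnalyticAt ℂ D p) :
    HasDerivAt (dslope D p) (deriv (deriv D) p / 2) p := by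
  have hE := analyticAt_dslope hD
  have hD' : deriv D =ᶠ[𝓝 p] fun w => dslope D p w + (w - p) * deriv (dslope D p) w := by
    filter_upwards [hE.eventually_analyticAt] with w hw
    have hfun : D = fun w => D p + (w - p) * dslope D p w := by
      ext w
      rw [← smul_eq_mul, sub_smul_dslope, add_sub_cancel]
    have h := (((hasDerivAt_id' w).sub_const p).fun_mul
      hw.differentiableAt.hasDerivAt).const_add (D p)
    rw [← hfun] at h
    simpa using h.deriv
  have h := hE.differentiableAt.hasDerivAt.fun_add (((hasDerivAt_id' p).sub_const p).fun_mul
    hE.deriv.differentiableAt.hasDerivAt)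
  rw [hD'.deriv_eq, h.deriv]
  simpa using hE.differentiableAt.hasDerivAt

lemma HasResidue.div_mul_of_simple_zero {N D : ℂ → ℂ} {p N' D' D'' : ℂ} (hN : AnalyticAt ℂ N p)
    (hD : AnalyticAt ℂ D p) (hN' : HasDerivAt N N' p) (hD' : HasDerivAt D D' p)
    (hD'' : HasDerivAt (deriv D) D'' p) (hp : D p = 0) (hD'0 : D' ≠ 0) :
    HasResidue (fun w => N w / ((w - p) * D w)) p ((N' * D' - N p * (D'' / 2)) / D' ^ 2) := by
  have hslope : dslope D p p = D' := by rw [dslope_same, hD'.deriv]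
  have hderiv := hN'.div (hasDerivAt_dslope_self hD) (by rwa [hslope])
  rw [hslope, hD''.deriv] at hderiv
  rw [← hderiv.deriv]
  refine .of_div_sub_sq (hN.div (analyticAt_dslope hD) (by rwa [hslope])) ?_
  filter_upwards [self_mem_nhdsWithin] with w hw
  have hwp := sub_ne_zero.mpr hw
  rw [Pi.div_apply, dslope_of_ne _ hw, slope_def_field, hp, sub_zero]
  field_simp

/-! ### Inverse Mellin transforms of exponentially decaying functions -/

lemma isBigO_exp_neg_abs_inv_one_add_sq :
    (fun y : ℝ => Real.exp (-|y|)) =O[cocompact ℝ] fun y => (1 + y ^ 2)⁻¹ := by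
  refine .of_bound 2 (.of_forall fun y => ?_)
  have h := Real.quadratic_le_exp_of_nonneg (abs_nonneg y)
  rw [sq_abs] at h
  rw [Real.norm_of_nonneg (Real.exp_pos _).le, Real.norm_of_nonneg (by positivity), Real.exp_neg,
    ← div_eq_mul_inv, inv_le_comm₀ (Real.exp_pos _) (by positivity), inv_div, div_le_iff₀ two_pos]
  nlinarith [abs_nonneg y]

lemma isBigO_pow_mul_exp_stripEnds (k : ℕ) {c d : ℝ} (h : d < c) (a b : ℝ) :
    (fun w : ℂ => |w.im| ^ k * Real.exp (-c * |w.im|)) =O[stripEnds a b]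
      fun w => Real.exp (-d * |w.im|) := by
  have hpow := (isLittleO_pow_exp_pos_mul_atTop k (sub_pos.mpr h)).isBigO.mul
    (isBigO_refl (fun t : ℝ => Real.exp (-c * t)) atTop)
  refine (hpow.comp_tendsto (tendsto_abs_im_stripEnds a b)).congr_right fun w => ?_
  rw [Function.comp_apply, ← Real.exp_add]
  ring_nf

lemma isBigO_cpow_neg_stripEnds {x : ℝ} (hx : 0 < x) (a b : ℝ) :
    (fun w => (x : ℂ) ^ (-w)) =O[stripEnds a b] fun _ => (1 : ℝ) := by
  have hcont : Continuous fun r : ℝ => x ^ (-r) :=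
    Real.continuous_const_rpow hx.ne' |>.comp continuous_neg
  obtain ⟨C, hC⟩ := (isCompact_Icc (a := a) (b := b)).bddAbove_image hcont.continuousOn
  refine .of_bound C ?_
  filter_upwards [eventually_re_mem_stripEnds a b] with w hw
  rw [norm_cpow_eq_rpow_re_of_pos hx, neg_re, norm_one, mul_one]
  exact hC ⟨w.re, hw, rfl⟩

lemma continuous_cpow_neg_verticalLine {x : ℝ} (hx : 0 < x) (σ : ℝ) :
    Continuous fun y : ℝ => (x : ℂ) ^ (-(σ + y * I)) :=
  Continuous.const_cpow (by fun_prop) (.inl (ofReal_ne_zero.mpr hx.ne'))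

variable {a b c : ℝ} {F : ℂ → ℂ}

lemma verticalIntegrable_of_isBigO_exp (hc : c ∈ Set.Icc a b)
    (hcont : Continuous fun y : ℝ => F (c + y * I))
    (hF : F =O[stripEnds a b] fun w => Real.exp (-|w.im|)) : VerticalIntegrable F c := by
  refine integrable_of_continuous_of_isBigO_inv_sq hcont ?_
  have h := hF.comp_tendsto (tendsto_verticalLine_stripEnds hc)
  simp only [Function.comp_def, add_im, ofReal_im, mul_im, ofReal_re, I_im, mul_one, I_re, mul_zero,
    add_zero, zero_add] at h
  exact h.trans isBigO_exp_neg_abs_inv_one_add_sq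

lemma tendsto_zero_of_isBigO_exp (hF : F =O[stripEnds a b] fun w => Real.exp (-|w.im|)) :
    Tendsto F (stripEnds a b) (𝓝 0) :=
  hF.trans_tendsto <| Real.tendsto_exp_neg_atTop_nhds_zero.comp (tendsto_abs_im_stripEnds a b)

theorem mellinInv_sub_mellinInv_eq_sum_residue {x : ℝ} (hx : 0 < x) (hab : a ≤ b) {P : Finset ℂ}
    {res : ℂ → ℂ} (hP : ∀ p ∈ P, p.re ∈ Set.Ioo a b)
    (hdiff : ∀ w : ℂ, w.re ∈ Set.Icc a b → w ∉ P → DifferentiableAt ℂ F w)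
    (hres : ∀ p ∈ P, HasResidue (fun w => (x : ℂ) ^ (-w) * F w) p (res p))
    (hF : F =O[stripEnds a b] fun w => Real.exp (-|w.im|)) :
    mellinInv b F x - mellinInv a F x = ∑ p ∈ P, res p := by
  have hHdiff (w : ℂ) (hw : w.re ∈ Set.Icc a b) (hwP : w ∉ P) :
      DifferentiableAt ℂ (fun w => (x : ℂ) ^ (-w) * F w) w :=
    (differentiableAt_id.neg.const_cpow (.inl (ofReal_ne_zero.mpr hx.ne'))).mul (hdiff w hw hwP)
  have hH : (fun w => (x : ℂ) ^ (-w) * F w) =O[stripEnds a b] fun w => Real.exp (-|w.im|) := by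
    simpa only [one_mul] using (isBigO_cpow_neg_stripEnds hx a b).mul hF
  have hint {e : ℝ} (he : e ∈ Set.Icc a b) (heP : ∀ p ∈ P, e ≠ p.re) :
      VerticalIntegrable (fun w => (x : ℂ) ^ (-w) * F w) e := by
    refine verticalIntegrable_of_isBigO_exp he (continuous_iff_continuousAt.mpr fun y => ?_) hH
    refine ContinuousAt.comp (f := fun y : ℝ => (e : ℂ) + y * I) (hHdiff _ ?_ fun h => ?_
      ).continuousAt (by fun_prop)
    · simpa using he
    · exact heP _ h (by simp)
  have ha := hint (Set.left_mem_Icc.mpr hab) fun p hp => (hP p hp).1.ne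
  have hb := hint (Set.right_mem_Icc.mpr hab) fun p hp => (hP p hp).2.ne'
  have hcauchy := integral_verticalLine_sub_eq_sum_residue hab hP hHdiff hres
    (tendsto_zero_of_isBigO_exp hH) (hb.sub ha)
  rw [integral_sub hb ha] at hcauchy
  simp only [mellinInv, smul_eq_mul, real_smul]
  have hπ : (π : ℂ) ≠ 0 := ofReal_ne_zero.mpr Real.pi_ne_zero
  push_cast
  rw [← mul_sub, hcauchy]
  field_simp

end

/-! ### Polynomial growth of `ζ` in vertical strips -/

/-- The fractional part, cut off to `(1, ∞)`; its Mellin transform at `-s` is the integral in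
`ζ(s) = s / (s - 1) - s ∫₁^∞ {t} t ^ (-s - 1) dt`, which continues `ζ` to `Re s > 0`. -/
noncomputable def fractTail : ℝ → ℂ := (Set.Ioi 1).indicator fun t => ((Int.fract t : ℝ) : ℂ)

lemma norm_fractTail_le_one (t : ℝ) : ‖fractTail t‖ ≤ 1 := by
  refine (norm_indicator_le_norm_self _ _).trans ?_
  rw [norm_real, Real.norm_of_nonneg (Int.fract_nonneg t)]
  exact (Int.fract_lt_one t).le

lemma differentiableAt_mellin_fractTail {s : ℂ} (hs : 0 < s.re) :
    DifferentiableAt ℂ (mellin fractTail) (-s) := by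
  have hmeas : Measurable fractTail :=
    Measurable.indicator (by fun_prop) measurableSet_Ioi
  have hloc : LocallyIntegrable fractTail :=
    (locallyIntegrable_const (1 : ℝ)).mono hmeas.aestronglyMeasurable
      (.of_forall fun t => by simpa using norm_fractTail_le_one t)
  refine mellin_differentiableAt_of_isBigO_rpow (a := 0) (b := -s.re - 1)
    (hloc.locallyIntegrableOn _) (.of_bound 1 (.of_forall fun t => ?_)) (by simpa) ?_ (by simp)
  · simpa using norm_fractTail_le_one t
  · refine EventuallyEq.trans_isBigO (f₂ := fun _ => (0 : ℂ)) ?_ (isBigO_zero _ _)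
    filter_upwards [mem_nhdsWithin_of_mem_nhds (Iio_mem_nhds one_pos)] with t ht
    exact Set.indicator_of_notMem (Set.notMem_Ioi.mpr (Set.mem_Iio.mp ht).le) _

lemma mellin_fractTail_neg (s : ℂ) :
    mellin fractTail (-s) =
      ∫ t in Set.Ioi (1 : ℝ), ((Int.fract t : ℝ) : ℂ) * (t : ℂ) ^ (-(s + 1)) := by
  have h (t : ℝ) : (t : ℂ) ^ (-s - 1) • fractTail t =
      (Set.Ioi (1 : ℝ)).indicator
        (fun t : ℝ => ((Int.fract t : ℝ) : ℂ) * (t : ℂ) ^ (-(s + 1))) t := by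
    rw [fractTail, smul_eq_mul, mul_comm, neg_add',
      Set.indicator_mul_left _ _ fun t : ℝ => (t : ℂ) ^ (-s - 1)]
  simp only [mellin, h]
  rw [setIntegral_indicator measurableSet_Ioi,
    Set.inter_eq_right.mpr (Set.Ioi_subset_Ioi zero_le_one)]

lemma norm_fract_mul_cpow_le (s : ℂ) {t : ℝ} (ht : t ∈ Set.Ioi (1 : ℝ)) :
    ‖((Int.fract t : ℝ) : ℂ) * (t : ℂ) ^ (-(s + 1))‖ ≤ t ^ (-(s.re + 1)) := by
  have ht0 : 0 < t := one_pos.trans ht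
  rw [norm_mul, norm_cpow_eq_rpow_re_of_pos ht0, norm_real,
    Real.norm_of_nonneg (Int.fract_nonneg t), neg_re, add_re, one_re]
  exact mul_le_of_le_one_left (by positivity) (Int.fract_lt_one t).le

lemma norm_mellin_fractTail_neg_le {s : ℂ} (hs : 0 < s.re) :
    ‖mellin fractTail (-s)‖ ≤ 1 / s.re := by
  rw [mellin_fractTail_neg]
  refine (norm_integral_le_of_norm_le (integrableOn_Ioi_rpow_of_lt (a := -(s.re + 1)) (by linarith)
    one_pos) ((ae_restrict_iff' measurableSet_Ioi).mpr
      (.of_forall fun t => norm_fract_mul_cpow_le s))).trans_eq ?_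
  rw [integral_Ioi_rpow_of_lt (by linarith) one_pos, Real.one_rpow, neg_add', sub_add_cancel,
    neg_div_neg_eq]

lemma integrableOn_fract_mul_cpow {s : ℂ} (hs : 0 < s.re) :
    IntegrableOn (fun t : ℝ => ((Int.fract t : ℝ) : ℂ) * (t : ℂ) ^ (-(s + 1))) (Set.Ioi 1) := by
  refine (integrableOn_Ioi_rpow_of_lt (a := -(s.re + 1)) (by linarith) one_pos).mono' ?_
    ((ae_restrict_iff' measurableSet_Ioi).mpr (.of_forall fun t => norm_fract_mul_cpow_le s))
  have : Measurable fun t : ℝ => ((Int.fract t : ℝ) : ℂ) * (t : ℂ) ^ (-(s + 1)) := by fun_prop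
  exact this.aestronglyMeasurable

lemma riemannZeta₁_eq_sub_mellin_of_one_lt_re {s : ℂ} (hs : 1 < s.re) :
    riemannZeta₁ s = s - s * (s - 1) * mellin fractTail (-s) := by
  have hs1 : s - 1 ≠ 0 := fun h => by simp [sub_eq_zero.mp h] at hs
  have hfloor : ∀ t ∈ Set.Ioi (1 : ℝ),
      (∑ k ∈ Icc 1 ⌊t⌋₊, (1 : ℕ → ℂ) k) * (t : ℂ) ^ (-(s + 1)) =
        (t : ℂ) ^ (-s) - ((Int.fract t : ℝ) : ℂ) * (t : ℂ) ^ (-(s + 1)) := fun t ht => by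
    have ht0 : 0 < t := one_pos.trans ht
    have hfl : (⌊t⌋₊ : ℂ) = t - ((Int.fract t : ℝ) : ℂ) := by
      rw [← ofReal_sub, Int.self_sub_fract, ← natCast_floor_eq_intCast_floor ht0.le, ofReal_natCast]
    have hpow : (t : ℂ) ^ (-s) = t * (t : ℂ) ^ (-(s + 1)) := by
      rw [show -s = 1 + -(s + 1) by ring, cpow_add _ _ (ofReal_ne_zero.mpr ht0.ne'), cpow_one]
    simp only [Pi.one_apply, sum_const, Nat.card_Icc, add_tsub_cancel_right, nsmul_eq_mul, mul_one]
    rw [hfl, hpow, sub_mul]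
  have hs' : (-s).re < -1 := by simpa using hs
  have hζ := LSeries_eq_mul_integral' (1 : ℕ → ℂ) zero_le_one hs
    (.of_bound 1 (.of_forall fun n => by simp))
  rw [LSeries_one_eq_riemannZeta hs, setIntegral_congr_fun measurableSet_Ioi hfloor,
    integral_sub (integrableOn_Ioi_cpow_of_lt hs' one_pos)
      (integrableOn_fract_mul_cpow (zero_lt_one.trans hs)),
    ← mellin_fractTail_neg, integral_Ioi_cpow_of_lt hs' one_pos, ofReal_one, one_cpow,
    riemannZeta_eq_inv_sub_mul (sub_ne_zero.mp hs1), show -s + 1 = -(s - 1) by ring,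
    neg_div_neg_eq] at hζ
  field_simp at hζ
  linear_combination hζ

lemma riemannZeta₁_eq_sub_mellin {s : ℂ} (hs : 0 < s.re) :
    riemannZeta₁ s = s - s * (s - 1) * mellin fractTail (-s) := by
  have hU (r : ℝ) : IsOpen {s : ℂ | r < s.re} := isOpen_lt continuous_const continuous_re
  have hright : AnalyticOnNhd ℂ (fun s => s - s * (s - 1) * mellin fractTail (-s))
      {s : ℂ | 0 < s.re} := by
    refine DifferentiableOn.analyticOnNhd (fun z hz => ?_) (hU 0)
    have : DifferentiableAt ℂ (fun s => mellin fractTail (-s)) z :=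
      (differentiableAt_mellin_fractTail hz).comp z differentiableAt_id.neg
    exact DifferentiableAt.differentiableWithinAt (by fun_prop)
  refine (differentiable_riemannZeta₁.differentiableOn.analyticOnNhd
    (hU 0)).eqOn_of_preconnected_of_eventuallyEq hright
    (convex_halfSpace_re_gt 0).isPreconnected (z₀ := 2) (by simp) ?_ hs
  filter_upwards [(hU 1).mem_nhds (by simp : (2 : ℂ) ∈ {s : ℂ | 1 < s.re})] with z hz
  exact riemannZeta₁_eq_sub_mellin_of_one_lt_re hz

lemma isBigO_riemannZeta_stripEnds {a : ℝ} (ha : 0 < a) (b : ℝ) :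
    riemannZeta =O[stripEnds a b] fun w => |w.im| := by
  have him : Tendsto (fun w : ℂ => |w.im|) (stripEnds a b) atTop := tendsto_abs_im_stripEnds a b
  have hid : (fun w => w) =O[stripEnds a b] fun w => |w.im| := by
    refine .of_bound (max |a| |b| + 1) ?_
    filter_upwards [eventually_re_mem_stripEnds a b, him.eventually_ge_atTop 1] with w hw hw1
    have hre : |w.re| ≤ max |a| |b| := abs_le_max_abs_abs hw.1 hw.2
    rw [Real.norm_eq_abs, abs_abs]
    nlinarith [norm_le_abs_re_add_abs_im w, abs_nonneg w.re]
  have hinv : (fun w : ℂ => 1 / (w - 1) ^ 1) =O[stripEnds a b] fun _ => (1 : ℝ) :=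
    ((tendsto_div_sub_pow_cobounded 1 1 one_ne_zero).mono_left
      (stripEnds_le_cobounded a b)).isBigO_one ℝ
  have hmellin : (fun w => mellin fractTail (-w)) =O[stripEnds a b] fun _ => (1 : ℝ) := by
    refine .of_bound (1 / a) ?_
    filter_upwards [eventually_re_mem_stripEnds a b] with w hw
    rw [norm_one, mul_one]
    exact (norm_mellin_fractTail_neg_le (ha.trans_le hw.1)).trans
      (one_div_le_one_div_of_le ha hw.1)
  have h := (hid.mul (hinv.sub hmellin)).congr_right fun w => mul_one |w.im|
  refine h.congr' ?_ .rfl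
  filter_upwards [eventually_re_mem_stripEnds a b,
    stripEnds_le_cobounded a b (Bornology.eventually_ne_cobounded 1)] with w hw hw1
  have hw1' : w - 1 ≠ 0 := sub_ne_zero.mpr hw1
  rw [riemannZeta_eq_inv_sub_mul hw1, riemannZeta₁_eq_sub_mellin (ha.trans_le hw.1)]
  field_simp

/-! ### The denominator `sin πw - sin (πs/2)` -/

section

lemma abs_sinh_im_le_norm_sin (z : ℂ) : |Real.sinh z.im| ≤ ‖sin z‖ := by
  have h : sin z = ((Real.sin z.re * Real.cosh z.im : ℝ) : ℂ) +
      ((Real.cos z.re * Real.sinh z.im : ℝ) : ℂ) * I := by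
    rw [sin_eq]
    push_cast
    ring
  refine abs_le_of_sq_le_sq ?_ (norm_nonneg _)
  rw [← normSq_eq_norm_sq, h, normSq_add_mul_I]
  nlinarith [Real.cosh_sq z.im, Real.sin_sq_add_cos_sq z.re, sq_nonneg (Real.sin z.re),
    sq_nonneg (Real.sinh z.im)]

lemma exp_abs_im_le_norm_sin {z : ℂ} (hz : 1 ≤ |z.im|) : Real.exp |z.im| ≤ 4 * ‖sin z‖ := by
  have hsinh := abs_sinh_im_le_norm_sin z
  rw [Real.abs_sinh, Real.sinh_eq] at hsinh
  have h1 : Real.exp (-|z.im|) ≤ 1 := Real.exp_le_one_iff.mpr (by linarith)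
  have h2 := Real.add_one_le_exp |z.im|
  linarith

/-- The difference `sin (π w) - sin (π s / 2) = 2 cos (π (w + s / 2) / 2) sin (π (w - s / 2) / 2)`,
the denominator in the Mellin transform of `f(·, s)`. -/
noncomputable def sinGap (s w : ℂ) : ℂ := sin (π * w) - sin (π * s / 2)

lemma sinGap_sub_two (s w : ℂ) : sinGap s (w - 2) = sinGap s w := by
  rw [sinGap, mul_sub, show (π : ℂ) * w - π * 2 = π * w - 2 * π by ring, sin_sub_two_pi, sinGap]

lemma sinGap_one_sub (s w : ℂ) : sinGap s (1 - w) = sinGap s w := by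
  rw [sinGap, mul_sub, mul_one, sin_pi_sub, sinGap]

lemma sinGap_eq_zero_iff {s w : ℂ} :
    sinGap s w = 0 ↔ ∃ k : ℤ, w = s / 2 + 2 * k ∨ w = 2 * k + 1 - s / 2 := by
  have hπ : (π : ℂ) ≠ 0 := ofReal_ne_zero.mpr Real.pi_ne_zero
  rw [sinGap, sub_eq_zero, eq_comm, sin_eq_sin_iff]
  refine exists_congr fun k => or_congr ?_ ?_
  · exact ⟨fun h => mul_left_cancel₀ hπ (by linear_combination h),
      fun h => by rw [h]; ring⟩
  · exact ⟨fun h => mul_left_cancel₀ hπ (by linear_combination h),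
      fun h => by rw [h]; ring⟩

lemma hasDerivAt_sinGap (s w : ℂ) : HasDerivAt (sinGap s) (π * cos (π * w)) w :=
  (((hasDerivAt_id' w).const_mul (π : ℂ)).csin.sub_const (sin (π * s / 2))).congr_deriv (by ring)

lemma hasDerivAt_deriv_sinGap (s w : ℂ) :
    HasDerivAt (deriv (sinGap s)) (-π ^ 2 * sin (π * w)) w := by
  rw [funext fun w => (hasDerivAt_sinGap s w).deriv]
  exact (((hasDerivAt_id' w).const_mul (π : ℂ)).ccos.const_mul (π : ℂ)).congr_deriv (by ring)

lemma differentiable_sinGap (s : ℂ) : Differentiable ℂ (sinGap s) :=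
  fun w => (hasDerivAt_sinGap s w).differentiableAt

lemma isBigO_inv_sinGap_stripEnds (s : ℂ) (a b : ℝ) :
    (fun w => (sinGap s w)⁻¹) =O[stripEnds a b] fun w => Real.exp (-π * |w.im|) := by
  have hsin : (fun w : ℂ => Real.exp (π * |w.im|)) =O[stripEnds a b] fun w => sin (π * w) := by
    refine .of_bound 4 ?_
    filter_upwards [(tendsto_abs_im_stripEnds a b).eventually_ge_atTop 1] with w hw
    have him : |(π * w).im| = π * |w.im| := by rw [im_ofReal_mul, abs_mul, abs_of_pos Real.pi_pos]
    rw [Real.norm_of_nonneg (Real.exp_pos _).le, ← him]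
    refine exp_abs_im_le_norm_sin ?_
    rw [him]
    nlinarith [Real.pi_gt_three]
  have hexp : Tendsto (fun w : ℂ => Real.exp (π * |w.im|)) (stripEnds a b) atTop :=
    Real.tendsto_exp_atTop.comp ((tendsto_abs_im_stripEnds a b).const_mul_atTop Real.pi_pos)
  have hconst : (fun _ => sin (π * s / 2)) =o[stripEnds a b] fun w => sin (π * w) :=
    (isLittleO_const_left.mpr (.inr (tendsto_norm_atTop_atTop.comp hexp))).trans_isBigO hsin
  refine ((hsin.trans hconst.right_isBigO_sub).inv_rev (.of_forall fun w h =>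
    absurd h (Real.exp_ne_zero _))).congr_right fun w => ?_
  rw [neg_mul, Real.exp_neg]

/-! ### The inverse Mellin transform of `1 / sinGap s` -/

variable {s : ℂ}

lemma cos_pi_mul_div_two_ne_zero (hs : s.re ∈ Set.Ioo (-1) 1) : cos (π * s / 2) ≠ 0 := by
  intro h
  obtain ⟨k, hk⟩ := cos_eq_zero_iff.mp h
  have hs' : s = (2 * k + 1 : ℤ) := by
    refine mul_left_cancel₀ (ofReal_ne_zero.mpr Real.pi_ne_zero) ?_
    push_cast
    linear_combination 2 * hk
  rw [hs', intCast_re] at hs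
  have h1 : -1 < 2 * k + 1 := by exact_mod_cast hs.1
  have h2 : 2 * k + 1 < 1 := by exact_mod_cast hs.2
  lia

lemma sinGap_eq_zero_iff_of_re_mem_Icc {w : ℂ} (hs : s.re ∈ Set.Ioo (-1) 1)
    (hw : w.re ∈ Set.Icc (-1 / 2) (3 / 2)) : sinGap s w = 0 ↔ w = s / 2 ∨ w = 1 - s / 2 := by
  have hs2 : (s / 2).re = s.re / 2 := by simp
  refine ⟨fun h => ?_, ?_⟩
  · obtain ⟨k, rfl | rfl⟩ := sinGap_eq_zero_iff.mp h
    all_goals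
      simp only [add_re, sub_re, mul_re, re_ofNat, im_ofNat, intCast_re, intCast_im, one_re, hs2,
        zero_mul, sub_zero, Set.mem_Icc] at hw
      have hk₁ : (-1 : ℝ) < k := by linarith [hs.1, hs.2, hw.1, hw.2]
      have hk₂ : (k : ℝ) < 1 := by linarith [hs.1, hs.2, hw.1, hw.2]
      obtain rfl : k = 0 := by
        have h1 : -1 < k := by exact_mod_cast hk₁
        have h2 : k < 1 := by exact_mod_cast hk₂
        lia
      simp
  · rintro (rfl | rfl)
    · exact sinGap_eq_zero_iff.mpr ⟨0, .inl (by simp)⟩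
    · exact sinGap_eq_zero_iff.mpr ⟨0, .inr (by simp)⟩

lemma isBigO_inv_sinGap_exp_stripEnds (s : ℂ) (a b : ℝ) :
    (fun w => (sinGap s w)⁻¹) =O[stripEnds a b] fun w => Real.exp (-|w.im|) := by
  refine (isBigO_inv_sinGap_stripEnds s a b).trans ?_
  simpa using isBigO_pow_mul_exp_stripEnds 0 (by linarith [Real.pi_gt_three] : 1 < π) a b

lemma verticalIntegrable_inv_sinGap (hs : s.re ∈ Set.Ioo (-1) 1) :
    VerticalIntegrable (fun w => (sinGap s w)⁻¹) (-1 / 2) := by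
  refine verticalIntegrable_of_isBigO_exp (Set.left_mem_Icc.mpr le_rfl)
    (((differentiable_sinGap s).continuous.comp (by fun_prop)).inv₀ fun y h => ?_)
    (isBigO_inv_sinGap_exp_stripEnds s _ _)
  rcases (sinGap_eq_zero_iff_of_re_mem_Icc hs (by norm_num)).mp h with h | h
  all_goals
    have hre := congrArg re h
    norm_num at hre
    linarith [hs.1, hs.2]

lemma mellinInv_sub_two {F : ℂ → ℂ} (hF : ∀ w, F (w - 2) = F w) (σ : ℝ) {y : ℝ} (hy : 0 < y) :
    mellinInv (σ - 2) F y = y ^ 2 * mellinInv σ F y := by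
  have hy0 : (y : ℂ) ≠ 0 := ofReal_ne_zero.mpr hy.ne'
  have h (t : ℝ) : (y : ℂ) ^ (-(((σ - 2 : ℝ) : ℂ) + t * I)) * F (((σ - 2 : ℝ) : ℂ) + t * I) =
      y ^ 2 * ((y : ℂ) ^ (-(σ + t * I)) * F (σ + t * I)) := by
    rw [← hF (σ + t * I), ← mul_assoc, ← cpow_two, ← cpow_add _ _ hy0]
    push_cast
    ring_nf
  simp only [mellinInv, smul_eq_mul, h, integral_const_mul, real_smul]
  ring

lemma sinGap_eq_zero_iff_mem_poles {w : ℂ} (hs : s.re ∈ Set.Ioo (-1) 1)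
    (hw : w.re ∈ Set.Icc (-5 / 2) (-1 / 2)) :
    sinGap s w = 0 ↔ w ∈ ({s / 2 - 2, -1 - s / 2} : Finset ℂ) := by
  rw [← add_sub_cancel_right w 2, sinGap_sub_two, sinGap_eq_zero_iff_of_re_mem_Icc hs, mem_insert,
    mem_singleton, sub_left_inj, sub_eq_iff_eq_add (c := -1 - s / 2)]
  · ring_nf
  · constructor <;> norm_num <;> linarith [hw.1, hw.2]

lemma analyticAt_cpow_neg {x : ℝ} (hx : 0 < x) (p : ℂ) :
    AnalyticAt ℂ (fun w => (x : ℂ) ^ (-w)) p :=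
  analyticAt_const.cpow analyticAt_id.neg (ofReal_mem_slitPlane.mpr hx)

lemma mellinInv_inv_sinGap_sub (hs : s.re ∈ Set.Ioo (-1) 1) {y : ℝ} (hy : 0 < y) :
    mellinInv (-1 / 2) (fun w => (sinGap s w)⁻¹) y -
        mellinInv (-5 / 2) (fun w => (sinGap s w)⁻¹) y =
      ((y : ℂ) ^ (2 - s / 2) - (y : ℂ) ^ (1 + s / 2)) / (π * cos (π * s / 2)) := by
  have hcos := cos_pi_mul_div_two_ne_zero hs
  have hπ : (π : ℂ) ≠ 0 := ofReal_ne_zero.mpr Real.pi_ne_zero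
  have hmem : ∀ p ∈ ({s / 2 - 2, -1 - s / 2} : Finset ℂ), p.re ∈ Set.Ioo (-5 / 2) (-1 / 2) := by
    simp only [mem_insert, mem_singleton, forall_eq_or_imp, forall_eq, sub_re, div_ofNat_re, neg_re,
      one_re, re_ofNat, Set.mem_Ioo]
    refine ⟨⟨?_, ?_⟩, ?_, ?_⟩ <;> linarith [hs.1, hs.2]
  have hne : s / 2 - 2 ≠ -1 - s / 2 := fun h => by
    have := congrArg re h
    norm_num at this
    linarith [hs.2]
  have hcos₁ : cos (π * (s / 2 - 2)) = cos (π * s / 2) := by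
    rw [← cos_sub_two_pi (π * s / 2)]
    ring_nf
  have hcos₂ : cos (π * (-1 - s / 2)) = -cos (π * s / 2) := by
    rw [← cos_neg, ← cos_add_pi]
    ring_nf
  have hcosp : ∀ p ∈ ({s / 2 - 2, -1 - s / 2} : Finset ℂ), cos (π * p) ≠ 0 := by
    simpa [hcos₁, hcos₂] using hcos
  rw [mellinInv_sub_mellinInv_eq_sum_residue (F := fun w => (sinGap s w)⁻¹) hy (by norm_num) hmem
    (res := fun p => (y : ℂ) ^ (-p) / (π * cos (π * p)))
    (fun w hw hwP => (differentiable_sinGap s w).inv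
      fun h => hwP ((sinGap_eq_zero_iff_mem_poles hs hw).mp h))
    (fun p hp => ?_) (isBigO_inv_sinGap_exp_stripEnds s _ _), sum_pair hne, hcos₁, hcos₂]
  · rw [neg_sub, neg_sub, sub_neg_eq_add, add_comm (s / 2), mul_neg, div_neg, ← sub_eq_add_neg,
      sub_div]
  · simp only [← div_eq_mul_inv]
    exact HasResidue.div_of_simple_zero (analyticAt_cpow_neg hy p)
      ((differentiable_sinGap s).analyticAt p) (hasDerivAt_sinGap s p)
      ((sinGap_eq_zero_iff_mem_poles hs ⟨(hmem p hp).1.le, (hmem p hp).2.le⟩).mpr hp)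
      (mul_ne_zero hπ (hcosp p hp))

-- Moving the line of integration by the period `2` of `sinGap s` multiplies the integral by
-- `y ^ 2`, while the residue theorem computes the change.
theorem mellinInv_inv_sinGap (hs : s.re ∈ Set.Ioo (-1) 1) {y : ℝ} (hy : 0 < y) :
    (1 - y ^ 2) * mellinInv (-1 / 2) (fun w => (sinGap s w)⁻¹) y =
      ((y : ℂ) ^ (2 - s / 2) - (y : ℂ) ^ (1 + s / 2)) / (π * cos (π * s / 2)) := by
  have hperiod := mellinInv_sub_two (F := fun w => (sinGap s w)⁻¹)
    (fun w => by rw [sinGap_sub_two]) (-1 / 2) hy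
  rw [show (-1 / 2 - 2 : ℝ) = -5 / 2 by norm_num] at hperiod
  rw [← mellinInv_inv_sinGap_sub hs hy, hperiod, sub_mul, one_mul]

end

/-! ### The Mellin transform of `f(·, s)` and its residues -/

/-- The Mellin transform of `f(·, s)` on the line `Re w = 1 / 2`, continued to a meromorphic
function. -/
noncomputable def fRamMellin (s w : ℂ) : ℂ :=
  riemannZeta (1 - (w - s / 2)) * riemannZeta (1 - (w + s / 2)) / sinGap s w

lemma isBigO_riemannZeta_sub_stripEnds {a b : ℝ} {c : ℂ} (hc : b < c.re) :
    (fun w => riemannZeta (c - w)) =O[stripEnds a b] fun w => |w.im| := by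
  have him : (fun w : ℂ => |(c - w).im|) =O[stripEnds a b] fun w => |w.im| := by
    refine .of_bound (|c.im| + 1) ?_
    filter_upwards [(tendsto_abs_im_stripEnds a b).eventually_ge_atTop 1] with w hw
    rw [sub_im, Real.norm_eq_abs, Real.norm_eq_abs, abs_abs, abs_abs]
    nlinarith [abs_sub c.im w.im, abs_nonneg c.im]
  exact ((isBigO_riemannZeta_stripEnds (sub_pos.mpr hc) _).comp_tendsto
    (tendsto_sub_stripEnds c a b)).trans him

section

variable {s : ℂ} {x : ℝ}

lemma isBigO_fRamMellin_stripEnds (hs : s.re ∈ Set.Ioo (-1) 1) (a : ℝ) :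
    fRamMellin s =O[stripEnds a (1 / 2)] fun w => Real.exp (-|w.im|) := by
  have hre₁ : 1 / 2 < (1 + s / 2).re := by
    rw [add_re, one_re, div_ofNat_re]
    linarith [hs.1]
  have hre₂ : 1 / 2 < (1 - s / 2).re := by
    rw [sub_re, one_re, div_ofNat_re]
    linarith [hs.2]
  have hdecay : (fun w : ℂ => |w.im| * |w.im| * Real.exp (-π * |w.im|))
      =O[stripEnds a (1 / 2)] fun w => Real.exp (-|w.im|) := by
    simpa [sq] using
      isBigO_pow_mul_exp_stripEnds 2 (by linarith [Real.pi_gt_three] : 1 < π) a (1 / 2)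
  refine ((((isBigO_riemannZeta_sub_stripEnds hre₁).mul
    (isBigO_riemannZeta_sub_stripEnds hre₂)).mul (isBigO_inv_sinGap_stripEnds s _ _)).trans
    hdecay).congr_left fun w => ?_
  rw [fRamMellin, div_eq_mul_inv]
  ring_nf

lemma sinGap_eq_zero_iff_eq_half {w : ℂ} (hs : s.re ∈ Set.Ioo (-1) 1)
    (hw : w.re ∈ Set.Icc (-1 / 2) (1 / 2)) : sinGap s w = 0 ↔ w = s / 2 := by
  rw [sinGap_eq_zero_iff_of_re_mem_Icc hs ⟨hw.1, by linarith [hw.2]⟩, or_iff_left]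
  rintro rfl
  rw [sub_re, one_re, div_ofNat_re] at hw
  linarith [hw.2, hs.2]

lemma riemannZeta_one_sub_eq_neg_div {u : ℂ} (hu : u ≠ 0) :
    riemannZeta (1 - u) = -riemannZeta₁ (1 - u) / u := by
  rw [riemannZeta_eq_inv_sub_mul (by simpa using hu), sub_sub_cancel_left, inv_neg]
  ring

lemma differentiableAt_fRamMellin {w : ℂ} (hs : s.re ∈ Set.Ioo (-1) 1)
    (hw : w.re ∈ Set.Icc (-1 / 2) (1 / 2)) (hwP : w ∉ ({-(s / 2), s / 2} : Finset ℂ)) :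
    DifferentiableAt ℂ (fRamMellin s) w := by
  rw [mem_insert, mem_singleton, not_or] at hwP
  refine .div (.mul ?_ ?_) (differentiable_sinGap s w)
    (mt (sinGap_eq_zero_iff_eq_half hs hw).mp hwP.2)
  · refine (differentiableAt_riemannZeta ?_).comp w (by fun_prop)
    simpa [sub_eq_zero] using hwP.2
  · refine (differentiableAt_riemannZeta ?_).comp w (by fun_prop)
    simpa [add_eq_zero_iff_eq_neg] using hwP.1

lemma sinGap_neg_half : sinGap s (-(s / 2)) = -(2 * sin (π * s / 2)) := by
  rw [sinGap, mul_neg, sin_neg, mul_div_assoc]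
  ring

lemma hasResidue_cpow_neg_mul_fRamMellin_neg_half (hx : 0 < x) (hs : s.re ∈ Set.Ioo (-1) 1)
    (hs0 : s ≠ 0) :
    HasResidue (fun w => (x : ℂ) ^ (-w) * fRamMellin s w) (-(s / 2))
      ((x : ℂ) ^ (s / 2) * riemannZeta (1 + s) / (2 * sin (π * s / 2))) := by
  have hp : sinGap s (-(s / 2)) ≠ 0 := by
    rw [Ne, sinGap_eq_zero_iff_eq_half hs, neg_eq_self]
    · exact div_ne_zero hs0 two_ne_zero
    · rw [neg_re, div_ofNat_re]
      constructor <;> linarith [hs.1, hs.2]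
  have hζ : AnalyticAt ℂ (fun w => riemannZeta (1 - (w - s / 2))) (-(s / 2)) := by
    refine (analyticOn_riemannZeta _ ?_).fun_comp (by fun_prop)
    rwa [Set.mem_compl_singleton_iff, Ne, sub_eq_self, ← neg_add', add_halves, neg_eq_zero]
  have hζ₁ : AnalyticAt ℂ (fun w => riemannZeta₁ (1 - (w + s / 2))) (-(s / 2)) :=
    (differentiable_riemannZeta₁.analyticAt _).fun_comp (by fun_prop)
  have hA := (((analyticAt_cpow_neg hx _).fun_mul hζ).fun_mul hζ₁.fun_neg).fun_div
    ((differentiable_sinGap s).analyticAt _) hp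
  convert HasResidue.of_div_sub hA ?_ using 1
  · rw [sinGap_neg_half, neg_neg, neg_add_cancel, sub_zero, riemannZeta₁_one]
    ring_nf
  · filter_upwards [self_mem_nhdsWithin] with w hw
    rw [fRamMellin, sub_neg_eq_add, riemannZeta_one_sub_eq_neg_div (u := w + s / 2)
      (mt add_eq_zero_iff_eq_neg.mp hw)]
    ring

lemma hasDerivAt_residueNumerator (hx : 0 < x) (hs0 : s ≠ 0) :
    HasDerivAt (fun w => (x : ℂ) ^ (-w) *
        (-riemannZeta₁ (1 - (w - s / 2)) * riemannZeta (1 - (w + s / 2))))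
      ((x : ℂ) ^ (-(s / 2)) * ((Real.log x + Real.eulerMascheroniConstant) * riemannZeta (1 - s) +
        deriv riemannZeta (1 - s))) (s / 2) := by
  have hcpow : HasDerivAt (fun w : ℂ => (x : ℂ) ^ (-w))
      ((x : ℂ) ^ (-(s / 2)) * Real.log x * (-1)) (s / 2) := by
    rw [ofReal_log hx.le]
    exact (hasDerivAt_neg (s / 2)).const_cpow (.inl (ofReal_ne_zero.mpr hx.ne'))
  have hζ₁ : HasDerivAt (fun w => riemannZeta₁ (1 - (w - s / 2)))
      (Real.eulerMascheroniConstant * (-1)) (s / 2) := by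
    rw [← deriv_riemannZeta₁_one]
    refine HasDerivAt.comp (h₂ := riemannZeta₁) (s / 2) ?_
      (((hasDerivAt_id' (s / 2)).sub_const (s / 2)).const_sub 1)
    rw [sub_self, sub_zero]
    exact (differentiable_riemannZeta₁ 1).hasDerivAt
  have hζ : HasDerivAt (fun w => riemannZeta (1 - (w + s / 2)))
      (deriv riemannZeta (1 - s) * (-1)) (s / 2) := by
    refine HasDerivAt.comp (h₂ := riemannZeta) (s / 2) ?_
      (((hasDerivAt_id' (s / 2)).add_const (s / 2)).const_sub 1)
    rw [add_halves]
    exact (differentiableAt_riemannZeta (by simpa using hs0)).hasDerivAt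
  refine (hcpow.fun_mul (hζ₁.fun_neg.fun_mul hζ)).congr_deriv ?_
  rw [sub_self, sub_zero, riemannZeta₁_one, add_halves]
  ring

lemma hasResidue_cpow_neg_mul_fRamMellin_half (hx : 0 < x) (hs : s.re ∈ Set.Ioo (-1) 1)
    (hs0 : s ≠ 0) :
    HasResidue (fun w => (x : ℂ) ^ (-w) * fRamMellin s w) (s / 2)
      ((x : ℂ) ^ (-(s / 2)) / (π * cos (π * s / 2)) *
        ((Real.log x + Real.eulerMascheroniConstant - π / 2 * tan (π * s / 2)) *
          riemannZeta (1 - s) + deriv riemannZeta (1 - s))) := by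
  have hcos := cos_pi_mul_div_two_ne_zero hs
  have hπ : (π : ℂ) ≠ 0 := ofReal_ne_zero.mpr Real.pi_ne_zero
  have hζ : AnalyticAt ℂ (fun w => riemannZeta (1 - (w + s / 2))) (s / 2) :=
    (analyticOn_riemannZeta _ (by simpa using hs0)).fun_comp (by fun_prop)
  have hζ₁ : AnalyticAt ℂ (fun w => riemannZeta₁ (1 - (w - s / 2))) (s / 2) :=
    (differentiable_riemannZeta₁.analyticAt _).fun_comp (by fun_prop)
  have hres := HasResidue.div_mul_of_simple_zero
    ((analyticAt_cpow_neg hx _).fun_mul (hζ₁.fun_neg.fun_mul hζ))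
    ((differentiable_sinGap s).analyticAt (s / 2)) (hasDerivAt_residueNumerator hx hs0)
    (hasDerivAt_sinGap s _) (hasDerivAt_deriv_sinGap s _)
    (sinGap_eq_zero_iff.mpr ⟨0, .inl (by simp)⟩)
    (mul_ne_zero hπ (by rwa [← mul_div_assoc]))
  convert hres.congr ?_ using 1
  · rw [sub_self, sub_zero, riemannZeta₁_one, add_halves, ← mul_div_assoc, tan_eq_sin_div_cos]
    generalize cos (π * s / 2) = c at hcos
    field_simp
    ring
  · filter_upwards [self_mem_nhdsWithin] with w hw
    rw [fRamMellin, riemannZeta_one_sub_eq_neg_div (u := w - s / 2) (sub_ne_zero.mpr hw),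
      div_mul_eq_div_div]
    ring

lemma mellinInv_fRamMellin_sub (hx : 0 < x) (hs : s.re ∈ Set.Ioo (-1) 1) (hs0 : s ≠ 0) :
    mellinInv (1 / 2) (fRamMellin s) x - mellinInv (-1 / 2) (fRamMellin s) x =
      (x : ℂ) ^ (s / 2) * riemannZeta (1 + s) / (2 * sin (π * s / 2)) +
        (x : ℂ) ^ (-(s / 2)) / (π * cos (π * s / 2)) *
          ((Real.log x + Real.eulerMascheroniConstant - π / 2 * tan (π * s / 2)) *
            riemannZeta (1 - s) + deriv riemannZeta (1 - s)) := by
  have hne : -(s / 2) ≠ s / 2 := by simpa [neg_eq_self] using hs0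
  have hP : ∀ p ∈ ({-(s / 2), s / 2} : Finset ℂ), p.re ∈ Set.Ioo (-1 / 2) (1 / 2) := by
    simp only [mem_insert, mem_singleton, forall_eq_or_imp, forall_eq, neg_re, div_ofNat_re,
      Set.mem_Ioo]
    refine ⟨⟨?_, ?_⟩, ?_, ?_⟩ <;> linarith [hs.1, hs.2]
  obtain ⟨res, hres₁, hres₂⟩ : ∃ res : ℂ → ℂ, res (-(s / 2)) = _ ∧ res (s / 2) = _ :=
    ⟨Function.update (fun _ => _) (s / 2) _, Function.update_of_ne hne _ _,
      Function.update_self _ _ _⟩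
  rw [mellinInv_sub_mellinInv_eq_sum_residue hx (by norm_num) hP (res := res)
    (fun w hw hwP => differentiableAt_fRamMellin hs hw hwP) ?_ (isBigO_fRamMellin_stripEnds hs _),
    sum_pair hne, hres₁, hres₂]
  simp only [mem_insert, mem_singleton, forall_eq_or_imp, forall_eq]
  rw [hres₁, hres₂]
  exact ⟨hasResidue_cpow_neg_mul_fRamMellin_neg_half hx hs hs0,
    hasResidue_cpow_neg_mul_fRamMellin_half hx hs hs0⟩
end

/-! ### `f(·, s)` as an inverse Mellin transform -/

lemma integrable_cpow_neg_mul {σ x : ℝ} {G : ℂ → ℂ} (hG : VerticalIntegrable G σ) (hx : 0 < x) :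
    Integrable fun t : ℝ => (x : ℂ) ^ (-(σ + t * I)) * G (σ + t * I) := by
  refine hG.bdd_mul (c := x ^ (-σ)) (continuous_cpow_neg_verticalLine hx σ).aestronglyMeasurable
    (.of_forall fun t => ?_)
  simp [norm_cpow_eq_rpow_re_of_pos hx]

theorem hasSum_mul_mellinInv_div {a : ℕ → ℂ} {σ x : ℝ} {D G : ℂ → ℂ}
    (hD : ∀ t : ℝ, HasSum (fun n : ℕ => a n * ((n : ℂ) + 1) ^ (σ + t * I)) (D (σ + t * I)))
    (hG : VerticalIntegrable G σ) (hx : 0 < x) :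
    HasSum (fun n : ℕ => a n * mellinInv σ G (x / (n + 1)))
      (mellinInv σ (fun w => D w * G w) x) := by
  have hpos (n : ℕ) : 0 < (n : ℝ) + 1 := n.cast_add_one_pos
  have hterm (n : ℕ) (w : ℂ) : ((x / (n + 1) : ℝ) : ℂ) ^ (-w) = (x : ℂ) ^ (-w) * (n + 1) ^ w := by
    rw [ofReal_div, div_cpow_ofReal_nonneg hx.le (hpos n).le, cpow_neg _ w, cpow_neg _ w,
      div_inv_eq_mul]
    push_cast
    rfl
  have hnorm (n : ℕ) (t : ℝ) : ‖a n * (((x / (n + 1) : ℝ) : ℂ) ^ (-(σ + t * I)) * G (σ + t * I))‖ =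
      ‖a n * ((n : ℂ) + 1) ^ (σ + (0 : ℝ) * I)‖ * ‖(x : ℂ) ^ (-(σ + t * I)) * G (σ + t * I)‖ := by
    have hcpow (w : ℂ) : ‖((n : ℂ) + 1) ^ w‖ = ((n : ℝ) + 1) ^ w.re := by
      exact_mod_cast norm_natCast_cpow_of_pos n.succ_pos w
    simp only [hterm, norm_mul, hcpow, add_re, ofReal_re, re_ofReal_mul, I_re, mul_zero]
    ring
  have hint (n : ℕ) : Integrable fun t : ℝ =>
      a n * (((x / (n + 1) : ℝ) : ℂ) ^ (-(σ + t * I)) * G (σ + t * I)) :=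
    (integrable_cpow_neg_mul hG (div_pos hx (hpos n))).const_mul (a n)
  have hsum := hasSum_integral_of_summable_integral_norm hint (by
    simp only [hnorm, integral_const_mul]
    exact (hD 0).summable.norm.mul_right _)
  have htsum (t : ℝ) : ∑' n : ℕ, a n * (((x / (n + 1) : ℝ) : ℂ) ^ (-(σ + t * I)) *
      G (σ + t * I)) = (x : ℂ) ^ (-(σ + t * I)) * (D (σ + t * I) * G (σ + t * I)) := by
    rw [← (hD t).tsum_eq, ← tsum_mul_right, ← tsum_mul_left]
    refine tsum_congr fun n => ?_
    rw [hterm]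
    ring
  simp only [htsum, integral_const_mul] at hsum
  simp only [mellinInv, smul_eq_mul, real_smul, mul_left_comm (a _)]
  exact hsum.mul_left _

lemma convolution_natCast_cpow_neg_one (s : ℂ) :
    LSeries.convolution (fun n : ℕ => (n : ℂ) ^ (-s)) (1 : ℕ → ℂ) = csigma (-s) := by
  ext n
  rw [LSeries.convolution_def]
  simp only [Pi.one_apply, mul_one]
  exact Nat.sum_divisorsAntidiagonal (fun i _ => (i : ℂ) ^ (-s))

lemma hasSum_csigma_mul_cpow {s z : ℂ} (hz : 1 < z.re) (hzs : 1 < (z + s).re) :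
    HasSum (fun n : ℕ => csigma (-s) (n + 1) * ((n : ℂ) + 1) ^ (-z))
      (riemannZeta (z + s) * riemannZeta z) := by
  have hterm : LSeries.term (fun n : ℕ => (n : ℂ) ^ (-s)) z = LSeries.term 1 (z + s) := by
    ext n
    rcases eq_or_ne n 0 with rfl | hn
    · simp
    · rw [LSeries.term_of_ne_zero hn, LSeries.term_of_ne_zero hn, Pi.one_apply,
        cpow_add _ _ (by exact_mod_cast hn), cpow_neg, ← div_div, div_right_comm, one_div]
  have hpow : LSeriesHasSum (fun n : ℕ => (n : ℂ) ^ (-s)) z (riemannZeta (z + s)) := by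
    rw [LSeriesHasSum, hterm, ← LSeries_one_eq_riemannZeta hzs]
    exact (LSeriesSummable_one_iff.mpr hzs).LSeriesHasSum
  have hone : LSeriesHasSum 1 z (riemannZeta z) := by
    rw [← LSeries_one_eq_riemannZeta hz]
    exact (LSeriesSummable_one_iff.mpr hz).LSeriesHasSum
  have hconv := (hasSum_nat_add_iff' 1).mpr (hpow.convolution hone)
  rw [convolution_natCast_cpow_neg_one, sum_range_one, LSeries.term_zero, sub_zero] at hconv
  refine hconv.congr_fun fun n => ?_
  rw [LSeries.term_of_ne_zero n.succ_ne_zero, cpow_neg, div_eq_mul_inv]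
  push_cast
  rfl

lemma cpow_mul_mellinInv_inv_sinGap {s : ℂ} (hs : s.re ∈ Set.Ioo (-1) 1) {x N : ℝ} (hx : 0 < x)
    (hN : 0 < N) (hxN : x ≠ N) :
    (N : ℂ) ^ (s / 2 - 1) * mellinInv (-1 / 2) (fun w => (sinGap s w)⁻¹) (x / N) =
      (x : ℂ) ^ (2 - s / 2) / (π * cos (π * s / 2)) *
        (((N : ℂ) ^ (s - 1) - (x : ℂ) ^ (s - 1)) / ((N : ℂ) ^ 2 - (x : ℂ) ^ 2)) := by
  have hx0 : (x : ℂ) ≠ 0 := ofReal_ne_zero.mpr hx.ne'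
  have hN0 : (N : ℂ) ≠ 0 := ofReal_ne_zero.mpr hN.ne'
  have hsq : (N : ℂ) ^ 2 - (x : ℂ) ^ 2 ≠ 0 := by
    have : N ^ 2 - x ^ 2 ≠ 0 := sub_ne_zero.mpr fun h => hxN ((sq_eq_sq₀ hx.le hN.le).mp h.symm)
    exact_mod_cast this
  have hy : 1 - ((x / N : ℝ) : ℂ) ^ 2 = ((N : ℂ) ^ 2 - (x : ℂ) ^ 2) / (N : ℂ) ^ 2 := by
    push_cast
    field_simp
  have hM := mellinInv_inv_sinGap hs (div_pos hx hN)
  rw [hy, div_mul_eq_mul_div, div_eq_iff (pow_ne_zero 2 hN0), mul_comm, ← eq_div_iff hsq] at hM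
  rw [hM, ofReal_div, div_cpow_ofReal_nonneg hx.le hN.le, div_cpow_ofReal_nonneg hx.le hN.le,
    show s - 1 = s / 2 + (s / 2 - 1) by ring]
  simp only [cpow_sub _ _ hx0, cpow_sub _ _ hN0, cpow_add _ _ hx0, cpow_add _ _ hN0, cpow_one,
    cpow_ofNat]
  have hx2 : (x : ℂ) ^ (s / 2) ≠ 0 := by simp [cpow_eq_zero_iff, hx0]
  have hN2 : (N : ℂ) ^ (s / 2) ≠ 0 := by simp [cpow_eq_zero_iff, hN0]
  have hcos := cos_pi_mul_div_two_ne_zero hs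
  generalize cos (π * s / 2) = c at hcos ⊢
  have hπ : (π : ℂ) ≠ 0 := ofReal_ne_zero.mpr Real.pi_ne_zero
  generalize (x : ℂ) ^ (s / 2) = X at hx2 ⊢
  generalize (N : ℂ) ^ (s / 2) = Y at hN2 ⊢
  field_simp

lemma hasSum_mellinInv_neg_half_fRamMellin {s : ℂ} (hs : s.re ∈ Set.Ioo (-1) 1) {x : ℝ}
    (hx : 0 < x) (hxn : ∀ n : ℕ, x ≠ n + 1) :
    HasSum (fun n : ℕ => (x : ℂ) ^ (2 - s / 2) / (π * cos (π * s / 2)) *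
      (csigma (-s) (n + 1) * ((((n : ℂ) + 1) ^ (s - 1) - (x : ℂ) ^ (s - 1)) /
        (((n : ℂ) + 1) ^ 2 - (x : ℂ) ^ 2)))) (mellinInv (-1 / 2) (fRamMellin s) x) := by
  have hD (t : ℝ) : HasSum (fun n : ℕ => csigma (-s) (n + 1) * ((n : ℂ) + 1) ^ (s / 2 - 1) *
      ((n : ℂ) + 1) ^ (((-1 / 2 : ℝ) : ℂ) + t * I))
      (riemannZeta (1 - (((-1 / 2 : ℝ) : ℂ) + t * I - s / 2)) *
        riemannZeta (1 - (((-1 / 2 : ℝ) : ℂ) + t * I + s / 2))) := by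
    convert hasSum_csigma_mul_cpow (s := s) (z := 1 - (((-1 / 2 : ℝ) : ℂ) + t * I + s / 2)) ?_ ?_
      using 2 with n
    · rw [mul_assoc, ← cpow_add _ _ n.cast_add_one_ne_zero]
      ring_nf
    · ring_nf
    · simp only [ofReal_div, ofReal_neg, ofReal_one, ofReal_ofNat, sub_re, one_re, add_re,
        div_ofNat_re, neg_re, mul_re, ofReal_re, I_re, mul_zero, ofReal_im, I_im, mul_one, sub_self,
        add_zero]
      linarith [hs.2]
    · simp only [ofReal_div, ofReal_neg, ofReal_one, ofReal_ofNat, sub_re, one_re, add_re,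
        div_ofNat_re, neg_re, mul_re, ofReal_re, I_re, mul_zero, ofReal_im, I_im, mul_one, sub_self,
        add_zero]
      linarith [hs.1]
  have hsum := hasSum_mul_mellinInv_div
    (D := fun w => riemannZeta (1 - (w - s / 2)) * riemannZeta (1 - (w + s / 2))) hD
    (verticalIntegrable_inv_sinGap hs) hx
  simp only [← div_eq_mul_inv] at hsum
  refine hsum.congr_fun fun n => ?_
  have h := cpow_mul_mellinInv_inv_sinGap hs hx n.cast_add_one_pos (hxn n)
  push_cast at h
  rw [mul_assoc, h]
  ring

lemma residue_half_eq {s : ℂ} (hs : s.re ∈ Set.Ioo (-1) 1) (hs0 : s ≠ 0) (x : ℝ) :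
    (x : ℂ) ^ (-(s / 2)) / (π * cos (π * s / 2)) *
        ((Real.log x + Real.eulerMascheroniConstant - π / 2 * tan (π * s / 2)) *
          riemannZeta (1 - s) + deriv riemannZeta (1 - s)) =
      -((2 : ℂ) ^ (-s) * (π : ℂ) ^ (-1 - s) * (x : ℂ) ^ (-s / 2) *
        (Gamma s * riemannZeta s * (π * tan (π * s / 2) -
            2 * (Real.eulerMascheroniConstant + Real.log x)) -
          ((2 * π : ℝ) : ℂ) ^ s * deriv riemannZeta (1 - s) / cos (π * s / 2))) := by
  have hcos := cos_pi_mul_div_two_ne_zero hs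
  have hπ : (π : ℂ) ≠ 0 := ofReal_ne_zero.mpr Real.pi_ne_zero
  have hs1 : s ≠ 1 := fun h => by simp [h] at hs
  have hpole (n : ℕ) : s ≠ -n := by
    rintro rfl
    rcases n with _ | n
    · simp at hs0
    · have := hs.1
      simp only [Nat.cast_succ, neg_re, add_re, natCast_re, one_re] at this
      linarith [n.cast_nonneg (α := ℝ)]
  have hpow : (2 * π : ℂ) ^ (-s) = (2 : ℂ) ^ (-s) * (π : ℂ) ^ (-s) := by
    simpa using mul_cpow_ofReal_nonneg zero_le_two Real.pi_pos.le (-s)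
  have hpow' : ((2 * π : ℝ) : ℂ) ^ s = ((2 : ℂ) ^ (-s) * (π : ℂ) ^ (-s))⁻¹ := by
    rw [← hpow, cpow_neg, inv_inv]
    push_cast
    rfl
  have h2s : (2 : ℂ) ^ (-s) ≠ 0 := by simp [cpow_eq_zero_iff]
  have hπs : (π : ℂ) ^ (-s) ≠ 0 := by simp [cpow_eq_zero_iff, hπ]
  rw [riemannZeta_one_sub hpole hs1, hpow, hpow', sub_eq_add_neg (-1) s, cpow_add _ _ hπ,
    cpow_neg_one, neg_div]
  generalize cos (π * s / 2) = c at hcos ⊢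
  generalize tan (π * s / 2) = t
  field_simp
  ring

theorem fRam_eq_mellinInv {s : ℂ} (hs : s.re ∈ Set.Ioo (-1) 1) (hs0 : s ≠ 0) {x : ℝ}
    (hx : 0 < x) (hxn : ∀ n : ℕ, x ≠ n + 1) : fRam x s = mellinInv (1 / 2) (fRamMellin s) x := by
  have hdirichlet := (hasSum_mellinInv_neg_half_fRamMellin hs hx hxn).tsum_eq
  rw [tsum_mul_left] at hdirichlet
  rw [← sub_add_cancel (mellinInv (1 / 2) (fRamMellin s) x) (mellinInv (-1 / 2) (fRamMellin s) x),
    mellinInv_fRamMellin_sub hx hs hs0, ← hdirichlet, residue_half_eq hs hs0, fRam]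
  simp only [if_neg (hxn _)]
  ring

/-! ### The Mellin transform of `K_ν` -/

lemma sigmoid_cpow_image_eq (u v : ℂ) (t : ℝ) :
    |Real.sigmoid t * (1 - Real.sigmoid t)| •
        ((Real.sigmoid t : ℂ) ^ (u - 1) * (1 - (Real.sigmoid t : ℂ)) ^ (v - 1)) =
      (Real.sigmoid t : ℂ) ^ u * (Real.sigmoid (-t) : ℂ) ^ v := by
  have hne (t : ℝ) : (Real.sigmoid t : ℂ) ≠ 0 := ofReal_ne_zero.mpr (Real.sigmoid_pos t).ne'
  rw [← Real.sigmoid_neg, abs_of_pos (mul_pos (Real.sigmoid_pos _) (Real.sigmoid_pos _)),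
    real_smul, ← ofReal_one, ← ofReal_sub, ← Real.sigmoid_neg, ofReal_one,
    cpow_sub _ _ (hne _), cpow_sub _ _ (hne _), cpow_one, cpow_one, ofReal_mul]
  field_simp [hne t, hne (-t)]

lemma integrable_sigmoid_cpow_mul {u v : ℂ} (hu : 0 < u.re) (hv : 0 < v.re) :
    Integrable fun t : ℝ => (Real.sigmoid t : ℂ) ^ u * (Real.sigmoid (-t) : ℂ) ^ v := by
  have hbeta := betaIntegral_convergent hu hv
  rw [intervalIntegrable_iff_integrableOn_Ioo_of_le zero_le_one, ← Real.range_sigmoid,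
    ← Set.image_univ, integrableOn_image_iff_integrableOn_abs_deriv_smul MeasurableSet.univ
      (fun t _ => (Real.hasDerivAt_sigmoid t).hasDerivWithinAt) Real.sigmoid_injective.injOn,
    integrableOn_univ] at hbeta
  simpa only [sigmoid_cpow_image_eq] using hbeta

lemma betaIntegral_eq_integral_sigmoid (u v : ℂ) :
    betaIntegral u v = ∫ t : ℝ, (Real.sigmoid t : ℂ) ^ u * (Real.sigmoid (-t) : ℂ) ^ v := by
  rw [betaIntegral, intervalIntegral.integral_of_le zero_le_one, integral_Ioc_eq_integral_Ioo,
    ← Real.range_sigmoid, ← Set.image_univ, integral_image_eq_integral_abs_deriv_smul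
      MeasurableSet.univ (fun t _ => (Real.hasDerivAt_sigmoid t).hasDerivWithinAt)
      Real.sigmoid_injective.injOn, setIntegral_univ]
  simp only [sigmoid_cpow_image_eq]

-- Substituting `sigmoid (2 * t)` in the Beta integral turns it into the integral of
-- `exp (ν * t) * (2 * cosh t) ^ (-w)`.
lemma sigmoid_two_mul (t : ℝ) : Real.sigmoid (2 * t) = Real.exp t / (2 * Real.cosh t) := by
  have hexp : Real.exp t * Real.exp (-(2 * t)) = Real.exp (-t) := by
    rw [← Real.exp_add]
    ring_nf
  rw [Real.sigmoid_def, Real.cosh_eq, inv_eq_one_div,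
    div_eq_div_iff (by positivity) (by positivity), mul_add, hexp]
  ring

lemma sigmoid_two_mul_cpow (u : ℂ) (t : ℝ) :
    (Real.sigmoid (2 * t) : ℂ) ^ u = exp (u * t) * ((2 * Real.cosh t : ℝ) : ℂ) ^ (-u) := by
  rw [sigmoid_two_mul, ofReal_div, div_cpow_ofReal_nonneg (Real.exp_pos t).le
      (mul_pos two_pos (Real.cosh_pos t)).le,
    cpow_def_of_ne_zero (ofReal_ne_zero.mpr (Real.exp_pos t).ne'),
    ← ofReal_log (Real.exp_pos t).le, Real.log_exp, mul_comm (t : ℂ), cpow_neg, div_eq_mul_inv]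

lemma sigmoid_two_mul_cpow_mul (ν w : ℂ) (t : ℝ) :
    (Real.sigmoid (2 * t) : ℂ) ^ ((w + ν) / 2) * (Real.sigmoid (-(2 * t)) : ℂ) ^ ((w - ν) / 2) =
      exp (ν * t) * ((2 * Real.cosh t : ℝ) : ℂ) ^ (-w) := by
  have hcosh : ((2 * Real.cosh t : ℝ) : ℂ) ≠ 0 :=
    ofReal_ne_zero.mpr (mul_pos two_pos (Real.cosh_pos t)).ne'
  rw [← mul_neg, sigmoid_two_mul_cpow, sigmoid_two_mul_cpow, Real.cosh_neg, mul_mul_mul_comm,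
    ← exp_add, ← cpow_add _ _ hcosh]
  congr 2 <;> push_cast <;> ring

lemma integral_eq_integral_Ioi_add_comp_neg {h : ℝ → ℂ} (hh : Integrable h) :
    ∫ t, h t = ∫ t in Set.Ioi (0 : ℝ), (h t + h (-t)) := by
  rw [integral_add hh.integrableOn hh.comp_neg.integrableOn, integral_comp_neg_Ioi, neg_zero,
    ← integral_add_compl measurableSet_Ioi hh, Set.compl_Ioi]

section

variable {ν w : ℂ}

lemma integrable_exp_mul_two_mul_cosh_cpow (h : |ν.re| < w.re) :
    Integrable fun t : ℝ => exp (ν * t) * ((2 * Real.cosh t : ℝ) : ℂ) ^ (-w) := by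
  obtain ⟨h₁, h₂⟩ := abs_lt.mp h
  have hsig : Integrable fun t : ℝ =>
      (Real.sigmoid t : ℂ) ^ ((w + ν) / 2) * (Real.sigmoid (-t) : ℂ) ^ ((w - ν) / 2) :=
    integrable_sigmoid_cpow_mul (by rw [div_ofNat_re, add_re]; linarith)
      (by rw [div_ofNat_re, sub_re]; linarith)
  simpa only [sigmoid_two_mul_cpow_mul] using hsig.comp_mul_left' two_ne_zero

lemma exp_mul_two_mul_cosh_cpow_add_comp_neg (ν w : ℂ) (t : ℝ) :
    exp (ν * t) * ((2 * Real.cosh t : ℝ) : ℂ) ^ (-w) +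
        exp (ν * (-t : ℝ)) * ((2 * Real.cosh (-t) : ℝ) : ℂ) ^ (-w) =
      2 * (cosh (ν * t) * ((2 * Real.cosh t : ℝ) : ℂ) ^ (-w)) := by
  rw [Real.cosh_neg, Complex.cosh, ofReal_neg, mul_neg]
  ring

lemma integrableOn_cosh_mul_two_mul_cosh_cpow (h : |ν.re| < w.re) :
    IntegrableOn (fun t : ℝ => cosh (ν * t) * ((2 * Real.cosh t : ℝ) : ℂ) ^ (-w))
      (Set.Ioi 0) := by
  have hexp := integrable_exp_mul_two_mul_cosh_cpow h
  have hadd := (hexp.add hexp.comp_neg).integrableOn (s := Set.Ioi 0)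
  simp only [Pi.add_def, exp_mul_two_mul_cosh_cpow_add_comp_neg] at hadd
  simpa only [IntegrableOn, inv_mul_cancel_left₀ (two_ne_zero' ℂ)] using hadd.const_mul 2⁻¹

lemma integral_cosh_mul_two_mul_cosh_cpow (h : |ν.re| < w.re) :
    ∫ t in Set.Ioi (0 : ℝ), cosh (ν * t) * ((2 * Real.cosh t : ℝ) : ℂ) ^ (-w) =
      betaIntegral ((w + ν) / 2) ((w - ν) / 2) / 4 := by
  have hfold := integral_eq_integral_Ioi_add_comp_neg (integrable_exp_mul_two_mul_cosh_cpow h)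
  simp only [exp_mul_two_mul_cosh_cpow_add_comp_neg, integral_const_mul] at hfold
  have hscale := Measure.integral_comp_mul_left (fun t : ℝ =>
    (Real.sigmoid t : ℂ) ^ ((w + ν) / 2) * (Real.sigmoid (-t) : ℂ) ^ ((w - ν) / 2)) 2
  simp only [sigmoid_two_mul_cpow_mul, ← betaIntegral_eq_integral_sigmoid, hfold] at hscale
  rw [real_smul, abs_of_pos (by norm_num)] at hscale
  push_cast at hscale ⊢
  linear_combination hscale / 2

lemma mellinConvergent_exp_neg_mul {r : ℝ} (hw : 0 < w.re) (hr : 0 < r) :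
    MellinConvergent (fun x : ℝ => exp (-(r * x))) w := by
  have hgamma : MellinConvergent (fun x : ℝ => exp (-x)) w := by
    simpa [MellinConvergent, mul_comm] using GammaIntegral_convergent hw
  simpa using (MellinConvergent.comp_mul_left hr).mpr hgamma

end

/-- The Mellin integrand of `x ↦ K_ν(2x)`, before integrating over the variable `t` of the integral
defining `K_ν`. -/
noncomputable def besselIntegrand (ν w : ℂ) (x t : ℝ) : ℂ :=
  (x : ℂ) ^ (w - 1) * exp (-((2 * Real.cosh t : ℝ) * x)) * cosh (ν * t)

section

variable {ν w : ℂ}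

lemma integral_norm_besselIntegrand (ν : ℂ) (hw : 0 < w.re) (t : ℝ) :
    ∫ x in Set.Ioi (0 : ℝ), ‖besselIntegrand ν w x t‖ =
      Real.Gamma w.re * ‖cosh (ν * t) * ((2 * Real.cosh t : ℝ) : ℂ) ^ (-(w.re : ℂ))‖ := by
  have hcosh : 0 < 2 * Real.cosh t := mul_pos two_pos (Real.cosh_pos t)
  have hnorm : ∀ x ∈ Set.Ioi (0 : ℝ), ‖besselIntegrand ν w x t‖ =
      x ^ (w.re - 1) * Real.exp (-(2 * Real.cosh t * x)) * ‖cosh (ν * t)‖ := fun x hx => by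
    rw [besselIntegrand, norm_mul, norm_mul, norm_cpow_eq_rpow_re_of_pos hx, norm_exp,
      neg_re, re_ofReal_mul, ofReal_re, sub_re, one_re]
  rw [setIntegral_congr_fun measurableSet_Ioi hnorm, integral_mul_const,
    Real.integral_rpow_mul_exp_neg_mul_Ioi hw hcosh, norm_mul, norm_cpow_eq_rpow_re_of_pos hcosh,
    neg_re, ofReal_re, one_div, Real.inv_rpow hcosh.le, Real.rpow_neg hcosh.le]
  ring

lemma integrable_uncurry_besselIntegrand (h : |ν.re| < w.re) :
    Integrable (Function.uncurry (besselIntegrand ν w))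
    ((volume.restrict (Set.Ioi 0)).prod (volume.restrict (Set.Ioi 0))) := by
  have hw : 0 < w.re := (abs_nonneg _).trans_lt h
  have hmeas : Measurable (Function.uncurry (besselIntegrand ν w)) := by
    unfold Function.uncurry besselIntegrand
    fun_prop
  refine (integrable_prod_iff' hmeas.aestronglyMeasurable).mpr ⟨.of_forall fun t => ?_, ?_⟩
  · exact (mellinConvergent_exp_neg_mul hw (mul_pos two_pos (Real.cosh_pos t))).mul_const
      (cosh (ν * t))
  · simp only [Function.uncurry_apply_pair, integral_norm_besselIntegrand ν hw]
    exact (integrableOn_cosh_mul_two_mul_cosh_cpow (w := w.re) (by simpa)).norm.const_mul _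

lemma integral_besselIntegrand_eq_cpow_mul_Kbes (ν w : ℂ) (x : ℝ) :
    ∫ t in Set.Ioi (0 : ℝ), besselIntegrand ν w x t =
      (x : ℂ) ^ (w - 1) * Kbes ν (2 * x : ℝ) := by
  rw [Kbes, ← integral_const_mul]
  refine integral_congr_ae (.of_forall fun t => ?_)
  simp only [besselIntegrand]
  push_cast
  ring_nf

lemma integral_besselIntegrand_eq_Gamma_mul (ν : ℂ) (hw : 0 < w.re) (t : ℝ) :
    ∫ x in Set.Ioi (0 : ℝ), besselIntegrand ν w x t =
      Gamma w * (cosh (ν * t) * ((2 * Real.cosh t : ℝ) : ℂ) ^ (-w)) := by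
  have hcosh : 0 < 2 * Real.cosh t := mul_pos two_pos (Real.cosh_pos t)
  simp only [besselIntegrand]
  rw [integral_mul_const, integral_cpow_mul_exp_neg_mul_Ioi hw hcosh, one_div, inv_cpow _ _
    (by rw [arg_ofReal_of_nonneg hcosh.le]; exact Real.pi_pos.ne), cpow_neg]
  ring

lemma mellinConvergent_Kbes_two_mul (h : |ν.re| < w.re) :
    MellinConvergent (fun x : ℝ => Kbes ν (2 * x : ℝ)) w := by
  have hint := (integrable_uncurry_besselIntegrand h).integral_prod_left
  simpa only [Function.uncurry_apply_pair, integral_besselIntegrand_eq_cpow_mul_Kbes] using! hint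

theorem mellin_Kbes_two_mul (h : |ν.re| < w.re) :
    mellin (fun x : ℝ => Kbes ν (2 * x : ℝ)) w =
      Gamma ((w + ν) / 2) * Gamma ((w - ν) / 2) / 4 := by
  have hw : 0 < w.re := (abs_nonneg _).trans_lt h
  obtain ⟨h₁, h₂⟩ := abs_lt.mp h
  have hbeta : Gamma ((w + ν) / 2) * Gamma ((w - ν) / 2) =
      Gamma w * betaIntegral ((w + ν) / 2) ((w - ν) / 2) := by
    rw [Gamma_mul_Gamma_eq_betaIntegral (by rw [div_ofNat_re, add_re]; linarith)
      (by rw [div_ofNat_re, sub_re]; linarith), show (w + ν) / 2 + (w - ν) / 2 = w by ring]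
  rw [mellin]
  simp only [smul_eq_mul, ← integral_besselIntegrand_eq_cpow_mul_Kbes]
  rw [integral_integral_swap (integrable_uncurry_besselIntegrand h)]
  simp only [integral_besselIntegrand_eq_Gamma_mul ν hw]
  rw [integral_const_mul, integral_cosh_mul_two_mul_cosh_cpow h, hbeta, mul_div_assoc]

end

/-! ### Parseval formula for the Mellin transform -/

section

variable {σ : ℝ} {k : ℝ → ℂ} {F : ℂ → ℂ}

lemma integrable_uncurry_mul_cpow_neg_mul (hk : MellinConvergent k (1 - σ))
    (hF : VerticalIntegrable F σ) :
    Integrable (Function.uncurry fun x t : ℝ => k x * ((x : ℂ) ^ (-(σ + t * I)) * F (σ + t * I)))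
      ((volume.restrict (Set.Ioi 0)).prod volume) := by
  have hpos : ∀ᵐ p : ℝ × ℝ ∂((volume.restrict (Set.Ioi 0)).prod volume), 0 < p.1 :=
    Measure.quasiMeasurePreserving_fst.ae (ae_restrict_mem measurableSet_Ioi)
  have hmeas : Measurable fun p : ℝ × ℝ => (p.1 : ℂ) ^ (-(p.2 * I)) := by fun_prop
  have hnorm : ∀ᵐ p : ℝ × ℝ ∂((volume.restrict (Set.Ioi 0)).prod volume),
      ‖(p.1 : ℂ) ^ (-(p.2 * I))‖ ≤ 1 := hpos.mono fun p hp => by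
    simp [norm_cpow_eq_rpow_re_of_pos hp]
  refine ((Integrable.mul_prod hk hF).bdd_mul hmeas.aestronglyMeasurable hnorm).congr
    (hpos.mono fun p hp => ?_)
  have hsplit : (p.1 : ℂ) ^ (-(σ + p.2 * I)) =
      (p.1 : ℂ) ^ (-(p.2 * I)) * (p.1 : ℂ) ^ ((1 - σ : ℂ) - 1) := by
    rw [← cpow_add _ _ (ofReal_ne_zero.mpr hp.ne')]
    ring_nf
  simp only [Function.uncurry, hsplit, smul_eq_mul]
  ring

lemma integral_mul_cpow_neg_mul (k : ℝ → ℂ) (w c : ℂ) :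
    ∫ x in Set.Ioi (0 : ℝ), k x * ((x : ℂ) ^ (-w) * c) = mellin k (1 - w) * c := by
  rw [mellin, ← integral_mul_const]
  simp only [smul_eq_mul, sub_sub_cancel_left]
  congr 1 with x
  ring

lemma integrable_mellin_mul (hk : MellinConvergent k (1 - σ)) (hF : VerticalIntegrable F σ) :
    Integrable fun t : ℝ => mellin k (1 - (σ + t * I)) * F (σ + t * I) := by
  simpa only [Function.uncurry_apply_pair, integral_mul_cpow_neg_mul] using
    (integrable_uncurry_mul_cpow_neg_mul hk hF).integral_prod_right

theorem integral_mul_mellinInv (hk : MellinConvergent k (1 - σ)) (hF : VerticalIntegrable F σ) :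
    ∫ x in Set.Ioi (0 : ℝ), k x * mellinInv σ F x =
      1 / (2 * π) * ∫ t : ℝ, mellin k (1 - (σ + t * I)) * F (σ + t * I) := by
  have hpull (x : ℝ) : k x * mellinInv σ F x =
      1 / (2 * π) * ∫ t : ℝ, k x * ((x : ℂ) ^ (-(σ + t * I)) * F (σ + t * I)) := by
    rw [integral_const_mul, mellinInv, real_smul]
    push_cast
    exact mul_left_comm _ _ _
  simp only [hpull, integral_const_mul (1 / (2 * π : ℂ))]
  rw [integral_integral_swap (integrable_uncurry_mul_cpow_neg_mul hk hF)]
  simp only [integral_mul_cpow_neg_mul]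

end

lemma completedRiemannZeta_eq_mul_riemannZeta {z : ℂ} (hz : 0 < z.re) :
    completedRiemannZeta z = (π : ℂ) ^ (-z / 2) * Gamma (z / 2) * riemannZeta z := by
  have hz0 : z ≠ 0 := fun h => by simp [h] at hz
  rw [riemannZeta_def_of_ne_zero hz0, ← Gammaℝ_def, mul_div_cancel₀ _ (Gammaℝ_ne_zero_of_re_pos hz)]

/-- The function `Λ(w + s/2) Λ(w - s/2) / (sin πw - sin (πs/2))`, with `Λ` the completed zeta
function: up to a power of `α`, the product of the Mellin transforms of `f(·, s)` and
`x ↦ K_{s/2}(2παx)` at `w` and `1 - w`. -/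
noncomputable def completedKernel (s w : ℂ) : ℂ :=
  completedRiemannZeta (w + s / 2) * completedRiemannZeta (w - s / 2) / sinGap s w

lemma completedKernel_one_sub (s w : ℂ) : completedKernel s (1 - w) = completedKernel s w := by
  rw [completedKernel, completedKernel, sinGap_one_sub, ← completedRiemannZeta_one_sub (w + s / 2),
    ← completedRiemannZeta_one_sub (w - s / 2), mul_comm]
  ring_nf

section

variable {s w : ℂ} {α : ℝ}

lemma mellin_Kbes_comp_mul_mul_fRamMellin (hα : 0 < α) (h : |(s / 2).re| < (1 - w).re) :
    mellin (fun x : ℝ => Kbes (s / 2) (2 * π * α * x : ℝ)) (1 - w) * fRamMellin s w =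
      (α : ℂ) ^ (-(1 - w)) / 4 * completedKernel s w := by
  obtain ⟨h₁, h₂⟩ := abs_lt.mp h
  have hπ : (π : ℂ) ≠ 0 := ofReal_ne_zero.mpr Real.pi_ne_zero
  have hpow : (π : ℂ) ^ (-(1 - w)) =
      (π : ℂ) ^ (-(1 - w + s / 2) / 2) * (π : ℂ) ^ (-(1 - w - s / 2) / 2) := by
    rw [← cpow_add _ _ hπ]
    ring_nf
  have hmellin : mellin (fun x : ℝ => Kbes (s / 2) (2 * π * α * x : ℝ)) (1 - w) =
      (π : ℂ) ^ (-(1 - w)) * (α : ℂ) ^ (-(1 - w)) *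
        (Gamma ((1 - w + s / 2) / 2) * Gamma ((1 - w - s / 2) / 2) / 4) := by
    have hscale := mellin_comp_mul_left (fun x : ℝ => Kbes (s / 2) (2 * x : ℝ)) (1 - w)
      (mul_pos Real.pi_pos hα)
    rw [mellin_Kbes_two_mul h, smul_eq_mul, ofReal_mul,
      mul_cpow_ofReal_nonneg Real.pi_pos.le hα.le] at hscale
    simpa only [mul_assoc] using hscale
  rw [hmellin, hpow, ← completedKernel_one_sub, completedKernel, sinGap_one_sub,
    completedRiemannZeta_eq_mul_riemannZeta (by rw [add_re]; linarith),
    completedRiemannZeta_eq_mul_riemannZeta (by rw [sub_re]; linarith), fRamMellin,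
    sub_sub_eq_add_sub, ← sub_sub, add_sub_right_comm]
  ring

lemma mellinConvergent_Kbes_comp_mul (hα : 0 < α) (h : |(s / 2).re| < w.re) :
    MellinConvergent (fun x : ℝ => Kbes (s / 2) (2 * π * α * x : ℝ)) w := by
  simpa only [mul_assoc] using (MellinConvergent.comp_mul_left (mul_pos Real.pi_pos hα)).mpr
    (mellinConvergent_Kbes_two_mul h)

lemma verticalIntegrable_fRamMellin (hs : s.re ∈ Set.Ioo (-1) 1) :
    VerticalIntegrable (fRamMellin s) (1 / 2) := by
  refine verticalIntegrable_of_isBigO_exp (a := 0) (by norm_num)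
    (continuous_iff_continuousAt.mpr fun y => ?_) (isBigO_fRamMellin_stripEnds hs 0)
  refine ContinuousAt.comp (f := fun y : ℝ => ((1 / 2 : ℝ) : ℂ) + y * I)
    (differentiableAt_fRamMellin hs ?_ ?_).continuousAt (by fun_prop)
  · norm_num
  · rw [mem_insert, mem_singleton]
    rintro (h | h) <;> have := congrArg re h <;> simp at this <;> linarith [hs.1, hs.2]

end

/-! ### The integrals in the modular transformation -/

section

variable {s : ℂ} {α : ℝ}

lemma abs_re_div_two_lt_re_one_sub (hs : s.re ∈ Set.Ioo (-1) 1) (τ : ℝ) :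
    |(s / 2).re| < (1 - (((1 / 2 : ℝ) : ℂ) + τ * I)).re := by
  have habs := abs_lt.mpr hs
  rw [div_ofNat_re, abs_div, sub_re, add_re, re_ofReal_mul, I_re, ofReal_re, one_re, mul_zero,
    Nat.abs_ofNat]
  linarith

lemma cpow_neg_one_sub_half (hα : 0 < α) (τ : ℝ) :
    (α : ℂ) ^ (-(1 - (((1 / 2 : ℝ) : ℂ) + τ * I))) = (Real.sqrt α : ℂ)⁻¹ * (α : ℂ) ^ (τ * I) := by
  have hsqrt : (Real.sqrt α : ℂ) = (α : ℂ) ^ (1 / 2 : ℂ) := by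
    rw [Real.sqrt_eq_rpow, ofReal_cpow hα.le]
    norm_num
  rw [hsqrt, ← cpow_neg, ← cpow_add _ _ (ofReal_ne_zero.mpr hα.ne')]
  push_cast
  ring_nf

lemma mellin_Kbes_mul_fRamMellin_verticalLine (hs : s.re ∈ Set.Ioo (-1) 1) (hα : 0 < α) (τ : ℝ) :
    mellin (fun x : ℝ => Kbes (s / 2) (2 * π * α * x : ℝ)) (1 - (((1 / 2 : ℝ) : ℂ) + τ * I)) *
        fRamMellin s (((1 / 2 : ℝ) : ℂ) + τ * I) =
      (Real.sqrt α : ℂ)⁻¹ / 4 *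
        ((α : ℂ) ^ (τ * I) * completedKernel s (((1 / 2 : ℝ) : ℂ) + τ * I)) := by
  rw [mellin_Kbes_comp_mul_mul_fRamMellin hα (abs_re_div_two_lt_re_one_sub hs τ),
    cpow_neg_one_sub_half hα]
  ring

lemma mellinConvergent_Kbes_one_sub_half (hs : s.re ∈ Set.Ioo (-1) 1) (hα : 0 < α) :
    MellinConvergent (fun x : ℝ => Kbes (s / 2) (2 * π * α * x : ℝ)) (1 - ((1 / 2 : ℝ) : ℂ)) :=
  mellinConvergent_Kbes_comp_mul hα (by simpa using abs_re_div_two_lt_re_one_sub hs 0)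

lemma integrable_cpow_mul_completedKernel (hs : s.re ∈ Set.Ioo (-1) 1) (hα : 0 < α) :
    Integrable fun τ : ℝ => (α : ℂ) ^ (τ * I) * completedKernel s (((1 / 2 : ℝ) : ℂ) + τ * I) := by
  have hsqrt : (Real.sqrt α : ℂ)⁻¹ / 4 ≠ 0 := by
    simpa [Real.sqrt_eq_zero hα.le] using hα.ne'
  have hint := integrable_mellin_mul (mellinConvergent_Kbes_one_sub_half hs hα)
    (verticalIntegrable_fRamMellin hs)
  simp only [mellin_Kbes_mul_fRamMellin_verticalLine hs hα] at hint
  exact (integrable_const_mul_iff hsqrt.isUnit _).mp hint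

lemma integral_Kbes_mul_fRam_eq_integral_mul_mellinInv (hs : s.re ∈ Set.Ioo (-1) 1) (hs0 : s ≠ 0)
    (α : ℝ) :
    ∫ x in Set.Ioi (0 : ℝ), Kbes (s / 2) (2 * π * α * x : ℝ) * fRam x s =
      ∫ x in Set.Ioi (0 : ℝ), Kbes (s / 2) (2 * π * α * x : ℝ) *
        mellinInv (1 / 2) (fRamMellin s) x := by
  have hcountable : (Set.range fun n : ℕ => (n : ℝ) + 1).Countable := Set.countable_range _
  refine integral_congr_ae ?_
  filter_upwards [ae_restrict_mem measurableSet_Ioi, hcountable.ae_notMem _] with x hx hxn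
  rw [fRam_eq_mellinInv hs hs0 hx fun n h => hxn ⟨n, h.symm⟩]

lemma sqrt_mul_integral_Kbes_mul_fRam (hs : s.re ∈ Set.Ioo (-1) 1) (hs0 : s ≠ 0) (hα : 0 < α) :
    (Real.sqrt α : ℂ) *
        ∫ x in Set.Ioi (0 : ℝ), Kbes (s / 2) (2 * π * α * x : ℝ) * fRam x s =
      1 / (8 * π) *
        ∫ τ : ℝ, (α : ℂ) ^ (τ * I) * completedKernel s (((1 / 2 : ℝ) : ℂ) + τ * I) := by
  have hsqrt : (Real.sqrt α : ℂ) ≠ 0 := ofReal_ne_zero.mpr (Real.sqrt_pos.mpr hα).ne'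
  rw [integral_Kbes_mul_fRam_eq_integral_mul_mellinInv hs hs0,
    integral_mul_mellinInv (mellinConvergent_Kbes_one_sub_half hs hα)
      (verticalIntegrable_fRamMellin hs)]
  simp only [mellin_Kbes_mul_fRamMellin_verticalLine hs hα, integral_const_mul]
  rw [← mul_assoc, ← mul_assoc]
  congr 1
  field_simp
  norm_num

lemma completedKernel_half_add_neg (s : ℂ) (τ : ℝ) :
    completedKernel s (((1 / 2 : ℝ) : ℂ) + (-τ : ℝ) * I) =
      completedKernel s (((1 / 2 : ℝ) : ℂ) + τ * I) := by
  rw [← completedKernel_one_sub]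
  push_cast
  ring_nf

lemma integral_cpow_mul_completedKernel (hs : s.re ∈ Set.Ioo (-1) 1) (hα : 0 < α) :
    ∫ τ : ℝ, (α : ℂ) ^ (τ * I) * completedKernel s (((1 / 2 : ℝ) : ℂ) + τ * I) =
      2 * ∫ τ in Set.Ioi (0 : ℝ),
        completedKernel s (((1 / 2 : ℝ) : ℂ) + τ * I) * (Real.cos (τ * Real.log α) : ℝ) := by
  rw [integral_eq_integral_Ioi_add_comp_neg (integrable_cpow_mul_completedKernel hs hα),
    ← integral_const_mul]
  congr 1 with τ
  rw [completedKernel_half_add_neg, cpow_def_of_ne_zero (ofReal_ne_zero.mpr hα.ne'),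
    cpow_def_of_ne_zero (ofReal_ne_zero.mpr hα.ne'), ← ofReal_log hα.le, ofReal_cos, Complex.cos]
  push_cast
  ring_nf

end

lemma Gamma_mul_Gamma_neg (y : ℂ) : Gamma y * Gamma (-y) = -π / (y * sin (π * y)) := by
  rcases eq_or_ne y 0 with rfl | hy
  · simp
  have hreflection := Gamma_mul_Gamma_one_sub y
  rw [sub_eq_neg_add, Gamma_add_one _ (neg_ne_zero.mpr hy)] at hreflection
  rw [neg_div, mul_comm y, ← div_div, ← hreflection]
  field_simp

lemma Gamma_mul_Gamma_neg_mul_eq_div_sinGap (s w : ℂ) :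
    Gamma ((w + s / 2 - 1) / 2) * Gamma (-((w + s / 2 - 1) / 2)) *
        (Gamma ((w - s / 2) / 2) * Gamma (-((w - s / 2) / 2))) =
      -8 * π ^ 2 / ((w - s / 2) * (w + s / 2 - 1) * sinGap s w) := by
  have hcos : sin (π * ((w + s / 2 - 1) / 2)) = -cos (π * ((w + s / 2) / 2)) := by
    rw [← sin_sub_pi_div_two]
    ring_nf
  have hgap : sinGap s w = 2 * sin (π * ((w - s / 2) / 2)) * cos (π * ((w + s / 2) / 2)) := by
    rw [sinGap, sin_sub_sin]
    ring_nf
  rw [Gamma_mul_Gamma_neg, Gamma_mul_Gamma_neg, hcos, hgap]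
  generalize sin (π * ((w - s / 2) / 2)) = b
  generalize cos (π * ((w + s / 2) / 2)) = c
  rw [div_mul_div_comm, div_eq_div_iff_comm]
  ring

lemma xiR_eq_mul_completedRiemannZeta {z : ℂ} (hz : 0 < z.re) :
    xiR z = 1 / 2 * z * (z - 1) * completedRiemannZeta z := by
  rw [xiR, completedRiemannZeta_eq_mul_riemannZeta hz]
  ring

lemma Gamma_mul_xiR_mul_div_eq_completedKernel {s w : ℂ} (hw : |(s / 2).re| < w.re)
    (hw' : |(s / 2).re| < (1 - w).re) :
    Gamma ((w + s / 2 - 1) / 2) * Gamma (-((w + s / 2 - 1) / 2)) *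
        (Gamma ((w - s / 2) / 2) * Gamma (-((w - s / 2) / 2))) *
          (xiR (w + s / 2) * xiR (w - s / 2)) / (-4 * (w + s / 2) * (w - s / 2 - 1)) =
      π ^ 2 / 2 * completedKernel s w := by
  obtain ⟨h₁, h₂⟩ := abs_lt.mp hw
  obtain ⟨h₁', h₂'⟩ := abs_lt.mp hw'
  rw [sub_re, one_re] at h₁' h₂'
  have hu : 0 < (w - s / 2).re := by rw [sub_re]; linarith
  have hv : 0 < (w + s / 2).re := by rw [add_re]; linarith
  have hu0 : w - s / 2 ≠ 0 := ne_zero_of_re_pos hu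
  have hv0 : w + s / 2 ≠ 0 := ne_zero_of_re_pos hv
  have hu1 : w - s / 2 - 1 ≠ 0 := sub_ne_zero.mpr fun h => by
    have := congrArg re h
    rw [sub_re, one_re] at this
    linarith
  have hv1 : w + s / 2 - 1 ≠ 0 := sub_ne_zero.mpr fun h => by
    have := congrArg re h
    rw [add_re, one_re] at this
    linarith
  rw [Gamma_mul_Gamma_neg_mul_eq_div_sinGap, xiR_eq_mul_completedRiemannZeta hu,
    xiR_eq_mul_completedRiemannZeta hv, completedKernel]
  generalize sinGap s w = g
  generalize w - s / 2 = u at *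
  generalize w + s / 2 = v at *
  rcases eq_or_ne g 0 with rfl | hg
  · simp
  field_simp
  ring

lemma Gamma_mul_XiR_mul_div_eq_completedKernel {s : ℂ} (hs : s.re ∈ Set.Ioo (-1) 1) (t : ℝ) :
    Gamma ((s - 1 + t * I) / 4) * Gamma ((s - 1 - t * I) / 4) * Gamma ((-s + 1 + t * I) / 4) *
        Gamma ((-s + 1 - t * I) / 4) * XiR ((t - I * s) / 2) * XiR ((t + I * s) / 2) /
          ((t : ℂ) ^ 2 + (s + 1) ^ 2) =
      π ^ 2 / 2 * completedKernel s (((1 / 2 : ℝ) : ℂ) + (t / 2 : ℝ) * I) := by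
  have hre := abs_re_div_two_lt_re_one_sub hs (t / 2)
  have hre' : |(s / 2).re| < (((1 / 2 : ℝ) : ℂ) + (t / 2 : ℝ) * I).re := by
    simpa [show (1 : ℝ) - 2⁻¹ = 2⁻¹ by norm_num] using abs_re_div_two_lt_re_one_sub hs 0
  rw [← Gamma_mul_xiR_mul_div_eq_completedKernel hre' hre, XiR, XiR]
  have ht : (t : ℂ) * I = 2 * (((1 / 2 : ℝ) : ℂ) + (t / 2 : ℝ) * I) - 1 := by
    push_cast
    ring
  have hden : (t : ℂ) ^ 2 + (s + 1) ^ 2 = (s + 1 + t * I) * (s + 1 - t * I) := by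
    linear_combination t ^ 2 * I_sq
  have hv : 1 / 2 + (t - I * s) / 2 * I = (1 + t * I + s) / 2 := by
    linear_combination -s / 2 * I_sq
  have hu : 1 / 2 + (t + I * s) / 2 * I = (1 + t * I - s) / 2 := by
    linear_combination s / 2 * I_sq
  rw [hden, hv, hu, ht]
  ring_nf

lemma integral_Gamma_mul_XiR_mul_cos {s : ℂ} {α : ℝ} (hs : s.re ∈ Set.Ioo (-1) 1) :
    ∫ t in Set.Ioi (0 : ℝ), Gamma ((s - 1 + t * I) / 4) * Gamma ((s - 1 - t * I) / 4) *
        Gamma ((-s + 1 + t * I) / 4) * Gamma ((-s + 1 - t * I) / 4) * XiR ((t - I * s) / 2) *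
          XiR ((t + I * s) / 2) * (Real.cos (t / 2 * Real.log α) : ℝ) /
            ((t : ℂ) ^ 2 + (s + 1) ^ 2) =
      π ^ 2 * ∫ τ in Set.Ioi (0 : ℝ),
        completedKernel s (((1 / 2 : ℝ) : ℂ) + τ * I) * (Real.cos (τ * Real.log α) : ℝ) := by
  have hscale := integral_comp_mul_right_Ioi (fun τ : ℝ =>
    completedKernel s (((1 / 2 : ℝ) : ℂ) + τ * I) * (Real.cos (τ * Real.log α) : ℝ)) 0
      (inv_pos.mpr (two_pos (α := ℝ)))
  simp only [← div_eq_mul_inv, zero_div, inv_inv, real_smul, ofReal_ofNat] at hscale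
  simp_rw [mul_div_right_comm _ ((Real.cos _ : ℝ) : ℂ),
    Gamma_mul_XiR_mul_div_eq_completedKernel hs, mul_assoc ((π : ℂ) ^ 2 / 2)]
  rw [integral_const_mul, hscale]
  ring

end

theorem new_modular_transformation
    (s : ℂ) (hs0 : s ≠ 0) (hs1 : -1 < s.re) (hs2 : s.re < 1)
    (α β : ℝ) (hα : 0 < α) (hβ : 0 < β) (hαβ : α * β = 1) :
    (Real.sqrt α : ℂ) * (∫ x in Set.Ioi (0 : ℝ), Kbes (s / 2) ((2 * π * α * x : ℝ) : ℂ) * fRam x s)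
      = (Real.sqrt β : ℂ) *
          (∫ x in Set.Ioi (0 : ℝ), Kbes (s / 2) ((2 * π * β * x : ℝ) : ℂ) * fRam x s)
    ∧ (Real.sqrt α : ℂ) *
          (∫ x in Set.Ioi (0 : ℝ), Kbes (s / 2) ((2 * π * α * x : ℝ) : ℂ) * fRam x s)
      = (1 / (4 * (π : ℂ) ^ 3)) *
          ∫ t in Set.Ioi (0 : ℝ),
            Complex.Gamma ((s - 1 + (t : ℂ) * Complex.I) / 4) *
            Complex.Gamma ((s - 1 - (t : ℂ) * Complex.I) / 4) *
            Complex.Gamma ((-s + 1 + (t : ℂ) * Complex.I) / 4) *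
            Complex.Gamma ((-s + 1 - (t : ℂ) * Complex.I) / 4) *
            XiR (((t : ℂ) - Complex.I * s) / 2) * XiR (((t : ℂ) + Complex.I * s) / 2) *
            ((Real.cos (t / 2 * Real.log α) : ℝ) : ℂ) / ((t : ℂ) ^ 2 + (s + 1) ^ 2) := by
  have hside {γ : ℝ} (hγ : 0 < γ) := (sqrt_mul_integral_Kbes_mul_fRam ⟨hs1, hs2⟩ hs0 hγ).trans
    (congrArg _ (integral_cpow_mul_completedKernel ⟨hs1, hs2⟩ hγ))
  have hlog : Real.log β = -Real.log α := by
    rw [← Real.log_inv, eq_inv_of_mul_eq_one_right hαβ]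
  constructor
  · simp only [hside hα, hside hβ, hlog, mul_neg, Real.cos_neg]
  · rw [hside hα, integral_Gamma_mul_XiR_mul_cos ⟨hs1, hs2⟩]
    simp only [← mul_assoc]
    congr 1
    field_simp
    norm_num
end
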